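/- arXiv:1410.7818 — 13 statements merged into one kernel-verified Lean document; each statement's English description precedes it below -/
import Mathlib

section
/- For every integer p ≥ 1 and every integer k ≥ 0, the formal power series Σ_{n≥0} g_{k,p}(n) x^n is rational: there exist polynomials P(x) and Q(x) with integer coefficients such that Q(0) = 1 and Q(x) · Σ_{n≥0} g_{k,p}(n) x^n = P(x) as formal power series. -/
/-- A word `f : [n] → [p]` (modeled 0-indexed as `f : Fin n → Fin p`) is `k`-convex if
`f(i-1) + f(i+1) - 2 f(i) ≤ k` for all interior positions. -/
def IsKConvex (k : ℕ) {n p : ℕ} (f : Fin n → Fin p) : Prop :=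
  ∀ i j l : Fin n, (i : ℕ) + 1 = (j : ℕ) → (j : ℕ) + 1 = (l : ℕ) →
    ((f i : ℕ) : ℤ) + ((f l : ℕ) : ℤ) - 2 * ((f j : ℕ) : ℤ) ≤ (k : ℤ)

/-- `g_{k,p}(n)`: the number of `k`-convex words of length `n` on the alphabet `[p]`
(with `g_{k,p}(0) = 1` counting the empty word). -/
noncomputable def gkp (k p n : ℕ) : ℕ := Nat.card {f : Fin n → Fin p // IsKConvex k f}

lemma kconv_cons (k p n : ℕ) (a b c : Fin p) (f : Fin n → Fin p) :
    IsKConvex k (Fin.cons a (Fin.cons b (Fin.cons c f : Fin (n+1) → Fin p) : Fin (n+2) → Fin p) : Fin (n+3) → Fin p) ↔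
    (((a : ℕ) : ℤ) + ((c : ℕ) : ℤ) - 2 * ((b : ℕ) : ℤ) ≤ (k : ℤ)) ∧
    IsKConvex k (Fin.cons b (Fin.cons c f : Fin (n+1) → Fin p) : Fin (n+2) → Fin p) := by
  constructor
  · intro h
    refine ⟨?_, ?_⟩
    · have := h 0 (Fin.succ 0) (Fin.succ (Fin.succ 0)) rfl rfl
      simpa only [Fin.cons_zero, Fin.cons_succ] using this
    · intro i j l hij hjl
      have := h i.succ j.succ l.succ (by simp [hij]) (by simp [hjl])
      simpa only [Fin.cons_succ] using this
  · rintro ⟨h0, h⟩ i j l hij hjl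
    induction i using Fin.cases with
    | zero =>
      have hj : j = Fin.succ 0 := Fin.ext hij.symm
      have hl : l = Fin.succ (Fin.succ 0) := Fin.ext (by rw [← hjl, ← hij]; rfl)
      subst hj hl
      simpa only [Fin.cons_zero, Fin.cons_succ] using h0
    | succ i =>
      induction j using Fin.cases with
      | zero => simp at hij
      | succ j =>
        induction l using Fin.cases with
        | zero => simp at hjl
        | succ l =>
          simp only [Fin.cons_succ]
          exact h i j l (by simpa using hij) (by simpa using hjl)

open Classical in
noncomputable def cw (k p n : ℕ) (s : Fin p × Fin p) : ℤ :=
  ∑ f : Fin n → Fin p, if IsKConvex k (Fin.cons s.1 (Fin.cons s.2 f : Fin (n+1) → Fin p) : Fin (n+2) → Fin p) then 1 else 0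

open Classical in
noncomputable def tm (k p : ℕ) : Matrix (Fin p × Fin p) (Fin p × Fin p) ℤ :=
  fun s t => if t.1 = s.2 ∧ (((s.1 : ℕ) : ℤ) + ((t.2 : ℕ) : ℤ) - 2 * ((s.2 : ℕ) : ℤ) ≤ (k : ℤ)) then 1 else 0

lemma sum_cons {p n : ℕ} (F : (Fin (n+1) → Fin p) → ℤ) :
    ∑ f, F f = ∑ a : Fin p, ∑ f : Fin n → Fin p, F (Fin.cons a f : Fin (n+1) → Fin p) := by
  rw [← (Fin.consEquiv (fun _ : Fin (n+1) => Fin p)).sum_comp, Fintype.sum_prod_type]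
  rfl

lemma cw_zero (k p : ℕ) (s : Fin p × Fin p) : cw k p 0 s = 1 := by
  unfold cw
  rw [Fintype.sum_unique, if_pos]
  intro i j l h1 h2
  omega

lemma cw_succ (k p n : ℕ) (s : Fin p × Fin p) :
    cw k p (n+1) s = ∑ t, tm k p s t * cw k p n t := by
  unfold cw
  rw [sum_cons, Fintype.sum_prod_type]
  symm
  rw [Finset.sum_eq_single s.2]
  · refine Finset.sum_congr rfl fun c _ => ?_
    rw [Finset.mul_sum]
    refine Finset.sum_congr rfl fun f _ => ?_
    have h := kconv_cons k p n s.1 s.2 c f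
    simp only [tm, true_and]
    split_ifs <;> simp <;> tauto
  · intro b _ hb
    refine Finset.sum_eq_zero fun c _ => ?_
    simp [tm, hb]
  · simp

lemma gkp_eq (k p n : ℕ) : (gkp k p (n+2) : ℤ) = ∑ s, cw k p n s := by
  classical
  unfold gkp cw
  rw [Nat.card_eq_fintype_card, Fintype.card_subtype, Finset.card_filter]
  push_cast
  rw [sum_cons, Fintype.sum_prod_type]
  refine Finset.sum_congr rfl fun c _ => ?_
  rw [sum_cons]

/-- for every `p ≥ 1` and `k ≥ 0`, the generating function
`Σ_{n≥0} g_{k,p}(n) xⁿ` is rational: there are integer polynomials `P, Q` with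
`Q(0) = 1` and `Q(x) · Σ g_{k,p}(n) xⁿ = P(x)` as formal power series. -/
theorem convex_words_gen_fun_rational (p k : ℕ) (hp : 1 ≤ p) :
    ∃ P Q : Polynomial ℤ, Q.coeff 0 = 1 ∧
      (Q : PowerSeries ℤ) * PowerSeries.mk (fun n => (gkp k p n : ℤ))
        = (P : PowerSeries ℤ) := by
  classical
  let A : Matrix (Fin p × Fin p) (Fin p × Fin p) (Polynomial ℤ) :=
    1 - (Polynomial.X : Polynomial ℤ) • (tm k p).map Polynomial.C
  let φ : Polynomial ℤ →+* PowerSeries ℤ := Polynomial.coeToPowerSeries.ringHom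
  let v : Fin p × Fin p → PowerSeries ℤ := fun s => PowerSeries.mk fun n => cw k p n s
  have hA : (A.map φ).mulVec v = 1 := by
    have h1 : A.map φ = 1 - (PowerSeries.X : PowerSeries ℤ) • (tm k p).map PowerSeries.C := by
      ext1 s t
      simp [-eq_intCast, A, φ, Matrix.one_apply, apply_ite]
      exact mul_comm _ _
    rw [h1, Matrix.sub_mulVec, Matrix.one_mulVec, Matrix.smul_mulVec]
    ext s n
    simp only [Pi.sub_apply, Pi.smul_apply, Matrix.mulVec, dotProduct, smul_eq_mul, map_sub, Matrix.map_apply, Pi.one_apply]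
    cases n with
    | zero => simp [v, cw_zero]
    | succ n =>
      simp [-eq_intCast, v, PowerSeries.coeff_succ_X_mul, cw_succ, PowerSeries.coeff_one]
  have hB : φ A.det • v = ((A.adjugate).map φ).mulVec 1 := by
    rw [← hA, Matrix.mulVec_mulVec, ← Matrix.map_mul, Matrix.adjugate_mul]
    ext1 s
    simp [Matrix.mulVec, dotProduct, Matrix.one_apply, apply_ite]
  have hG : PowerSeries.mk (fun n => (gkp k p n : ℤ)) =
      φ (Polynomial.C (gkp k p 0 : ℤ) + Polynomial.X * Polynomial.C (gkp k p 1 : ℤ))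
        + PowerSeries.X ^ 2 * ∑ s, v s := by
    ext n
    match n with
    | 0 => simp [-eq_intCast, -map_natCast, φ, pow_two, mul_assoc]
    | 1 => simp [-eq_intCast, -map_natCast, φ, pow_two, mul_assoc, PowerSeries.coeff_succ_X_mul,PowerSeries.coeff_C]
    | n+2 => simp [-eq_intCast, -map_natCast, φ, pow_two, mul_assoc, PowerSeries.coeff_succ_X_mul, gkp_eq, v, PowerSeries.coeff_C]
  refine ⟨A.det * (Polynomial.C (gkp k p 0 : ℤ) + Polynomial.X * Polynomial.C (gkp k p 1 : ℤ))
    + Polynomial.X ^ 2 * ∑ s, ∑ t, A.adjugate s t, A.det, ?_, ?_⟩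
  · have := Matrix.eval_charpolyRev (M := tm k p)
    rw [Polynomial.coeff_zero_eq_eval_zero]
    exact this
  · have hc : ∀ q : Polynomial ℤ, (q : PowerSeries ℤ) = φ q := fun q => by simp [φ]
    rw [hc, hc]
    rw [hG, mul_add, map_add φ (A.det * _), map_mul φ A.det, map_mul φ (_ ^ 2), map_pow, mul_left_comm, Finset.mul_sum]
    have hX : φ Polynomial.X = PowerSeries.X := by simp [φ]
    rw [hX]
    congr 2
    rw [map_sum]
    refine Finset.sum_congr rfl fun s _ => ?_
    have := congrFun hB s
    simpa [Matrix.mulVec, dotProduct] using this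
end

section
/- For every integer p ≥ 1 and every integer n > 2(p−1), the number of 0-convex words of length n on the alphabet [p] equals Σ_{m=1}^{p} ( Σ_{j=0}^{m−1} a(j) )², where a(j) is the number of integer partitions of j (with a(0) = 1). -/
def Sgood (M : ℕ) (l : List ℕ) : Prop :=
  l.Pairwise (fun a b => b ≤ a) ∧ (∀ x ∈ l, 0 < x) ∧ l.sum ≤ M

def Dsum (l : List ℕ) (i : ℕ) : ℕ := (l.drop i).sum

theorem Dsum_conv (l : List ℕ) (h : l.Pairwise (fun a b => b ≤ a)) (i : ℕ) :
    2 * Dsum l (i+1) ≤ Dsum l i + Dsum l (i+2) := by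
  induction l generalizing i with
  | nil => simp [Dsum]
  | cons a l ih =>
    rw [List.pairwise_cons] at h
    cases i with
    | succ i => simpa [Dsum] using ih h.2 i
    | zero =>
      cases l with
      | nil => simp [Dsum]
      | cons b l =>
        have := h.1 b (by simp)
        simp [Dsum]
        omega

theorem Dsum_bound (l : List ℕ) (h : ∀ x ∈ l, 0 < x) (i : ℕ) :
    Dsum l i = 0 ∨ Dsum l i + i ≤ l.sum := by
  induction l generalizing i with
  | nil => simp [Dsum]
  | cons a l ih =>
    cases i with
    | zero => simp [Dsum]
    | succ i =>
      have h1 := h a (by simp)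
      have := ih (fun x hx => h x (by simp [hx])) i
      simp [Dsum] at *
      omega

theorem Dsum_inj (l r : List ℕ) (hl : ∀ x ∈ l, 0 < x) (hr : ∀ x ∈ r, 0 < x)
    (h : ∀ i, Dsum l i = Dsum r i) : l = r := by
  induction l generalizing r with
  | nil =>
    cases r with
    | nil => rfl
    | cons b r =>
      have := h 0
      have := hr b (by simp)
      simp [Dsum] at *
      omega
  | cons a l ih =>
    cases r with
    | nil =>
      have := h 0
      have := hl a (by simp)
      simp [Dsum] at *
      omega
    | cons b r =>
      have h2 : l = r := ih r (fun x hx => hl x (by simp [hx])) (fun x hx => hr x (by simp [hx]))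
        (fun i => by simpa [Dsum] using h (i+1))
      subst h2
      have := h 0
      simp [Dsum] at this
      rw [this]

theorem Dsum_surj (N : ℕ) (L : ℕ → ℕ) (hc : ∀ i, 2 * L (i+1) ≤ L i + L (i+2))
    (hN : ∀ i, N ≤ i → L i = 0) :
    ∃ l : List ℕ, l.Pairwise (fun a b => b ≤ a) ∧ (∀ x ∈ l, 0 < x) ∧ ∀ i, Dsum l i = L i := by
  induction N generalizing L with
  | zero => exact ⟨[], by simp, by simp, fun i => by simp [Dsum, hN i]⟩
  | succ N ih =>
    obtain ⟨l, h1, h2, h3⟩ := ih (fun i => L (i+1)) (fun i => hc (i+1)) (fun i hi => hN _ (by omega))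
    by_cases h0 : L 0 = 0
    · have hz : ∀ i, L i = 0 ∧ L (i+1) = 0 := by
        have hanti : ∀ k i, N + 1 ≤ i + k → L (i+1) ≤ L i := by
          intro k
          induction k with
          | zero => intro i hi; rw [hN (i+1) (by omega)]; omega
          | succ k ihk =>
            intro i hi
            have := ihk (i+1) (by omega)
            have := hc i
            grind
        intro i
        induction i with
        | zero => have := hanti (N+1) 0 (by omega); grind
        | succ i ihi => have := hanti (N+1) (i+1) (by omega); grind
      exact ⟨[], by simp, by simp, fun i => by simp [Dsum, (hz i).1]⟩
    · have hlt : L 1 < L 0 := by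
        cases l with
        | nil =>
          have := h3 0
          simp [Dsum] at this
          omega
        | cons b l =>
          have a0 := h3 0
          have a1 := h3 1
          have := h2 b (by simp)
          have := hc 0
          simp [Dsum] at *
          omega
      refine ⟨(L 0 - L 1) :: l, ?_, ?_, ?_⟩
      · rw [List.pairwise_cons]
        refine ⟨?_, h1⟩
        cases l with
        | nil => simp
        | cons b l =>
          have a0 := h3 0
          have a1 := h3 1
          have := hc 0
          rw [List.pairwise_cons] at h1
          have hb : b ≤ L 0 - L 1 := by
            simp [Dsum] at *
            omega
          intro x hx
          rcases List.mem_cons.1 hx with rfl | hx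
          · exact hb
          · exact (h1.1 x hx).trans hb
      · intro x hx
        rcases List.mem_cons.1 hx with rfl | hx
        · omega
        · exact h2 x hx
      · intro i
        cases i with
        | zero =>
          have := h3 0
          simp [Dsum] at *
          omega
        | succ i => simpa [Dsum] using h3 i

def SgoodEquiv (M : ℕ) : {l : List ℕ // Sgood M l} ≃ (Σ j : Fin (M+1), Nat.Partition j) where
  toFun l := ⟨⟨l.1.sum, Nat.lt_succ_of_le l.2.2.2⟩, ⟨(l.1 : Multiset ℕ), fun {i} hi => l.2.2.1 i (by simpa using hi), by simp⟩⟩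
  invFun P := ⟨P.2.parts.sort (fun a b => b ≤ a), by
    refine ⟨Multiset.pairwise_sort _ _, fun x hx => P.2.parts_pos (by simpa using hx), ?_⟩
    have h := P.2.parts_sum
    rw [← Multiset.sum_coe, Multiset.sort_eq, h]
    omega⟩
  left_inv l := by
    apply Subtype.ext
    have h1 : ((l.1 : Multiset ℕ).sort (fun a b => b ≤ a)).Pairwise (fun a b => b ≤ a) :=
      Multiset.pairwise_sort _ _
    have h2 : ((l.1 : Multiset ℕ).sort (fun a b => b ≤ a)).Perm l.1 := by
      rw [← Multiset.coe_eq_coe, Multiset.sort_eq]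
    exact List.Perm.eq_of_pairwise (fun a b _ _ h h' => le_antisymm h' h) h1 l.2.1 h2
  right_inv P := by
    obtain ⟨⟨j, hj⟩, ⟨s, h1, h2⟩⟩ := P
    dsimp only at h2
    subst h2
    have e : ((s.sort (fun a b => b ≤ a) : List ℕ) : Multiset ℕ) = s := Multiset.sort_eq _ _
    have e2 : (s.sort (fun a b => b ≤ a)).sum = s.sum := by rw [← Multiset.sum_coe, e]
    have key : ∀ (t : Multiset ℕ) (k : ℕ) (ht : t = s) (hk : k = s.sum) (a b c),
        (⟨⟨k, a⟩, ⟨t, b, c⟩⟩ : Σ j : Fin (M+1), Nat.Partition j) = ⟨⟨s.sum, hj⟩, ⟨s, h1, rfl⟩⟩ := by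
      intro t k ht hk a b c
      subst ht
      subst hk
      rfl
    exact key _ _ e e2 _ _ _

theorem Sgood_card (M : ℕ) : Nat.card {l : List ℕ // Sgood M l} =
    ∑ j ∈ Finset.range (M+1), Fintype.card (Nat.Partition j) := by
  rw [Nat.card_congr (SgoodEquiv M), Nat.card_eq_fintype_card, Fintype.card_sigma,
    Finset.sum_range]

def wordMap (p n : ℕ) (x : Σ M : Fin p, {l : List ℕ // Sgood M l} × {l : List ℕ // Sgood M l}) :
    Fin n → Fin p :=
  fun i => ⟨x.1 - Dsum x.2.1.1 i - Dsum x.2.2.1 (n-1-i), by have := x.1.2; omega⟩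

theorem wordMap_convex (p n : ℕ) (hn : 2 * (p - 1) < n) (x) : IsKConvex 0 (wordMap p n x) := by
  obtain ⟨⟨M, hM⟩, ⟨l, hl⟩, ⟨r, hr⟩⟩ := x
  rintro ⟨i, hi⟩ ⟨j, hj⟩ ⟨k, hk⟩ h1 h2
  dsimp only at h1 h2
  subst h1
  subst h2
  simp only [wordMap]
  have a0 := Dsum_bound l hl.2.1 i
  have a1 := Dsum_bound l hl.2.1 (i+1)
  have a2 := Dsum_bound l hl.2.1 (i+2)
  have a3 := Dsum_conv l hl.1 i
  have b0 := Dsum_bound r hr.2.1 (n-1-i)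
  have b1 := Dsum_bound r hr.2.1 (n-1-(i+1))
  have b2 := Dsum_bound r hr.2.1 (n-1-(i+2))
  have b3 := Dsum_conv r hr.1 (n-1-(i+2))
  have c := hl.2.2
  have d := hr.2.2
  dsimp only at c d
  rw [show n-1-(i+2)+1 = n-1-(i+1) by omega, show n-1-(i+2)+2 = n-1-i by omega] at b3
  simp only [show i+1+1 = i+2 by omega]
  generalize Dsum l i = x0 at *
  generalize Dsum l (i+1) = x1 at *
  generalize Dsum l (i+2) = x2 at *
  generalize Dsum r (n-1-i) = y0 at *
  generalize Dsum r (n-1-(i+1)) = y1 at *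
  generalize Dsum r (n-1-(i+2)) = y2 at *
  have z0 : x0 = 0 ∨ y0 = 0 := by omega
  have z1 : x1 = 0 ∨ y1 = 0 := by omega
  have z2 : x2 = 0 ∨ y2 = 0 := by omega
  have w0 : ((M - x0 - y0 : ℕ) : ℤ) = M - x0 - y0 := by omega
  have w1 : ((M - x1 - y1 : ℕ) : ℤ) = M - x1 - y1 := by omega
  have w2 : ((M - x2 - y2 : ℕ) : ℤ) = M - x2 - y2 := by omega
  rw [w0, w1, w2]
  push_cast
  omega

theorem wordMap_inj (p n : ℕ) (hp : 1 ≤ p) (hn : 2 * (p - 1) < n) :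
    Function.Injective (wordMap p n) := by
  rintro ⟨⟨M, hM⟩, ⟨l, hl⟩, ⟨r, hr⟩⟩ ⟨⟨M', hM'⟩, ⟨l', hl'⟩, ⟨r', hr'⟩⟩ h
  have H : ∀ i, i < n → M - Dsum l i - Dsum r (n-1-i) = M' - Dsum l' i - Dsum r' (n-1-i) := by
    intro i hi
    have := congrArg Fin.val (congrFun h ⟨i, hi⟩)
    simpa [wordMap] using this
  have cl := hl.2.2
  have cr := hr.2.2
  have cl' := hl'.2.2
  have cr' := hr'.2.2
  dsimp only at cl cr cl' cr'
  have B := fun i => Dsum_bound l hl.2.1 i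
  have C := fun i => Dsum_bound r hr.2.1 i
  have B' := fun i => Dsum_bound l' hl'.2.1 i
  have C' := fun i => Dsum_bound r' hr'.2.1 i
  have e : M = M' := by
    have := H (p-1) (by omega)
    have := B (p-1)
    have := C (n-1-(p-1))
    have := B' (p-1)
    have := C' (n-1-(p-1))
    omega
  subst e
  have e1 : l = l' := by
    apply Dsum_inj l l' hl.2.1 hl'.2.1
    intro i
    have := B i
    have := B' i
    by_cases hi : i ≤ p - 1
    · have := H i (by omega)
      have := C (n-1-i)
      have := C' (n-1-i)
      omega
    · omega
  have e2 : r = r' := by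
    apply Dsum_inj r r' hr.2.1 hr'.2.1
    intro i
    have := C i
    have := C' i
    by_cases hi : i ≤ p - 1
    · have h3 := H (n-1-i) (by omega)
      rw [show n-1-(n-1-i) = i by omega] at h3
      have := B (n-1-i)
      have := B' (n-1-i)
      omega
    · omega
  subst e1
  subst e2
  rfl

theorem wordMap_surj (p n : ℕ) (hp : 1 ≤ p) (hn : 2 * (p - 1) < n) (f : Fin n → Fin p)
    (hf : IsKConvex 0 f) : ∃ x, wordMap p n x = f := by
  obtain ⟨g, hg⟩ : ∃ g : ℕ → ℕ, ∀ i (h : i < n), g i = f ⟨i, h⟩ :=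
    ⟨fun i => if h : i < n then f ⟨i, h⟩ else 0, fun i h => by simp [h]⟩
  have gp : ∀ i, i < n → g i < p := fun i h => by rw [hg i h]; exact (f ⟨i, h⟩).2
  have gc : ∀ i, i + 2 < n → g i + g (i+2) ≤ 2 * g (i+1) := by
    intro i hi
    have := hf ⟨i, by omega⟩ ⟨i+1, by omega⟩ ⟨i+2, by omega⟩ rfl rfl
    rw [hg i (by omega), hg (i+1) (by omega), hg (i+2) (by omega)]
    push_cast at this
    omega
  have up : ∀ i, i < n - p → g i ≤ g (i+1) := by
    intro i hi
    by_contra hc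
    have : ∀ k, i + k + 1 < n → g (i+k+1) < g (i+k) ∧ g (i+k+1) + k + 1 ≤ g i := by
      intro k
      induction k with
      | zero => intro _; simp; omega
      | succ k ih =>
        intro hk
        have h1 := ih (by omega)
        have h2 := gc (i+k) (by omega)
        rw [show i+(k+1)+1 = i+k+2 by omega, show i+(k+1) = i+k+1 by omega]
        omega
    have h3 := (this (n-2-i) (by omega)).2
    have := gp i (by omega)
    omega
  have down : ∀ i, p - 1 ≤ i → i + 1 < n → g (i+1) ≤ g i := by
    intro i hi hin
    by_contra hc
    have : ∀ k, k ≤ i → g (i-k) < g (i-k+1) ∧ g (i-k) + k + 1 ≤ g (i+1) := by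
      intro k
      induction k with
      | zero => intro _; simp; omega
      | succ k ih =>
        intro hk
        have h1 := ih (by omega)
        have h2 := gc (i-(k+1)) (by omega)
        rw [show i-(k+1)+2 = i-k+1 by omega] at h2
        rw [show i-(k+1)+1 = i-k by omega] at h2 ⊢
        omega
    have h3 := (this i le_rfl).2
    have := gp (i+1) (by omega)
    omega
  have lemax : ∀ i, i < n → g i ≤ g (p-1) := by
    intro i hi
    rcases le_total i (p-1) with h | h
    · have : ∀ k, k ≤ p - 1 → g (p-1-k) ≤ g (p-1) := by
        intro k
        induction k with
        | zero => simp
        | succ k ih =>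
          intro hk
          have h1 := ih (by omega)
          have h2 := up (p-1-(k+1)) (by omega)
          rw [show p-1-(k+1)+1 = p-1-k by omega] at h2
          omega
      have h4 := this (p-1-i) (by omega)
      rwa [show p-1-(p-1-i) = i by omega] at h4
    · induction i, h using Nat.le_induction with
      | base => rfl
      | succ i h ih => exact (down i h hi).trans (ih (by omega))
  have mid : ∀ i, p - 1 ≤ i → i ≤ n - p → g i = g (p-1) := by
    intro i h
    induction i, h using Nat.le_induction with
    | base => intro _; rfl
    | succ i h ih =>
      intro h2
      have := ih (by omega)
      have := up i (by omega)
      have := lemax (i+1) (by omega)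
      omega
  obtain ⟨l, l1, l2, l3⟩ := Dsum_surj p (fun i => if i < p - 1 then g (p-1) - g i else 0) (by
    intro i
    have := lemax
    by_cases h2 : i + 2 < p - 1
    · have := gc i (by omega)
      have := lemax i (by omega)
      have := lemax (i+1) (by omega)
      have := lemax (i+2) (by omega)
      rw [if_pos (by omega), if_pos (by omega), if_pos (by omega)]
      omega
    · by_cases h1 : i + 1 < p - 1
      · have := gc i (by omega)
        have := lemax i (by omega)
        have := lemax (i+1) (by omega)
        have e : g (i+2) = g (p-1) := by rw [show i+2 = p-1 by omega]
        rw [if_pos (by omega), if_pos (by omega), if_neg (by omega)]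
        omega
      · rw [if_neg h1]; omega) (by intro i hi; rw [if_neg]; omega)
  obtain ⟨r, r1, r2, r3⟩ := Dsum_surj p (fun i => if i < p - 1 then g (p-1) - g (n-1-i) else 0) (by
    intro i
    by_cases h2 : i + 1 < p - 1
    · have h3 := gc (n-1-(i+2)) (by omega)
      rw [show n-1-(i+2)+1 = n-1-(i+1) by omega, show n-1-(i+2)+2 = n-1-i by omega] at h3
      have := lemax (n-1-i) (by omega)
      have := lemax (n-1-(i+1)) (by omega)
      have := lemax (n-1-(i+2)) (by omega)
      rw [if_pos (by omega), if_pos (by omega)]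
      by_cases h1 : i + 2 < p - 1
      · rw [if_pos (by omega)]
        omega
      · have e := mid (n-1-(i+2)) (by omega) (by omega)
        rw [if_neg (by omega)]
        omega
    · rw [if_neg h2]; omega) (by intro i hi; rw [if_neg]; omega)
  have ls : l.sum ≤ g (p-1) := by
    have := l3 0
    simp only [Dsum, List.drop_zero] at this
    split_ifs at this <;> omega
  have rs : r.sum ≤ g (p-1) := by
    have := r3 0
    simp only [Dsum, List.drop_zero] at this
    split_ifs at this <;> omega
  refine ⟨⟨⟨g (p-1), gp _ (by omega)⟩, ⟨l, l1, l2, ls⟩, ⟨r, r1, r2, rs⟩⟩, ?_⟩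
  funext ⟨i, hi⟩
  apply Fin.ext
  simp only [wordMap, l3, r3]
  rw [← hg i hi]
  rw [show n-1-(n-1-i) = i by omega]
  have := lemax i hi
  have := mid i
  split_ifs <;> omega

/-- for `p ≥ 1` and `n > 2(p-1)`, the number of 0-convex words of
length `n` on `[p]` equals `Σ_{m=1}^{p} (Σ_{j=0}^{m-1} a(j))²`, where `a(j)` is the
number of integer partitions of `j`. -/
theorem zero_convex_words_count (p : ℕ) (hp : 1 ≤ p) (n : ℕ) (hn : 2 * (p - 1) < n) :
    Nat.card {f : Fin n → Fin p // IsKConvex 0 f}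
      = ∑ m ∈ Finset.Icc 1 p,
          (∑ j ∈ Finset.range m, Fintype.card (Nat.Partition j)) ^ 2 := by
  have hb : Function.Bijective (fun x => (⟨wordMap p n x, wordMap_convex p n hn x⟩ :
      {f : Fin n → Fin p // IsKConvex 0 f})) := by
    constructor
    · intro x y h
      exact wordMap_inj p n hp hn (congrArg Subtype.val h)
    · rintro ⟨f, hf⟩
      obtain ⟨x, hx⟩ := wordMap_surj p n hp hn f hf
      exact ⟨x, Subtype.ext hx⟩
  rw [← Nat.card_eq_of_bijective _ hb]
  have : ∀ M : ℕ, Finite {l : List ℕ // Sgood M l} := fun M => Finite.of_equiv _ (SgoodEquiv M).symm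
  rw [Nat.card_sigma]
  simp only [Nat.card_prod, Sgood_card]
  rw [← Finset.sum_range (fun M => (∑ j ∈ Finset.range (M+1), Fintype.card (Nat.Partition j)) *
    (∑ j ∈ Finset.range (M+1), Fintype.card (Nat.Partition j))), Finset.range_eq_Ico,
    Finset.sum_Ico_add' (fun M => (∑ j ∈ Finset.range M, Fintype.card (Nat.Partition j)) *
    (∑ j ∈ Finset.range M, Fintype.card (Nat.Partition j))) 0 p 1]
  apply Finset.sum_congr
  · ext; simp <;> omega
  · intros; ring
end

section
/- Fix integers p ≥ 1, m with 1 ≤ m ≤ p, and n ≥ 2p−1. The number of 0-convex words of length n on the alphabet [p] whose maximum value is exactly m equals ( Σ_{j=0}^{m−1} a(j) )², where a(j) is the number of integer partitions of j (with a(0) = 1). -/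
def SS (A : Multiset ℕ) (i : ℕ) : ℕ := (A.map (fun x => x - i)).sum

theorem SS_zero (A : Multiset ℕ) : SS A 0 = A.sum := by simp [SS]

theorem SS_cons (a : ℕ) (A : Multiset ℕ) (i : ℕ) : SS (a ::ₘ A) i = (a - i) + SS A i := by
  simp [SS]

theorem SS_count (A : Multiset ℕ) (k : ℕ) :
    A.count (k+1) + 2 * SS A (k+1) = SS A k + SS A (k+2) := by
  induction A using Multiset.induction_on with
  | empty => simp [SS]
  | cons a A ih =>
    simp only [SS_cons, Multiset.count_cons]
    split_ifs <;> omega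

theorem SS_le (A : Multiset ℕ) (i : ℕ) : SS A i ≤ A.sum := by
  induction A using Multiset.induction_on with
  | empty => simp [SS]
  | cons a A ih => simp only [SS_cons, Multiset.sum_cons]; omega

theorem SS_eq_zero (A : Multiset ℕ) (i : ℕ) (h : A.sum ≤ i) : SS A i = 0 := by
  induction A using Multiset.induction_on with
  | empty => simp [SS]
  | cons a A ih =>
    simp only [SS_cons, Multiset.sum_cons] at *
    have := ih (by omega)
    omega

theorem SS_inj (A B : Multiset ℕ) (hA : ∀ x ∈ A, 0 < x) (hB : ∀ x ∈ B, 0 < x)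
    (h : ∀ i, SS A i = SS B i) : A = B := by
  ext k
  cases k with
  | zero =>
    rw [Multiset.count_eq_zero_of_notMem, Multiset.count_eq_zero_of_notMem]
    · intro h; exact absurd (hB 0 h) (by omega)
    · intro h; exact absurd (hA 0 h) (by omega)
  | succ k =>
    have h1 := SS_count A k
    have h2 := SS_count B k
    rw [h, h, h] at h1
    omega

theorem SS_card (A : Multiset ℕ) (hA : ∀ x ∈ A, 0 < x) : A.card + SS A 1 = SS A 0 := by
  induction A using Multiset.induction_on with
  | empty => simp [SS]
  | cons a A ih =>
    have h1 := ih (fun x hx => hA x (Multiset.mem_cons_of_mem hx))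
    have h2 := hA a (Multiset.mem_cons_self a A)
    simp only [SS_cons, Multiset.card_cons]
    omega

theorem SS_shift_succ (A : Multiset ℕ) (c i : ℕ) :
    SS (A.map (· + 1) + Multiset.replicate c 1) (i+1) = SS A i := by
  simp [SS]

theorem SS_shift_zero (A : Multiset ℕ) (c : ℕ) :
    SS (A.map (· + 1) + Multiset.replicate c 1) 0 = SS A 0 + A.card + c := by
  simp [SS, Multiset.sum_map_add]

theorem SS_exists (N : ℕ) : ∀ (L : ℕ → ℕ), (∀ i, 2 * L (i+1) ≤ L i + L (i+2)) →
    (∀ i, N ≤ i → L i = 0) → ∃ A : Multiset ℕ, (∀ x ∈ A, 0 < x) ∧ ∀ i, SS A i = L i := by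
  induction N with
  | zero =>
    intro L _ h
    exact ⟨0, by simp, fun i => by rw [h i (by omega)]; simp [SS]⟩
  | succ N ih =>
    intro L hL h
    obtain ⟨A, hA, hS⟩ := ih (fun i => L (i+1)) (fun i => hL (i+1)) (fun i hi => h _ (by omega))
    refine ⟨A.map (· + 1) + Multiset.replicate (L 0 + L 2 - 2 * L 1) 1, ?_, ?_⟩
    · intro x hx
      rw [Multiset.mem_add, Multiset.mem_map] at hx
      rcases hx with ⟨y, _, rfl⟩ | hx
      · omega
      · rw [Multiset.eq_of_mem_replicate hx]; omega
    · intro i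
      cases i with
      | zero =>
        rw [SS_shift_zero]
        have h1 := SS_card A hA
        have h2 := hS 0
        have h3 := hS 1
        have h4 := hL 0
        simp only [zero_add, Nat.reduceAdd] at h2 h3 h4
        omega
      | succ i => rw [SS_shift_succ, hS]

abbrev PT (m : ℕ) := {A : Multiset ℕ // (∀ x ∈ A, 0 < x) ∧ A.sum < m}

def PTequiv (m : ℕ) : PT m ≃ (Σ j : Fin m, Nat.Partition (j : ℕ)) where
  toFun A := ⟨⟨A.1.sum, A.2.2⟩, ⟨A.1, fun {i} hi => A.2.1 i hi, rfl⟩⟩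
  invFun P := ⟨P.2.parts, fun _ hx => P.2.parts_pos hx, by rw [P.2.parts_sum]; exact P.1.2⟩
  left_inv A := rfl
  right_inv P := by
    obtain ⟨⟨j, hj⟩, ⟨q, h1, h2⟩⟩ := P
    dsimp at h2
    subst h2
    rfl

theorem PT_card (m : ℕ) :
    Nat.card (PT m) = ∑ j ∈ Finset.range m, Fintype.card (Nat.Partition j) := by
  rw [Nat.card_congr (PTequiv m), Nat.card_eq_fintype_card, Fintype.card_sigma,
    Finset.sum_range (fun j => Fintype.card (Nat.Partition j))]

theorem zero_convex_words_max_count (p m n : ℕ) (hp : 1 ≤ p) (hm1 : 1 ≤ m)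
    (hmp : m ≤ p) (hn : 2 * p - 1 ≤ n) :
    Nat.card {f : Fin n → Fin p // IsKConvex 0 f ∧
        (∀ i : Fin n, (f i : ℕ) + 1 ≤ m) ∧ (∃ i : Fin n, (f i : ℕ) + 1 = m)}
      = (∑ j ∈ Finset.range m, Fintype.card (Nat.Partition j)) ^ 2 := by
  rw [← PT_card, sq, ← Nat.card_prod]
  symm
  have key : ∀ (A B : PT m) (i : ℕ), i < n → SS A.1 i = 0 ∨ SS B.1 (n-1-i) = 0 := by
    intro A B i hi
    have hA := A.2.2
    have hB := B.2.2
    by_cases h : m - 1 ≤ i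
    · left; exact SS_eq_zero _ _ (by omega)
    · right; exact SS_eq_zero _ _ (by omega)
  let F : PT m × PT m → (Fin n → Fin p) := fun P i =>
    ⟨m - 1 - SS P.1.1 i - SS P.2.1 (n-1-i), by omega⟩
  have hF : ∀ P i, ((F P i : Fin p) : ℕ) + SS P.1.1 i + SS P.2.1 (n-1-i) = m - 1 := by
    intro P i
    have h1 := key P.1 P.2 i i.2
    have h2 := SS_le P.1.1 i
    have h3 := SS_le P.2.1 (n-1-i)
    have h4 := P.1.2.2
    have h5 := P.2.2.2
    simp only [F]
    omega
  have hlarge : ∀ (A : PT m) i, m - 1 ≤ i → SS A.1 i = 0 := by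
    intro A i hi
    have := A.2.2
    exact SS_eq_zero _ _ (by omega)
  refine Nat.card_congr (Equiv.ofBijective
    (fun P => ⟨F P, ?_, ?_, ?_⟩) ⟨?_, ?_⟩)
  · intro i j l hij hjl
    have h1 := hF P i
    have h2 := hF P j
    have h3 := hF P l
    have e1 : n - 1 - (j:ℕ) = n - 1 - l + 1 := by omega
    have e2 : n - 1 - (i:ℕ) = n - 1 - l + 2 := by omega
    have c1 := SS_count P.1.1 i
    have c2 := SS_count P.2.1 (n - 1 - l)
    rw [e2] at h1
    rw [e1] at h2
    rw [← hjl, ← hij] at h3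
    rw [← hij] at h2
    rw [← hjl, ← hij] at c2 h2 h1
    push_cast
    rw [show (i:ℕ) + 1 + 1 = i + 2 from rfl] at h1 h2 h3 c2
    omega
  · intro i
    have := hF P i
    omega
  · refine ⟨⟨m-1, by omega⟩, ?_⟩
    have h1 := hF P ⟨m-1, by omega⟩
    have h2 := hlarge P.1 (m-1) le_rfl
    have h3 := hlarge P.2 (n-1-(m-1)) (by omega)
    simp only at h1
    omega
  · intro P Q hPQ
    have hPQ' : F P = F Q := congrArg Subtype.val hPQ
    have hh : ∀ i : Fin n, SS P.1.1 i + SS P.2.1 (n-1-i) = SS Q.1.1 i + SS Q.2.1 (n-1-i) := by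
      intro i
      have h1 := hF P i
      have h2 := hF Q i
      rw [hPQ'] at h1
      omega
    refine Prod.ext (Subtype.ext (SS_inj _ _ P.1.2.1 Q.1.2.1 ?_))
      (Subtype.ext (SS_inj _ _ P.2.2.1 Q.2.2.1 ?_))
    · intro i
      by_cases hi : m - 1 ≤ i
      · rw [hlarge _ _ hi, hlarge _ _ hi]
      · have h1 := hh ⟨i, by omega⟩
        have h2 := hlarge P.2 (n-1-i) (by omega)
        have h3 := hlarge Q.2 (n-1-i) (by omega)
        simp only at h1
        omega
    · intro i
      by_cases hi : m - 1 ≤ i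
      · rw [hlarge _ _ hi, hlarge _ _ hi]
      · have h1 := hh ⟨n-1-i, by omega⟩
        have h2 := hlarge P.1 (n-1-i) (by omega)
        have h3 := hlarge Q.1 (n-1-i) (by omega)
        have e : n - 1 - (n - 1 - i) = i := by omega
        simp only [e] at h1
        omega
  · rintro ⟨f, hc, hle, t, ht⟩
    obtain ⟨g, hg⟩ : ∃ g : ℕ → ℕ, ∀ i : Fin n, g i = f i :=
      ⟨fun i => if h : i < n then f ⟨i, h⟩ else 0, fun i => by simp⟩
    have hgc : ∀ i, i + 2 < n → g i + g (i+2) ≤ 2 * g (i+1) := by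
      intro i hi
      have h := hc ⟨i, by omega⟩ ⟨i+1, by omega⟩ ⟨i+2, hi⟩ rfl rfl
      rw [← hg, ← hg, ← hg] at h
      push_cast at h
      omega
    have hgl : ∀ i, i < n → g i + 1 ≤ m := fun i hi => by
      have := hle ⟨i, hi⟩
      rwa [← hg] at this
    have hgt : g t + 1 = m := by rw [hg]; exact ht
    have htn := t.2
    generalize (t : ℕ) = s at hgt htn
    obtain ⟨A, hA, hSA⟩ := SS_exists n (fun i => if i ≤ s then m - 1 - g i else 0) (by
      intro i
      by_cases h : i + 2 ≤ s
      · have := hgc i (by omega)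
        have := hgl i (by omega)
        have := hgl (i+1) (by omega)
        have := hgl (i+2) (by omega)
        simp only [show i ≤ s by omega, show i + 1 ≤ s by omega, h, if_true]
        omega
      · by_cases h' : i + 1 = s
        · subst h'
          simp only [le_refl, if_true]
          omega
        · rw [if_neg (by omega : ¬ i + 1 ≤ s)]
          omega) (fun i hi => if_neg (by omega))
    obtain ⟨B, hB, hSB⟩ := SS_exists n (fun i => if i ≤ n-1-s then m - 1 - g (n-1-i) else 0) (by
      intro i
      by_cases h : i + 2 ≤ n-1-s
      · have h0 := hgc (n-1-(i+2)) (by omega)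
        rw [show n-1-(i+2)+2 = n-1-i by omega, show n-1-(i+2)+1 = n-1-(i+1) by omega] at h0
        have := hgl (n-1-i) (by omega)
        have := hgl (n-1-(i+1)) (by omega)
        have := hgl (n-1-(i+2)) (by omega)
        simp only [show i ≤ n-1-s by omega, show i + 1 ≤ n-1-s by omega, h, if_true]
        omega
      · by_cases h' : i + 1 = n-1-s
        · rw [if_pos (by omega : i + 1 ≤ n-1-s), show n-1-(i+1) = s by omega]
          omega
        · rw [if_neg (by omega : ¬ i + 1 ≤ n-1-s)]
          omega) (fun i hi => if_neg (by omega))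
    have sA : A.sum < m := by
      rw [← SS_zero, hSA]; split_ifs <;> omega
    have sB : B.sum < m := by
      rw [← SS_zero, hSB]; split_ifs <;> omega
    refine ⟨(⟨A, hA, sA⟩, ⟨B, hB, sB⟩), Subtype.ext (funext fun i => Fin.ext ?_)⟩
    have h1 := hF (⟨A, hA, sA⟩, ⟨B, hB, sB⟩) i
    simp only [hSA, hSB] at h1
    rw [show n - 1 - (n - 1 - (i:ℕ)) = i by omega] at h1
    have h2 := hgl i i.2
    rw [← hg i]
    show ((F _ i : Fin p) : ℕ) = _
    rcases lt_trichotomy (i : ℕ) s with h | h | h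
    · rw [if_pos (by omega), if_neg (by omega)] at h1
      omega
    · rw [if_pos (by omega), if_pos (by omega)] at h1
      rw [h] at h1 ⊢
      omega
    · rw [if_neg (by omega), if_pos (by omega)] at h1
      omega
end

section
/- For k ∈ {1, 2} and every integer n ≥ 1, the number f_k(n) of k-convex permutations of [n] satisfies f_k(n) ≤ 2^(n−1). -/
/-- `f_k(n)`: the number of `k`-convex permutations of `[n]`. -/
noncomputable def fk (k n : ℕ) : ℕ :=
  Nat.card {π : Equiv.Perm (Fin n) // IsKConvex k ⇑π}

theorem kc_no_valley {k n : ℕ} (hk : k ≤ 2) (π : Equiv.Perm (Fin n)) (h : IsKConvex k ⇑π)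
    (i j l : Fin n) (hij : i < j) (hjl : j < l) (h1 : π j < π i) (h2 : π j < π l) : False := by
  obtain ⟨m, hm, hmin⟩ := Finset.exists_min_image (Finset.Icc i l) (fun x => π x)
    ⟨j, by simp [hij.le, hjl.le]⟩
  rw [Finset.mem_Icc] at hm
  have hj := hmin j (by simp [hij.le, hjl.le])
  have hmi : m ≠ i := by rintro rfl; exact absurd h1 (not_lt.2 hj)
  have hml : m ≠ l := by rintro rfl; exact absurd h2 (not_lt.2 hj)
  have a1 : i < m := lt_of_le_of_ne hm.1 hmi.symm
  have a2 : m < l := lt_of_le_of_ne hm.2 hml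
  rw [Fin.lt_def] at a1 a2
  have hl := l.isLt
  let a : Fin n := ⟨m - 1, by omega⟩
  let b : Fin n := ⟨m + 1, by omega⟩
  have ha := hmin a (by simp only [Finset.mem_Icc, Fin.le_def, a]; omega)
  have hb := hmin b (by simp only [Finset.mem_Icc, Fin.le_def, b]; omega)
  have nam : (π a : ℕ) ≠ π m := fun e => by
    have := congrArg Fin.val (π.injective (Fin.ext e)); simp only [a] at this; omega
  have nbm : (π b : ℕ) ≠ π m := fun e => by
    have := congrArg Fin.val (π.injective (Fin.ext e)); simp only [b] at this; omega
  have nab : (π a : ℕ) ≠ π b := fun e => by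
    have := congrArg Fin.val (π.injective (Fin.ext e)); simp only [a, b] at this; omega
  have := h a m b (by simp only [a]; omega) (by simp only [b])
  rw [Fin.le_def] at ha hb
  omega

theorem kc_step {k n : ℕ} (hk : k ≤ 2) (π σ : Equiv.Perm (Fin (n + 1)))
    (hσ : IsKConvex k ⇑σ) (v : Fin (n + 1))
    (ih : ∀ w < v, π.symm w = σ.symm w)
    (hb : (π.symm v ≤ π.symm (Fin.last n)) ↔ (σ.symm v ≤ σ.symm (Fin.last n))) :
    (σ.symm v ≤ σ.symm (Fin.last n) → σ.symm v ≤ π.symm v) ∧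
    (¬ σ.symm v ≤ σ.symm (Fin.last n) → π.symm v ≤ σ.symm v) := by
  have key : ∀ p, p = π.symm v → p ≠ σ.symm v → v ≤ σ p := by
    intro p hp hne
    by_contra hlt
    have := ih _ (not_le.1 hlt)
    rw [Equiv.symm_apply_apply, hp] at this
    exact hlt (by rw [hp, π.symm.injective this])
  constructor
  · intro hle
    by_contra hlt
    rw [not_le] at hlt
    have h1 := key _ rfl hlt.ne
    have h1' : v < σ (π.symm v) := lt_of_le_of_ne h1 (fun e => hlt.ne (by
      rw [Equiv.eq_symm_apply]; exact e.symm))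
    have hv : v < Fin.last n := lt_of_lt_of_le h1' (Fin.le_last _)
    have hlt2 : σ.symm v < σ.symm (Fin.last n) :=
      lt_of_le_of_ne hle (fun e => hv.ne (σ.symm.injective e))
    exact kc_no_valley hk σ hσ _ _ _ hlt hlt2 (by simpa using h1') (by simpa using hv)
  · intro hle
    by_contra hlt
    rw [not_le] at hlt hle
    have h1 := key _ rfl hlt.ne'
    have h1' : v < σ (π.symm v) := lt_of_le_of_ne h1 (fun e => hlt.ne' (by
      rw [Equiv.eq_symm_apply]; exact e.symm))
    have hv : v < Fin.last n := lt_of_lt_of_le h1' (Fin.le_last _)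
    exact kc_no_valley hk σ hσ _ _ _ hle hlt (by simpa using hv) (by simpa using h1')

/-- for `k ∈ {1, 2}` and `n ≥ 1`, `f_k(n) ≤ 2^(n-1)`. -/
theorem kconvex_perm_upper_bound (k : ℕ) (hk : k = 1 ∨ k = 2) (n : ℕ) (hn : 1 ≤ n) :
    fk k n ≤ 2 ^ (n - 1) := by
  have hk2 : k ≤ 2 := by omega
  obtain ⟨n, rfl⟩ : ∃ m, n = m + 1 := ⟨n - 1, by omega⟩
  let F : {π : Equiv.Perm (Fin (n + 1)) // IsKConvex k ⇑π} → (Fin n → Bool) :=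
    fun π v => decide (π.1.symm v.castSucc ≤ π.1.symm (Fin.last n))
  have hF : Function.Injective F := by
    rintro ⟨π, hπ⟩ ⟨σ, hσ⟩ he
    have hb : ∀ v, (π.symm v ≤ π.symm (Fin.last n)) ↔ (σ.symm v ≤ σ.symm (Fin.last n)) := by
      intro v
      induction v using Fin.lastCases with
      | last => simp
      | cast v => simpa [F] using congrFun he v
    have hs : ∀ v, π.symm v = σ.symm v := by
      intro v
      induction v using WellFoundedLT.induction with
      | ind v ih =>
        have A := kc_step hk2 π σ hσ v ih (hb v)
        have B := kc_step hk2 σ π hπ v (fun w hw => (ih w hw).symm) (hb v).symm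
        by_cases c : σ.symm v ≤ σ.symm (Fin.last n)
        · exact le_antisymm (B.1 ((hb v).2 c)) (A.1 c)
        · exact le_antisymm (A.2 c) (B.2 (fun d => c ((hb v).1 d)))
    have : π.symm = σ.symm := Equiv.ext hs
    exact Subtype.ext (Equiv.symm_bijective.injective this)
  have := Nat.card_le_card_of_injective F hF
  simpa [fk] using this
end

section
/- Let k ∈ {0, 1, 2}, let n ≥ 2, and let π be a k-convex permutation of [n]. Let i₀ be the index with π(i₀) = n, and define σ on [n−1] by σ(i) = π(i) for i < i₀ and σ(i) = π(i+1) for i₀ ≤ i ≤ n−1 (i.e., delete the entry n from the one-line notation of π). Then σ is a k-convex permutation of [n−1]. -/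
/-- let `k ∈ {0,1,2}`, `n ≥ 2`, and `π` a `k`-convex permutation of `[n]`.
If `i₀` is the position of the maximal entry `n` (0-indexed value `n - 1`), and `σ` is
obtained from `π` by deleting that entry, then `σ` is a `k`-convex permutation of
`[n-1]`. -/
theorem delete_max_kconvex (k n : ℕ) (hk : k ≤ 2) (hn : 2 ≤ n)
    (π : Equiv.Perm (Fin n)) (hπ : IsKConvex k ⇑π)
    (i₀ : Fin n) (hi₀ : (π i₀ : ℕ) = n - 1)
    (σ : Fin (n - 1) → Fin (n - 1))
    (hσ : ∀ i : Fin (n - 1), (σ i : ℕ) =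
      if (i : ℕ) < (i₀ : ℕ) then (π ⟨(i : ℕ), by have := i.2; omega⟩ : ℕ)
      else (π ⟨(i : ℕ) + 1, by have := i.2; omega⟩ : ℕ)) :
    Function.Bijective σ ∧ IsKConvex k σ := by
  constructor
  · rw [← Finite.injective_iff_bijective]
    intro a b hab
    have h : (σ a : ℕ) = (σ b : ℕ) := by rw [hab]
    have ha := a.2
    have hb := b.2
    rw [hσ a, hσ b] at h
    apply Fin.ext
    split_ifs at h with h1 h2 h2 <;>
    · have h3 := congrArg Fin.val (π.injective (Fin.ext h))
      simp only at h3
      omega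
  · intro i j l hij hjl
    have hl := l.2
    have hmax : ∀ x : Fin n, (π x : ℕ) ≤ (π i₀ : ℕ) := by
      intro x
      have := (π x).2
      omega
    rw [hσ i, hσ j, hσ l]
    split_ifs with h1 h2 h3 h3 h2 h3 h3 <;> try omega
    · exact hπ _ _ _ hij hjl
    · have e : i₀ = ⟨(l : ℕ), by omega⟩ := Fin.ext (by simp only; omega)
      have h := hπ ⟨(i : ℕ), by omega⟩ ⟨(j : ℕ), by omega⟩ i₀ hij (by simp only; omega)
      have h' := hmax ⟨(l : ℕ) + 1, by omega⟩
      omega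
    · have h := hπ i₀ ⟨(j : ℕ) + 1, by omega⟩ ⟨(l : ℕ) + 1, by omega⟩
        (by simp only; omega) (by simp only; omega)
      have h' := hmax ⟨(i : ℕ), by omega⟩
      omega
    · exact hπ _ _ _ (by simp only; omega) (by simp only; omega)
end

section
/- For k ∈ {1, 2} and every integer n ≥ 1, the number f_k(n) of k-convex permutations of [n] satisfies f_k(n) ≤ f_k(n+1) ≤ 2·f_k(n). -/
/-- Insert the new minimum on the left. -/
def insL {n : ℕ} (π : Equiv.Perm (Fin n)) : Equiv.Perm (Fin (n + 1)) :=
  Equiv.Perm.decomposeFin.symm (0, π)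

/-- Insert the new minimum on the left or on the right. -/
def ins {n : ℕ} (b : Bool) (π : Equiv.Perm (Fin n)) : Equiv.Perm (Fin (n + 1)) :=
  if b then insL π else (finRotate (n + 1)).trans (insL π)

theorem insL_zero {n : ℕ} (π : Equiv.Perm (Fin n)) : insL π 0 = 0 := by
  simp [insL]

theorem insL_succ {n : ℕ} (π : Equiv.Perm (Fin n)) (i : Fin n) :
    insL π i.succ = (π i).succ := by
  simp [insL]

theorem ins_true_zero {n : ℕ} (π : Equiv.Perm (Fin n)) : ins true π 0 = 0 := by
  simp [ins, insL_zero]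

theorem ins_true_succ {n : ℕ} (π : Equiv.Perm (Fin n)) (i : Fin n) :
    ins true π i.succ = (π i).succ := by
  simp [ins, insL_succ]

theorem ins_false_last {n : ℕ} (π : Equiv.Perm (Fin n)) : ins false π (Fin.last n) = 0 := by
  simp [ins, insL_zero]

theorem ins_false_castSucc {n : ℕ} (π : Equiv.Perm (Fin n)) (i : Fin n) :
    ins false π i.castSucc = (π i).succ := by
  simp [ins, insL_succ]

theorem ins_inj {n : ℕ} (hn : 1 ≤ n) {b b' : Bool} {π π' : Equiv.Perm (Fin n)}
    (h : ins b π = ins b' π') : π = π' := by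
  have key : ∀ τ τ' : Equiv.Perm (Fin n), ins true τ ≠ ins false τ' := by
    intro τ τ' h
    have h1 := ins_true_zero τ
    have h2 := ins_false_last τ'
    rw [h] at h1
    have h3 := (ins false τ').injective (h1.trans h2.symm)
    have := congrArg Fin.val h3
    simp at this
    omega
  cases b <;> cases b'
  · ext i
    have := ins_false_castSucc π i
    rw [h, ins_false_castSucc] at this
    rw [Fin.succ_injective _ this]
  · exact absurd h.symm (key _ _)
  · exact absurd h (key _ _)
  · ext i
    have := ins_true_succ π i
    rw [h, ins_true_succ] at this
    rw [Fin.succ_injective _ this]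

theorem insL_surj {n : ℕ} (σ : Equiv.Perm (Fin (n + 1))) (h : σ 0 = 0) :
    ∃ π, σ = insL π := by
  obtain ⟨⟨p, π⟩, rfl⟩ := Equiv.Perm.decomposeFin.symm.surjective σ
  simp at h
  subst h
  exact ⟨π, rfl⟩

theorem ins_surj {n : ℕ} (σ : Equiv.Perm (Fin (n + 1))) (h : σ 0 = 0 ∨ σ (Fin.last n) = 0) :
    ∃ b π, σ = ins b π := by
  rcases h with h | h
  · obtain ⟨π, hπ⟩ := insL_surj σ h
    exact ⟨true, π, by simp [ins, hπ]⟩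
  · obtain ⟨π, hπ⟩ := insL_surj ((finRotate (n + 1)).symm.trans σ) (by
      have : (finRotate (n + 1)).symm 0 = Fin.last n := by
        rw [Equiv.symm_apply_eq]; simp
      simp only [Equiv.trans_apply, this, h])
    refine ⟨false, π, ?_⟩
    simp only [ins, ← hπ]
    ext i
    simp

theorem conv_of_ins {k n : ℕ} (b : Bool) (π : Equiv.Perm (Fin n))
    (h : IsKConvex k ⇑(ins b π)) : IsKConvex k ⇑π := by
  intro i j l hij hjl
  cases b
  · have := h i.castSucc j.castSucc l.castSucc (by simpa using hij) (by simpa using hjl)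
    simp only [ins_false_castSucc, Fin.val_succ] at this
    push_cast at this
    linarith
  · have := h i.succ j.succ l.succ (by simpa using hij) (by simpa using hjl)
    simp only [ins_true_succ, Fin.val_succ] at this
    push_cast at this
    linarith

theorem end_zero {k n : ℕ} (hk : k ≤ 2) (σ : Equiv.Perm (Fin (n + 1)))
    (h : IsKConvex k ⇑σ) : σ 0 = 0 ∨ σ (Fin.last n) = 0 := by
  obtain ⟨j, hj⟩ := σ.surjective 0
  by_cases h0 : j = 0
  · left; rw [h0] at hj; exact hj
  by_cases h1 : j = Fin.last n
  · right; rw [h1] at hj; exact hj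
  exfalso
  have h0' : (j : ℕ) ≠ 0 := fun e => h0 (Fin.ext e)
  have h1' : (j : ℕ) ≠ n := fun e => h1 (Fin.ext e)
  have := j.isLt
  let i : Fin (n + 1) := ⟨j - 1, by omega⟩
  let l : Fin (n + 1) := ⟨j + 1, by omega⟩
  have hc := h i j l (by simp [i]; omega) (by simp [l])
  have a1 : (σ i : ℕ) ≠ σ j := fun e => by
    have := congrArg Fin.val (σ.injective (Fin.ext e)); simp [i] at this; omega
  have a2 : (σ l : ℕ) ≠ σ j := fun e => by
    have := congrArg Fin.val (σ.injective (Fin.ext e)); simp [l] at this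
  have a3 : (σ i : ℕ) ≠ σ l := fun e => by
    have := congrArg Fin.val (σ.injective (Fin.ext e)); simp only [i, l] at this; omega
  have hz : (σ j : ℕ) = 0 := by rw [hj]; rfl
  omega

theorem end_ok {k n : ℕ} (hk : k ≤ 2) (hk1 : 1 ≤ k) (π : Equiv.Perm (Fin (n + 2)))
    (h : IsKConvex k ⇑π) :
    (π 1 : ℕ) ≤ 2 * (π 0 : ℕ) + k + 1 ∨
    (π (Fin.last n).castSucc : ℕ) ≤ 2 * (π (Fin.last (n + 1)) : ℕ) + k + 1 := by
  by_contra! hcon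
  obtain ⟨c1, c2⟩ := hcon
  have inj : ∀ a b : Fin (n + 2), (π a : ℕ) = π b → (a : ℕ) = b := fun a b e =>
    congrArg Fin.val (π.injective (Fin.ext e))
  have b1 := (π 1).isLt
  have hsm : ∃ j : Fin (n + 2), (j : ℕ) ≠ 0 ∧ (j : ℕ) ≠ n + 1 ∧ (π j : ℕ) ≤ 2 := by
    obtain ⟨x, hx⟩ := π.surjective ⟨0, by omega⟩
    obtain ⟨y, hy⟩ := π.surjective ⟨1, by omega⟩
    obtain ⟨z, hz⟩ := π.surjective ⟨2, by omega⟩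
    have hxy : (x : ℕ) ≠ y := fun e => by rw [Fin.ext e, hy] at hx; simp at hx
    have hxz : (x : ℕ) ≠ z := fun e => by rw [Fin.ext e, hz] at hx; simp at hx
    have hyz : (y : ℕ) ≠ z := fun e => by rw [Fin.ext e, hz] at hy; simp at hy
    by_contra! hh
    have e1 := hh x
    have e2 := hh y
    have e3 := hh z
    rw [hx] at e1
    rw [hy] at e2
    rw [hz] at e3
    simp at e1 e2 e3
    omega
  let S : Finset (Fin (n + 2)) := Finset.univ.filter fun j => (j : ℕ) ≠ 0 ∧ (j : ℕ) ≠ n + 1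
  obtain ⟨w, w0, w1, w2⟩ := hsm
  obtain ⟨j, hjS, hmin⟩ := S.exists_min_image (fun j => (π j : ℕ)) ⟨w, Finset.mem_filter.2 ⟨Finset.mem_univ _, w0, w1⟩⟩
  have hjw := hmin w (Finset.mem_filter.2 ⟨Finset.mem_univ _, w0, w1⟩)
  simp only [S, Finset.mem_filter, Finset.mem_univ, true_and] at hjS hmin
  obtain ⟨j0, j1⟩ := hjS
  have jlt := j.isLt
  have jne1 : (j : ℕ) ≠ 1 := fun e => by
    have : j = 1 := Fin.ext (by simpa using e)
    rw [this] at hjw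
    omega
  have jnen : (j : ℕ) ≠ n := fun e => by
    have : j = (Fin.last n).castSucc := Fin.ext (by simpa using e)
    rw [this] at hjw
    omega
  let i : Fin (n + 2) := ⟨j - 1, by omega⟩
  let l : Fin (n + 2) := ⟨j + 1, by omega⟩
  have hi : (i : ℕ) = j - 1 := rfl
  have hl : (l : ℕ) = j + 1 := rfl
  have hc := h i j l (by omega) (by omega)
  have a1 : (π i : ℕ) ≠ π j := fun e => by have := inj _ _ e; omega
  have a2 : (π l : ℕ) ≠ π j := fun e => by have := inj _ _ e; omega
  have a3 : (π i : ℕ) ≠ π l := fun e => by have := inj _ _ e; omega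
  have m1 := hmin i (by omega)
  have m2 := hmin l (by omega)
  omega

theorem ins_ok {k n : ℕ} (hn : 1 ≤ n) (hk : k ≤ 2) (hk1 : 1 ≤ k) (π : Equiv.Perm (Fin n))
    (h : IsKConvex k ⇑π) : ∃ b, IsKConvex k ⇑(ins b π) := by
  obtain _ | _ | n := n
  · omega
  · exact ⟨true, fun i j l _ _ => by omega⟩
  rcases end_ok hk hk1 π h with H | H
  · refine ⟨true, fun i j l hij hjl => ?_⟩
    obtain ⟨j, rfl⟩ := Fin.exists_succ_eq.2 (show j ≠ 0 by rintro rfl; simp at hij)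
    obtain ⟨l, rfl⟩ := Fin.exists_succ_eq.2 (show l ≠ 0 by rintro rfl; simp at hjl)
    by_cases hi : i = 0
    · subst hi
      have e1 : j = 0 := Fin.ext (by simp at hij ⊢; omega)
      have e2 : l = 1 := Fin.ext (by simp [e1] at hjl ⊢; omega)
      subst e1 e2
      rw [ins_true_zero, ins_true_succ, ins_true_succ]
      simp only [Fin.val_succ, Fin.val_zero]
      push_cast
      omega
    · obtain ⟨i, rfl⟩ := Fin.exists_succ_eq.2 hi
      have := h i j l (by simpa using hij) (by simpa using hjl)
      simp only [ins_true_succ, Fin.val_succ]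
      push_cast
      linarith
  · refine ⟨false, fun i j l hij hjl => ?_⟩
    have := l.isLt
    obtain ⟨j, rfl⟩ := Fin.exists_castSucc_eq.2
      (show j ≠ Fin.last _ by rintro rfl; simp at hjl; omega)
    obtain ⟨i, rfl⟩ := Fin.exists_castSucc_eq.2
      (show i ≠ Fin.last _ by rintro rfl; simp at hij; omega)
    by_cases hi : l = Fin.last _
    · subst hi
      have e1 : j = Fin.last _ := Fin.ext (by simp at hjl ⊢; omega)
      have e2 : i = (Fin.last _).castSucc := Fin.ext (by simp [e1] at hij ⊢; omega)
      subst e1 e2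
      rw [ins_false_last, ins_false_castSucc, ins_false_castSucc]
      simp only [Fin.val_succ, Fin.val_zero]
      push_cast
      omega
    · obtain ⟨l, rfl⟩ := Fin.exists_castSucc_eq.2 hi
      have := h i j l (by simpa using hij) (by simpa using hjl)
      simp only [ins_false_castSucc, Fin.val_succ]
      push_cast
      linarith

/-- for `k ∈ {1, 2}` and `n ≥ 1`, `f_k(n) ≤ f_k(n+1) ≤ 2·f_k(n)`. -/
theorem kconvex_perm_growth (k : ℕ) (hk : k = 1 ∨ k = 2) (n : ℕ) (hn : 1 ≤ n) :
    fk k n ≤ fk k (n + 1) ∧ fk k (n + 1) ≤ 2 * fk k n := by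
  constructor
  · choose b hb using fun π : {π : Equiv.Perm (Fin n) // IsKConvex k ⇑π} =>
      ins_ok hn (by omega) (by omega) π.1 π.2
    refine Nat.card_le_card_of_injective
      (fun π => (⟨ins (b π) π.1, hb π⟩ : {π : Equiv.Perm (Fin (n + 1)) // IsKConvex k ⇑π})) ?_
    intro π π' h
    exact Subtype.ext (ins_inj hn (congrArg Subtype.val h))
  · choose b p hp using fun σ : {π : Equiv.Perm (Fin (n + 1)) // IsKConvex k ⇑π} =>
      ins_surj σ.1 (end_zero (by omega) σ.1 σ.2)
    have key : fk k (n + 1) ≤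
        Nat.card (Bool × {π : Equiv.Perm (Fin n) // IsKConvex k ⇑π}) := by
      refine Nat.card_le_card_of_injective
        (fun σ => (b σ, ⟨p σ, conv_of_ins (b σ) (p σ) (hp σ ▸ σ.2)⟩)) ?_
      intro σ σ' h
      simp only [Prod.mk.injEq, Subtype.mk.injEq] at h
      exact Subtype.ext (by rw [hp σ, hp σ', h.1, h.2])
    rw [Nat.card_prod] at key
    simpa [fk] using key
end

section
/- Let k ∈ {0, 1, 2}, let n ≥ 4, and let π be a k-convex permutation of [n]. Then exactly one of the following six conditions holds: (i) π(1) = 1 and π(2) = 2; (ii) π(n) = 1 and π(n−1) = 2; (iii) π(1) = 1 and π(2) = 3; (iv) π(n) = 1 and π(n−1) = 3; (v) π(1) = 2 and π(2) = 3; (vi) π(n) = 2 and π(n−1) = 3. -/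
theorem kconvex_aux (n : ℕ) (hn : 4 ≤ n) (a : ℕ → ℕ)
    (inj : ∀ i j, i < n → j < n → a i = a j → i = j)
    (surj : ∀ v, v < n → ∃ i, i < n ∧ a i = v)
    (conv : ∀ i, i + 2 < n → a i + a (i + 2) ≤ 2 + 2 * a (i + 1)) :
    (a 0 = 0 ∧ a 1 = 1) ∨ (a (n-1) = 0 ∧ a (n-2) = 1) ∨ (a 0 = 0 ∧ a 1 = 2) ∨
    (a (n-1) = 0 ∧ a (n-2) = 2) ∨ (a 0 = 1 ∧ a 1 = 2) ∨ (a (n-1) = 1 ∧ a (n-2) = 2) := by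
  obtain ⟨p, hp, hp0⟩ := surj 0 (by omega)
  obtain ⟨q, hq, hq1⟩ := surj 1 (by omega)
  obtain ⟨r, hr, hr2⟩ := surj 2 (by omega)
  have val : ∀ i, i < n → (a i = 0 ∧ i = p) ∨ (a i = 1 ∧ i = q) ∨ (a i = 2 ∧ i = r) ∨ 3 ≤ a i := by
    intro i hi
    have h0 := inj i p hi hp
    have h1 := inj i q hi hq
    have h2 := inj i r hi hr
    omega
  have key : ∀ x, x < n → x = 0 ∨ x = n - 1 ∨
      ∃ i, x = i + 1 ∧ i + 2 < n ∧ a i + a (i + 2) ≤ 2 + 2 * a x ∧ a i ≠ a (i + 2) := by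
    intro x hx
    by_cases h0 : x = 0
    · exact Or.inl h0
    by_cases h1 : x = n - 1
    · exact Or.inr (Or.inl h1)
    obtain ⟨i, rfl⟩ : ∃ i, x = i + 1 := ⟨x - 1, by omega⟩
    refine Or.inr (Or.inr ⟨i, rfl, by omega, conv i (by omega), fun h => ?_⟩)
    have := inj i (i + 2) (by omega) (by omega) h
    omega
  have hpq : p ≠ q := by rintro rfl; omega
  have hpr : p ≠ r := by rintro rfl; omega
  have hqr : q ≠ r := by rintro rfl; omega
  have P : p = 0 ∨ p = n - 1 := by
    rcases key p hp with h | h | ⟨i, h, hi, h1, h2⟩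
    · omega
    · omega
    · have := val i (by omega)
      have := val (i + 2) (by omega)
      omega
  have Q : q = 0 ∨ q = n - 1 ∨ q = p + 1 ∨ p = q + 1 := by
    rcases key q hq with h | h | ⟨i, h, hi, h1, h2⟩
    · omega
    · omega
    · have := val i (by omega)
      have := val (i + 2) (by omega)
      omega
  have R : r = 0 ∨ r = n - 1 ∨ r = p + 1 ∨ p = r + 1 ∨ r = q + 1 ∨ q = r + 1 := by
    rcases key r hr with h | h | ⟨i, h, hi, h1, h2⟩
    · omega
    · omega
    · have := val i (by omega)
      have := val (i + 2) (by omega)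
      omega
  have fin : (p = 0 ∧ q = 1) ∨ (p = n-1 ∧ q = n-2) ∨ (p = 0 ∧ r = 1) ∨
    (p = n-1 ∧ r = n-2) ∨ (q = 0 ∧ r = 1) ∨ (q = n-1 ∧ r = n-2) := by omega
  rcases fin with ⟨h, h'⟩ | ⟨h, h'⟩ | ⟨h, h'⟩ | ⟨h, h'⟩ | ⟨h, h'⟩ | ⟨h, h'⟩ <;>
    simp only [h, h'] at hp0 hq1 hr2 <;> omega

/-- for `k ∈ {0,1,2}`, `n ≥ 4`, and a `k`-convex permutation `π` of
`[n]`, exactly one of the six conditions holds: `π` begins with `12`, `13`, or `23`,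
or ends with `21`, `31`, or `32` (conditions stated on the first two or last two
entries, 1-indexed values shifted down by one). -/
theorem kconvex_endpoints (k : ℕ) (hk : k ≤ 2) (n : ℕ) (hn : 4 ≤ n)
    (π : Equiv.Perm (Fin n)) (hπ : IsKConvex k ⇑π) :
    ∃! j : Fin 6,
      ![ (π ⟨0, by omega⟩ : ℕ) = 0 ∧ (π ⟨1, by omega⟩ : ℕ) = 1,
         (π ⟨n - 1, by omega⟩ : ℕ) = 0 ∧ (π ⟨n - 2, by omega⟩ : ℕ) = 1,
         (π ⟨0, by omega⟩ : ℕ) = 0 ∧ (π ⟨1, by omega⟩ : ℕ) = 2,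
         (π ⟨n - 1, by omega⟩ : ℕ) = 0 ∧ (π ⟨n - 2, by omega⟩ : ℕ) = 2,
         (π ⟨0, by omega⟩ : ℕ) = 1 ∧ (π ⟨1, by omega⟩ : ℕ) = 2,
         (π ⟨n - 1, by omega⟩ : ℕ) = 1 ∧ (π ⟨n - 2, by omega⟩ : ℕ) = 2 ] j := by
  have h3 : ∀ i (hi : i < n) j (hj : j < n), (π ⟨i, hi⟩ : ℕ) = (π ⟨j, hj⟩ : ℕ) → i = j := by
    intro i hi j hj h
    have := π.injective (Fin.ext h)
    simpa using this
  have main := kconvex_aux n hn (fun i => if h : i < n then (π ⟨i, h⟩ : ℕ) else 0)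
    (by
      intro i j hi hj h
      simp only [hi, hj, dif_pos] at h
      exact h3 i hi j hj h)
    (by
      intro v hv
      refine ⟨(π.symm ⟨v, hv⟩ : ℕ), (π.symm ⟨v, hv⟩).2, ?_⟩
      simp)
    (by
      intro i hi
      have := hπ ⟨i, by omega⟩ ⟨i + 1, by omega⟩ ⟨i + 2, hi⟩ rfl rfl
      have e0 : i < n := by omega
      have e1 : i + 1 < n := by omega
      simp only [hi, e0, e1, dif_pos]
      omega)
  have e0 : 0 < n := by omega
  have e1 : 1 < n := by omega
  have e2 : n - 1 < n := by omega
  have e3 : n - 2 < n := by omega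
  simp only [e0, e1, e2, e3, dif_pos] at main
  have i1 := h3 0 e0 (n - 1) e2
  have i2 := h3 1 e1 (n - 2) e3
  have i3 := h3 0 e0 (n - 2) e3
  have i4 := h3 1 e1 (n - 1) e2
  generalize (π ⟨0, _⟩ : ℕ) = a at *
  generalize (π ⟨1, _⟩ : ℕ) = b at *
  generalize (π ⟨n - 1, _⟩ : ℕ) = c at *
  generalize (π ⟨n - 2, _⟩ : ℕ) = d at *
  rcases main with h | h | h | h | h | h
  · refine ⟨0, h, fun y hy => ?_⟩
    fin_cases y <;> simp at hy ⊢ <;> omega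
  · refine ⟨1, h, fun y hy => ?_⟩
    fin_cases y <;> simp at hy ⊢ <;> omega
  · refine ⟨2, h, fun y hy => ?_⟩
    fin_cases y <;> simp at hy ⊢ <;> omega
  · refine ⟨3, h, fun y hy => ?_⟩
    fin_cases y <;> simp at hy ⊢ <;> omega
  · refine ⟨4, h, fun y hy => ?_⟩
    fin_cases y <;> simp at hy ⊢ <;> omega
  · refine ⟨5, h, fun y hy => ?_⟩
    fin_cases y <;> simp at hy ⊢ <;> omega
end

section
/- The number f_0(n) of 0-convex permutations of [n] satisfies: f_0(1) = 1, f_0(2) = 2, f_0(3) = 4, f_0(4) = 6, and f_0(n) = 8 for every n ≥ 5. -/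
structure CSeq (n : ℕ) (F : ℕ → ℤ) : Prop where
  conc : ∀ i, i + 2 < n → F i + F (i + 2) ≤ 2 * F (i + 1)
  inj : ∀ i j, i < n → j < n → F i = F j → i = j
  nn : ∀ i, i < n → 0 ≤ F i
  lt : ∀ i, i < n → F i < n
  surj : ∀ v : ℤ, 0 ≤ v → v < n → ∃ i, i < n ∧ F i = v

theorem CSeq.rev {n : ℕ} {F : ℕ → ℤ} (h : CSeq n F) : CSeq n (fun i => F (n - 1 - i)) where
  conc i hi := by
    have := h.conc (n - 1 - (i + 2)) (by omega)
    rw [show n - 1 - (i + 2) + 2 = n - 1 - i by omega,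
      show n - 1 - (i + 2) + 1 = n - 1 - (i + 1) by omega] at this
    show F (n - 1 - i) + F (n - 1 - (i + 2)) ≤ 2 * F (n - 1 - (i + 1))
    linarith
  inj i j hi hj e := by
    have := h.inj _ _ (by omega) (by omega) e
    omega
  nn i hi := h.nn _ (by omega)
  lt i hi := h.lt _ (by omega)
  surj v h0 h1 := by
    obtain ⟨i, hi, e⟩ := h.surj v h0 h1
    exact ⟨n - 1 - i, by omega, by
      show F (n - 1 - (n - 1 - i)) = v
      rw [show n - 1 - (n - 1 - i) = i by omega]; exact e⟩

theorem CSeq.ub {n : ℕ} {F : ℕ → ℤ} (h : CSeq n F) (a : ℕ) (d : ℤ)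
    (hd : F (a + 1) - F a ≤ d) (t : ℕ) (ht : a + t < n) : F (a + t) ≤ F a + t * d := by
  have key : ∀ t, a + t + 1 < n → F (a + t + 1) - F (a + t) ≤ d := by
    intro t
    induction t with
    | zero => intro _; simpa using hd
    | succ t ih =>
      intro h1
      have := ih (by omega)
      have := h.conc (a + t) (by omega)
      rw [show a + (t + 1) + 1 = a + t + 2 by omega, show a + (t + 1) = a + t + 1 by omega]
      linarith
  induction t with
  | zero => simp
  | succ t ih =>
    have h1 := ih (by omega)
    have h2 := key t (by omega)
    rw [show a + (t + 1) = a + t + 1 by omega]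
    push_cast
    linarith

theorem CSeq.ub' {n : ℕ} {F : ℕ → ℤ} (h : CSeq n F) (a b : ℕ) (d : ℤ)
    (hd : F b - F (b + 1) ≤ d) (hab : a ≤ b) (hb : b + 1 < n) :
    F a ≤ F (b + 1) + (b + 1 - a) * d := by
  have := h.rev.ub (n - 1 - (b + 1)) d (by
    rw [show n - 1 - (n - 1 - (b + 1) + 1) = b by omega,
      show n - 1 - (n - 1 - (b + 1)) = b + 1 by omega]
    exact hd) (b + 1 - a) (by omega)
  rw [show n - 1 - (n - 1 - (b + 1) + (b + 1 - a)) = a by omega,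
      show n - 1 - (n - 1 - (b + 1)) = b + 1 by omega] at this
  rw [Nat.cast_sub (by omega)] at this
  push_cast at this
  exact this

theorem CSeq.mid {n : ℕ} {F : ℕ → ℤ} (h : CSeq n F) (i j k : ℕ)
    (hij : i < j) (hjk : j < k) (hk : k < n) : F i < F j ∨ F k < F j := by
  obtain ⟨b, rfl⟩ : ∃ b, j = b + 1 := ⟨j - 1, by omega⟩
  have hne1 : F i ≠ F (b + 1) := fun e => by
    have := h.inj _ _ (by omega) (by omega) e; omega
  have hne2 : F k ≠ F (b + 1) := fun e => by
    have := h.inj _ _ (by omega) (by omega) e; omega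
  rcases le_total (F b) (F (b + 1)) with h1 | h1
  · left
    have := h.ub' i b 0 (by linarith) (by omega) (by omega)
    simp at this
    omega
  · right
    have h2 := h.conc b (by omega)
    have := h.ub (b + 1) 0 (by rw [show b + 1 + 1 = b + 2 by omega]; linarith)
      (k - (b + 1)) (by omega)
    rw [show b + 1 + (k - (b + 1)) = k by omega] at this
    simp at this
    omega

def hfun (n : ℕ) (c : Fin 4) (i : ℕ) : ℕ :=
  match c with
  | 0 => i
  | 1 => if i = 0 then 0 else n - i
  | 2 => if i = 0 then 0 else if i = n - 1 then 1 else i + 1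
  | 3 => if 2 * i < n then 2 * i else 2 * (n - 1 - i) + 1

theorem CSeq.ne {n : ℕ} {F : ℕ → ℤ} (h : CSeq n F) (i j : ℕ) (hi : i < n) (hj : j < n)
    (hij : i ≠ j) : F i ≠ F j := fun e => hij (h.inj i j hi hj e)

/-- the next unused value sits at an end of the unused interval -/
theorem CSeq.next {n : ℕ} {F : ℕ → ℤ} (h : CSeq n F) (a b : ℕ) (v : ℕ) (hab : a ≤ b) (hb : b < n)
    (hv : v < n) (hva : (v : ℤ) ≤ F a) (hvb : (v : ℤ) ≤ F b)
    (ho : ∀ i, i < n → (i < a ∨ b < i) → F i < v) : F a = v ∨ F b = v := by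
  obtain ⟨i, hi, e⟩ := h.surj v (by omega) (by omega)
  by_contra! hc
  have h1 : a ≤ i := by
    by_contra hx
    have := ho i hi (by omega); omega
  have h2 : i ≤ b := by
    by_contra hx
    have := ho i hi (by omega); omega
  have h3 : a ≠ i := by rintro rfl; exact hc.1 e
  have h4 : i ≠ b := by rintro rfl; exact hc.2 e
  have := h.mid a i b (by omega) (by omega) hb
  omega

/-- injective with the first values used and an upper bound forces the value -/
theorem CSeq.force {n : ℕ} {F : ℕ → ℤ} (h : CSeq n F) (p v : ℕ) (hp : p < n)
    (hle : F p ≤ v) (hu : ∀ w, w < v → ∃ q, q < n ∧ q ≠ p ∧ F q = w) : F p = v := by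
  by_contra hne
  have h0 := h.nn p hp
  obtain ⟨q, hq, hqp, e⟩ := hu (F p).toNat (by omega)
  exact hqp (h.inj q p hq hp (by omega))

theorem CSeq.classify {n : ℕ} {F : ℕ → ℤ} (hn : 5 ≤ n) (h : CSeq n F) (h0 : F 0 = 0) :
    ∃ c : Fin 4, ∀ i, i < n → F i = hfun n c i := by
  have hnn := h.nn
  have n01 := h.ne 0 1 (by omega) (by omega) (by omega)
  have n02 := h.ne 0 2 (by omega) (by omega) (by omega)
  have n0l := h.ne 0 (n-1) (by omega) (by omega) (by omega)
  have n0m := h.ne 0 (n-2) (by omega) (by omega) (by omega)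
  have n12 := h.ne 1 2 (by omega) (by omega) (by omega)
  have n1l := h.ne 1 (n-1) (by omega) (by omega) (by omega)
  have n1m := h.ne 1 (n-2) (by omega) (by omega) (by omega)
  have n2l := h.ne 2 (n-1) (by omega) (by omega) (by omega)
  have n2m := h.ne 2 (n-2) (by omega) (by omega) (by omega)
  have nml := h.ne (n-2) (n-1) (by omega) (by omega) (by omega)
  have p1 := hnn 1 (by omega)
  have p2 := hnn 2 (by omega)
  have pl := hnn (n-1) (by omega)
  have pm := hnn (n-2) (by omega)
  rcases h.next 1 (n-1) 1 (by omega) (by omega) (by omega) (by omega) (by omega)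
    (by intro i hi hh; obtain rfl : i = 0 := by omega
        omega) with hA | hB
  · refine ⟨0, ?_⟩
    intro i
    induction i using Nat.strong_induction_on with
    | _ i ih =>
      intro hi
      have hub := h.ub 0 1 (by simp; omega) i (by omega)
      simp only [hfun] at ih ⊢
      apply h.force i i hi (by simp at hub; omega)
      intro w hw
      exact ⟨w, by omega, by omega, ih w hw (by omega)⟩
  rcases h.next 1 (n-2) 2 (by omega) (by omega) (by omega) (by omega) (by omega)
    (by intro i hi hh
        have : i = 0 ∨ i = n - 1 := by omega
        rcases this with rfl | rfl <;> omega) with hC | hD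
  swap
  · refine ⟨1, ?_⟩
    have key : ∀ j, j + 1 < n → F (n - 1 - j) = (j + 1 : ℕ) := by
      intro j
      induction j using Nat.strong_induction_on with
      | _ j ih =>
        intro hj
        have hub := h.ub' (n - 1 - j) (n - 2) 1
        rw [show n - 2 + 1 = n - 1 by omega] at hub
        rcases Nat.eq_zero_or_pos j with rfl | hj0
        · simpa using hB
        have hub := hub (by omega) (by omega) (by omega)
        apply h.force _ _ (by omega) (by omega)
        intro w hw
        rcases Nat.eq_zero_or_pos w with rfl | hw0
        · exact ⟨0, by omega, by omega, by simpa using h0⟩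
        · refine ⟨n - 1 - (w - 1), by omega, by omega, ?_⟩
          rw [ih (w - 1) (by omega) (by omega), show w - 1 + 1 = w by omega]
    intro i hi
    simp only [hfun]
    split_ifs with hz
    · subst hz; simpa using h0
    · have := key (n - 1 - i) (by omega)
      rw [show n - 1 - (n - 1 - i) = i by omega, show n - 1 - i + 1 = n - i by omega] at this
      exact this
  rcases h.next 2 (n-2) 3 (by omega) (by omega) (by omega) (by omega) (by omega)
    (by intro i hi hh
        have : i = 0 ∨ i = 1 ∨ i = n - 1 := by omega
        rcases this with rfl | rfl | rfl <;> omega) with hE | hG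
  · refine ⟨2, ?_⟩
    have key : ∀ i, 1 ≤ i → i + 1 < n → F i = (i + 1 : ℕ) := by
      intro i
      induction i using Nat.strong_induction_on with
      | _ i ih =>
        intro hi1 hi
        have hub := h.ub 1 1 (by simp; omega) (i - 1) (by omega)
        rw [show 1 + (i - 1) = i by omega] at hub
        apply h.force _ _ (by omega) (by omega)
        intro w hw
        rcases Nat.eq_zero_or_pos w with rfl | hw0
        · exact ⟨0, by omega, by omega, by simpa using h0⟩
        by_cases hw1 : w = 1
        · subst hw1
          exact ⟨n - 1, by omega, by omega, by simpa using hB⟩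
        · refine ⟨w - 1, by omega, by omega, ?_⟩
          rw [ih (w - 1) (by omega) (by omega) (by omega), show w - 1 + 1 = w by omega]
    intro i hi
    simp only [hfun]
    split_ifs with hz hz'
    · subst hz; simpa using h0
    · subst hz'; simpa using hB
    · exact key i (by omega) (by omega)
  · refine ⟨3, ?_⟩
    have key : ∀ i, (2 * i < n → F i = (2 * i : ℕ)) ∧
        (2 * i + 1 < n → F (n - 1 - i) = (2 * i + 1 : ℕ)) := by
      intro i
      induction i using Nat.strong_induction_on with
      | _ i ih =>
        have A : 2 * i < n → F i = (2 * i : ℕ) := by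
          intro hi
          have hub := h.ub 0 2 (by simp; omega) i (by omega)
          rw [show 0 + i = i by omega] at hub
          apply h.force _ _ (by omega) (by omega)
          intro w hw
          rcases Nat.even_or_odd' w with ⟨q, rfl | rfl⟩
          · exact ⟨q, by omega, by omega, (ih q (by omega)).1 (by omega)⟩
          · exact ⟨n - 1 - q, by omega, by omega, (ih q (by omega)).2 (by omega)⟩
        refine ⟨A, ?_⟩
        intro hi
        have hub := h.ub' (n - 1 - i) (n - 2) 2
        rw [show n - 2 + 1 = n - 1 by omega] at hub
        rcases Nat.eq_zero_or_pos i with rfl | hi0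
        · simpa using hB
        have hub := hub (by omega) (by omega) (by omega)
        apply h.force _ _ (by omega) (by omega)
        intro w hw
        rcases Nat.even_or_odd' w with ⟨q, rfl | rfl⟩
        · by_cases hq : q = i
          · subst hq
            exact ⟨q, by omega, by omega, A (by omega)⟩
          · exact ⟨q, by omega, by omega, (ih q (by omega)).1 (by omega)⟩
        · exact ⟨n - 1 - q, by omega, by omega, (ih q (by omega)).2 (by omega)⟩
    intro i hi
    simp only [hfun]
    split_ifs with hz
    · exact (key i).1 hz
    · have := (key (n - 1 - i)).2 (by omega)
      rw [show n - 1 - (n - 1 - i) = i by omega] at this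
      exact this

def gfun (n : ℕ) (c : Bool × Fin 4) (i : ℕ) : ℕ :=
  hfun n c.2 (if c.1 then n - 1 - i else i)

theorem CSeq.classify2 {n : ℕ} {F : ℕ → ℤ} (hn : 5 ≤ n) (h : CSeq n F) :
    ∃ c : Bool × Fin 4, ∀ i, i < n → F i = gfun n c i := by
  have := h.next 0 (n - 1) 0 (by omega) (by omega) (by omega) (by simpa using h.nn 0 (by omega))
    (by simpa using h.nn (n-1) (by omega)) (by intro i hi hh; omega)
  rcases this with h0 | h0
  · obtain ⟨c, hc⟩ := h.classify hn (by simpa using h0)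
    exact ⟨(false, c), fun i hi => by simpa [gfun] using hc i hi⟩
  · obtain ⟨c, hc⟩ := h.rev.classify hn (by simpa using h0)
    refine ⟨(true, c), fun i hi => ?_⟩
    have := hc (n - 1 - i) (by omega)
    simp only [show n - 1 - (n - 1 - i) = i by omega] at this
    simpa [gfun] using this

theorem hfun_lt {n : ℕ} (hn : 5 ≤ n) (c : Fin 4) (i : ℕ) (hi : i < n) : hfun n c i < n := by
  fin_cases c <;> simp only [hfun] <;> (try split_ifs) <;> omega

theorem hfun_inj {n : ℕ} (c : Fin 4) (i j : ℕ) (hi : i < n) (hj : j < n)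
    (e : hfun n c i = hfun n c j) : i = j := by
  fin_cases c <;> simp only [hfun] at e <;> (try split_ifs at e) <;> omega

theorem hfun_conc {n : ℕ} (hn : 5 ≤ n) (c : Fin 4) (i : ℕ) (hi : i + 2 < n) :
    hfun n c i + hfun n c (i + 2) ≤ 2 * hfun n c (i + 1) := by
  fin_cases c <;> simp only [hfun] <;> (try split_ifs) <;>
    first | omega | contradiction

theorem gfun_lt {n : ℕ} (hn : 5 ≤ n) (c : Bool × Fin 4) (i : ℕ) (hi : i < n) :
    gfun n c i < n := by
  apply hfun_lt hn; split_ifs <;> omega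

theorem gfun_inj {n : ℕ} (c : Bool × Fin 4) (i j : ℕ) (hi : i < n) (hj : j < n)
    (e : gfun n c i = gfun n c j) : i = j := by
  have := hfun_inj _ _ _ (by split_ifs <;> omega) (by split_ifs <;> omega) e
  split_ifs at this <;> omega

theorem gfun_conc {n : ℕ} (hn : 5 ≤ n) (c : Bool × Fin 4) (i : ℕ) (hi : i + 2 < n) :
    gfun n c i + gfun n c (i + 2) ≤ 2 * gfun n c (i + 1) := by
  obtain ⟨b, c⟩ := c
  cases b
  · simpa [gfun] using hfun_conc hn c i hi
  · have := hfun_conc hn c (n - 1 - (i + 2)) (by omega)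
    rw [show n - 1 - (i + 2) + 2 = n - 1 - i by omega,
      show n - 1 - (i + 2) + 1 = n - 1 - (i + 1) by omega] at this
    simp only [gfun, if_true]
    omega

theorem hfun_0 (m : ℕ) (c : Fin 4) : hfun (m + 5) c 0 = 0 := by
  fin_cases c <;> simp [hfun]

theorem hfun_1 (m : ℕ) (c : Fin 4) : hfun (m + 5) c 1 = ![1, m + 4, 2, 2] c := by
  fin_cases c <;> simp [hfun]

theorem hfun_2 (m : ℕ) (c : Fin 4) : hfun (m + 5) c (m + 3) = ![m + 3, 2, m + 4, 3] c := by
  fin_cases c <;> simp [hfun] <;> omega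

theorem hfun_3 (m : ℕ) (c : Fin 4) : hfun (m + 5) c (m + 4) = ![m + 4, 1, 1, 1] c := by
  fin_cases c <;> simp [hfun] <;> omega

theorem hfun_code (m : ℕ) (c d : Fin 4) (e1 : hfun (m + 5) c 1 = hfun (m + 5) d 1)
    (e2 : hfun (m + 5) c (m + 3) = hfun (m + 5) d (m + 3)) : c = d := by
  rw [hfun_1, hfun_1] at e1
  rw [hfun_2, hfun_2] at e2
  fin_cases c <;> fin_cases d <;> first
    | rfl
    | (exfalso; simp at e1 e2; done)
    | (exfalso; simp at e1 e2; omega)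

theorem hfun_ne (m : ℕ) (c d : Fin 4) (e0 : hfun (m + 5) c 0 = hfun (m + 5) d (m + 4)) :
    False := by
  rw [hfun_0, hfun_3] at e0
  fin_cases d <;> simp at e0

theorem gfun_code {n : ℕ} (hn : 5 ≤ n) (c d : Bool × Fin 4)
    (e : ∀ i, i < n → gfun n c i = gfun n d i) : c = d := by
  obtain ⟨m, rfl⟩ : ∃ m, n = m + 5 := ⟨n - 5, by omega⟩
  have e0 := e 0 (by omega)
  have e1 := e 1 (by omega)
  have e2 := e (m + 3) (by omega)
  obtain ⟨b, c⟩ := c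
  obtain ⟨b', d⟩ := d
  clear e hn
  simp only [gfun] at e0 e1 e2
  rw [show m + 5 - 1 - 0 = m + 4 by omega] at e0
  rw [show m + 5 - 1 - 1 = m + 3 by omega] at e1
  rw [show m + 5 - 1 - (m + 3) = 1 by omega] at e2
  cases b <;> cases b' <;> simp only [if_true, if_false, Bool.false_eq_true] at e0 e1 e2
  · rw [hfun_code m c d e1 e2]
  · exact (hfun_ne m c d e0).elim
  · exact (hfun_ne m d c e0.symm).elim
  · rw [hfun_code m c d e2 e1]

theorem cseq_of {n : ℕ} (π : Equiv.Perm (Fin n)) (h : IsKConvex 0 ⇑π) :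
    CSeq n (fun i => if hi : i < n then ((π ⟨i, hi⟩ : ℕ) : ℤ) else 0) where
  conc i hi := by
    have := h ⟨i, by omega⟩ ⟨i + 1, by omega⟩ ⟨i + 2, by omega⟩ rfl rfl
    simp only [hi, show i < n by omega, show i + 1 < n by omega, dif_pos]
    push_cast at this
    linarith
  inj i j hi hj e := by
    simp only [hi, hj, dif_pos] at e
    have : π ⟨i, hi⟩ = π ⟨j, hj⟩ := Fin.ext (by exact_mod_cast e)
    simpa using this
  nn i hi := by simp [hi]
  lt i hi := by simp [hi]
  surj v h0 h1 := by
    refine ⟨π.symm ⟨v.toNat, by omega⟩, (π.symm _).2, ?_⟩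
    simp [h0]

noncomputable def gperm (n : ℕ) (hn : 5 ≤ n) (c : Bool × Fin 4) : Equiv.Perm (Fin n) :=
  Equiv.ofBijective (fun i : Fin n => (⟨gfun n c i, gfun_lt hn c i i.2⟩ : Fin n))
    (Finite.injective_iff_bijective.1 (fun i j e =>
      Fin.ext (gfun_inj c i j i.2 j.2 (by simpa using e))))

theorem gperm_val (n : ℕ) (hn : 5 ≤ n) (c : Bool × Fin 4) (i : Fin n) :
    ((gperm n hn c i : Fin n) : ℕ) = gfun n c i := rfl

theorem gperm_conv (n : ℕ) (hn : 5 ≤ n) (c : Bool × Fin 4) : IsKConvex 0 ⇑(gperm n hn c) := by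
  intro i j l hij hjl
  rw [gperm_val, gperm_val, gperm_val]
  have := gfun_conc hn c i (by omega)
  rw [show (i : ℕ) + 2 = l by omega, hij] at this
  push_cast
  omega

theorem fk_large (n : ℕ) (hn : 5 ≤ n) : fk 0 n = 8 := by
  have hb : Function.Bijective (fun c : Bool × Fin 4 =>
      (⟨gperm n hn c, gperm_conv n hn c⟩ : {π : Equiv.Perm (Fin n) // IsKConvex 0 ⇑π})) := by
    constructor
    · intro c d e
      apply gfun_code hn
      intro i hi
      have e' : gperm n hn c = gperm n hn d := by simpa using e
      rw [← gperm_val n hn c ⟨i, hi⟩, e', gperm_val]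
    · rintro ⟨π, hπ⟩
      obtain ⟨c, hc⟩ := (cseq_of π hπ).classify2 hn
      refine ⟨c, Subtype.ext (Equiv.ext fun i => Fin.ext ?_)⟩
      have := hc i i.2
      simp only [i.2, dif_pos] at this
      rw [gperm_val]
      exact_mod_cast this.symm
  unfold fk
  rw [← Nat.card_congr (Equiv.ofBijective _ hb)]
  simp

instance decConv (k n : ℕ) (f : Fin n → Fin n) : Decidable (IsKConvex k f) := by
  unfold IsKConvex; infer_instance

/-- `f_0(1) = 1`, `f_0(2) = 2`, `f_0(3) = 4`, `f_0(4) = 6`, and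
`f_0(n) = 8` for every `n ≥ 5`. -/
theorem perfectly_convex_count :
    fk 0 1 = 1 ∧ fk 0 2 = 2 ∧ fk 0 3 = 4 ∧ fk 0 4 = 6 ∧
    ∀ n : ℕ, 5 ≤ n → fk 0 n = 8 := by
  refine ⟨?_, ?_, ?_, ?_, fk_large⟩ <;> unfold fk <;> rw [Nat.card_eq_fintype_card] <;>
    decide +kernel
end

section
/- Let k ∈ {0, 1, 2} and let π be a k-convex permutation of [n] with n ≥ 2. If π(2) − 2π(1) ≤ k, then L(π) is a k-convex permutation of [n+1]; if π(n−1) − 2π(n) ≤ k, then R(π) is a k-convex permutation of [n+1]. Moreover, if k ∈ {1, 2}, then at least one of L(π) and R(π) is k-convex. -/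
/-- The left descendant `L(π)`: `L(π)(1) = 1` and `L(π)(i) = π(i-1) + 1` for
`2 ≤ i ≤ n+1` (0-indexed via `Fin.cons`). -/
def Lf {n : ℕ} (f : Fin n → Fin n) : Fin (n + 1) → Fin (n + 1) :=
  Fin.cons 0 (fun i => (f i).succ)

/-- The right descendant `R(π)`: `R(π)(i) = π(i) + 1` for `1 ≤ i ≤ n` and
`R(π)(n+1) = 1` (0-indexed via `Fin.snoc`). -/
def Rf {n : ℕ} (f : Fin n → Fin n) : Fin (n + 1) → Fin (n + 1) :=
  Fin.snoc (fun i => (f i).succ) 0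

theorem Lf_kconvex (k n : ℕ) (hn : 1 < n) (f : Fin n → Fin n) (hf : IsKConvex k f)
    (h : (((f ⟨1, by omega⟩ : ℕ) : ℤ) + 1) - 2 * (((f ⟨0, by omega⟩ : ℕ) : ℤ) + 1) ≤ (k : ℤ)) :
    IsKConvex k (Lf f) := by
  intro i j l hij hjl
  obtain ⟨l', rfl⟩ := Fin.exists_succ_eq.2 (show l ≠ 0 by rintro rfl; simp at hjl)
  obtain ⟨j', rfl⟩ := Fin.exists_succ_eq.2 (show j ≠ 0 by rintro rfl; simp at hij)
  rcases Fin.eq_zero_or_eq_succ i with rfl | ⟨i', rfl⟩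
  · have hj : j' = ⟨0, by omega⟩ := by ext; simp at hij ⊢; omega
    have hl : l' = ⟨1, by omega⟩ := by ext; simp at hij hjl ⊢; omega
    rw [← hj, ← hl] at h
    simp only [Lf, Fin.cons_zero, Fin.cons_succ, Fin.val_succ, Fin.val_zero]
    push_cast
    linarith
  · have := hf i' j' l' (by simpa using hij) (by simpa using hjl)
    simp only [Lf, Fin.cons_succ, Fin.val_succ]
    push_cast
    linarith

theorem Rf_kconvex (k n : ℕ) (hn : 1 < n) (f : Fin n → Fin n) (hf : IsKConvex k f)
    (h : (((f ⟨n - 2, by omega⟩ : ℕ) : ℤ) + 1) - 2 * (((f ⟨n - 1, by omega⟩ : ℕ) : ℤ) + 1)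
      ≤ (k : ℤ)) :
    IsKConvex k (Rf f) := by
  intro i j l hij hjl
  have hl := l.2
  obtain ⟨i', rfl⟩ : ∃ i' : Fin n, i = i'.castSucc := ⟨⟨i, by omega⟩, rfl⟩
  obtain ⟨j', rfl⟩ : ∃ j' : Fin n, j = j'.castSucc := ⟨⟨j, by omega⟩, rfl⟩
  rcases Fin.eq_castSucc_or_eq_last l with ⟨l', rfl⟩ | rfl
  · have := hf i' j' l' (by simpa using hij) (by simpa using hjl)
    simp only [Rf, Fin.snoc_castSucc, Fin.val_succ]
    push_cast
    linarith
  · have hj : j' = ⟨n - 1, by omega⟩ := by ext; simp at hjl ⊢; omega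
    have hi : i' = ⟨n - 2, by omega⟩ := by ext; simp at hij hjl ⊢; omega
    rw [← hj, ← hi] at h
    simp only [Rf, Fin.snoc_castSucc, Fin.snoc_last, Fin.val_succ, Fin.val_zero]
    push_cast
    linarith

theorem Lf_bij {n : ℕ} (π : Equiv.Perm (Fin n)) : Function.Bijective (Lf ⇑π) := by
  rw [← Finite.injective_iff_bijective, Lf, Fin.cons_injective_iff]
  refine ⟨?_, (Fin.succ_injective n).comp π.injective⟩
  rintro ⟨x, hx⟩
  exact Fin.succ_ne_zero _ hx

theorem Rf_bij {n : ℕ} (π : Equiv.Perm (Fin n)) : Function.Bijective (Rf ⇑π) := by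
  rw [← Finite.injective_iff_bijective, Rf, Fin.snoc_injective_iff]
  refine ⟨(Fin.succ_injective n).comp π.injective, ?_⟩
  rintro ⟨x, hx⟩
  exact Fin.succ_ne_zero _ hx

theorem one_side (k n : ℕ) (hk : k ≤ 2) (hk1 : 1 ≤ k) (hn : 1 < n)
    (π : Equiv.Perm (Fin n)) (hπ : IsKConvex k ⇑π)
    (hA : ¬ (((π ⟨1, by omega⟩ : ℕ) : ℤ) + 1) - 2 * (((π ⟨0, by omega⟩ : ℕ) : ℤ) + 1) ≤ (k : ℤ))
    (hB : ¬ (((π ⟨n - 2, by omega⟩ : ℕ) : ℤ) + 1) - 2 * (((π ⟨n - 1, by omega⟩ : ℕ) : ℤ) + 1)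
      ≤ (k : ℤ)) : False := by
  have key : ∀ v : ℕ, v ≤ 2 → ∀ j : Fin n, (π j : ℕ) = v → (j : ℕ) = 0 ∨ (j : ℕ) = n - 1 := by
    intro v
    induction v using Nat.strong_induction_on with
    | _ v ih =>
    intro hv j hj
    by_contra hcon
    have hjn := j.2
    have hc := hπ ⟨j - 1, by omega⟩ j ⟨j + 1, by omega⟩ (by simp; omega) (by simp)
    have inj : ∀ a b : Fin n, (π a : ℕ) = (π b : ℕ) → (a : ℕ) = b := fun a b h => by
      rw [π.injective (Fin.ext h)]
    have h1 := inj ⟨j - 1, by omega⟩ j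
    have h2 := inj ⟨j + 1, by omega⟩ j
    have h3 := inj ⟨j - 1, by omega⟩ ⟨j + 1, by omega⟩
    simp only at h1 h2 h3
    have i1 : ((π ⟨j - 1, by omega⟩ : Fin n) : ℕ) < v → (j : ℕ) - 1 = 0 ∨ (j : ℕ) - 1 = n - 1 :=
      fun h => ih _ h (by omega) ⟨j - 1, by omega⟩ rfl
    have i2 : ((π ⟨j + 1, by omega⟩ : Fin n) : ℕ) < v → (j : ℕ) + 1 = 0 ∨ (j : ℕ) + 1 = n - 1 :=
      fun h => ih _ h (by omega) ⟨j + 1, by omega⟩ rfl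
    have e1 : ¬ (j : ℕ) - 1 = 0 := fun h => by
      have : (⟨1, by omega⟩ : Fin n) = j := by ext; simp; omega
      rw [this] at hA
      omega
    have e2 : ¬ (j : ℕ) + 1 = n - 1 := fun h => by
      have : (⟨n - 2, by omega⟩ : Fin n) = j := by ext; simp; omega
      rw [this] at hB
      omega
    omega
  have h4 := (π ⟨1, by omega⟩).2
  have g : ∀ v : ℕ, ∀ h : v < n, (π (π.symm ⟨v, h⟩) : ℕ) = v := fun v h => by simp
  have g0 := g 0 (by omega)
  have g1 := g 1 (by omega)
  have g2 := g 2 (by omega)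
  have k0 := key 0 (by omega) _ g0
  have k1 := key 1 (by omega) _ g1
  have k2 := key 2 (by omega) _ g2
  have inj : ∀ a b : Fin n, (a : ℕ) = (b : ℕ) → (π a : ℕ) = π b := fun a b h => by
    rw [Fin.ext h]
  have j1 := inj (π.symm ⟨0, by omega⟩) (π.symm ⟨1, by omega⟩)
  have j2 := inj (π.symm ⟨0, by omega⟩) (π.symm ⟨2, by omega⟩)
  have j3 := inj (π.symm ⟨1, by omega⟩) (π.symm ⟨2, by omega⟩)
  omega

/-- for `k ∈ {0,1,2}` and a `k`-convex permutation `π` of `[n]`,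
`n ≥ 2`: if `π(2) - 2π(1) ≤ k` then `L(π)` is a `k`-convex permutation of `[n+1]`;
if `π(n-1) - 2π(n) ≤ k` then `R(π)` is a `k`-convex permutation of `[n+1]`;
and if `k ∈ {1,2}` then at least one of `L(π)`, `R(π)` is `k`-convex.
(1-indexed values: `π(i) = (π' ⟨i-1,_⟩ : ℕ) + 1` for the 0-indexed model `π'`.) -/
theorem descend_kconvex (k n : ℕ) (hk : k ≤ 2) (hn : 2 ≤ n)
    (π : Equiv.Perm (Fin n)) (hπ : IsKConvex k ⇑π) :
    ((((π ⟨1, by omega⟩ : ℕ) : ℤ) + 1) - 2 * (((π ⟨0, by omega⟩ : ℕ) : ℤ) + 1) ≤ (k : ℤ) →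
      IsKConvex k (Lf ⇑π) ∧ Function.Bijective (Lf ⇑π)) ∧
    ((((π ⟨n - 2, by omega⟩ : ℕ) : ℤ) + 1) - 2 * (((π ⟨n - 1, by omega⟩ : ℕ) : ℤ) + 1) ≤ (k : ℤ) →
      IsKConvex k (Rf ⇑π) ∧ Function.Bijective (Rf ⇑π)) ∧
    (k = 1 ∨ k = 2 → IsKConvex k (Lf ⇑π) ∨ IsKConvex k (Rf ⇑π)) := by
  refine ⟨fun h => ⟨Lf_kconvex k n hn _ hπ h, Lf_bij π⟩,
    fun h => ⟨Rf_kconvex k n hn _ hπ h, Rf_bij π⟩, fun hk' => ?_⟩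
  by_contra hcon
  push Not at hcon
  exact one_side k n hk (by omega) hn π hπ (fun h => hcon.1 (Lf_kconvex k n hn _ hπ h))
    (fun h => hcon.2 (Rf_kconvex k n hn _ hπ h))
end

section
/- Let k ∈ {0, 1, 2}, let π be a k-convex permutation of [n] with n ≥ 2, and let τ be a k-convex permutation of [m] with m ≥ 2. Suppose either (a) π(1) = τ(1), π(2) = τ(2), π(n−1) = τ(m−1), and π(n) = τ(m), or (b) π(1) = τ(m), π(2) = τ(m−1), π(n−1) = τ(2), and π(n) = τ(1). Then d_k(π, i) = d_k(τ, i) for every integer i ≥ 0. -/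
/-- One step of descent: letter `false` is `L`, letter `true` is `R`. -/
def stepP {n : ℕ} (b : Bool) (f : Fin n → Fin n) : Fin (n + 1) → Fin (n + 1) :=
  if b then Rf f else Lf f

/-- `applyWord f i W` is `W(f) = W_i(W_{i-1}(⋯(W_1(f))⋯))` for the word
`W = W_1 W_2 … W_i` over the alphabet `{L, R}` (a word is `W : Fin i → Bool`). -/
def applyWord {n : ℕ} (f : Fin n → Fin n) :
    (i : ℕ) → (Fin i → Bool) → (Fin (n + i) → Fin (n + i))
  | 0, _ => f
  | i + 1, W => stepP (W (Fin.last i)) (applyWord f i fun j => W j.castSucc)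

/-- `d_k(π, i)`: the number of words `W` of length `i` over `{L, R}` such that
`W(π)` is `k`-convex. -/
noncomputable def dk (k : ℕ) {n : ℕ} (f : Fin n → Fin n) (i : ℕ) : ℕ :=
  Nat.card {W : Fin i → Bool // IsKConvex k (applyWord f i W)}

def vl {n p : ℕ} (f : Fin n → Fin p) (j : ℕ) : ℕ := if h : j < n then (f ⟨j, h⟩ : ℕ) else 0

lemma vl_of {n p : ℕ} (f : Fin n → Fin p) (j : ℕ) (h : j < n) : vl f j = (f ⟨j, h⟩ : ℕ) := by
  simp [vl, h]

lemma conv_iff (k : ℕ) {n p : ℕ} (f : Fin n → Fin p) :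
    IsKConvex k f ↔ ∀ j, j + 2 < n → vl f j + vl f (j+2) ≤ k + 2 * vl f (j+1) := by
  constructor
  · intro h j hj
    have := h ⟨j, by omega⟩ ⟨j+1, by omega⟩ ⟨j+2, hj⟩ rfl rfl
    rw [vl_of f j (by omega), vl_of f (j+1) (by omega), vl_of f (j+2) hj]
    omega
  · rintro h ⟨i, hi⟩ ⟨j, hj⟩ ⟨l, hl⟩ h1 h2
    simp only at h1 h2
    subst h1
    subst h2
    have := h i hl
    rw [vl_of f i (by omega), vl_of f (i+1) (by omega), vl_of f (i+2) hl] at this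
    have e : (⟨i + 1 + 1, hl⟩ : Fin n) = ⟨i + 2, hl⟩ := rfl
    rw [e]
    omega

lemma vl_L_zero {n : ℕ} (f : Fin n → Fin n) : vl (stepP false f) 0 = 0 := by
  rw [vl_of _ _ (by omega)]
  simp [stepP, Lf]

lemma vl_L_succ {n : ℕ} (f : Fin n → Fin n) (j : ℕ) (h : j < n) :
    vl (stepP false f) (j+1) = vl f j + 1 := by
  rw [vl_of _ _ (by omega), vl_of _ _ h]
  have e : (⟨j + 1, by omega⟩ : Fin (n+1)) = Fin.succ ⟨j, h⟩ := rfl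
  rw [e]
  simp only [stepP, Lf, Bool.false_eq_true, if_false, Fin.cons_succ, Fin.val_succ]

lemma vl_R_last {n : ℕ} (f : Fin n → Fin n) : vl (stepP true f) n = 0 := by
  rw [vl_of _ _ (by omega)]
  have e : (⟨n, by omega⟩ : Fin (n+1)) = Fin.last n := rfl
  rw [e]
  simp [stepP, Rf]

lemma vl_R {n : ℕ} (f : Fin n → Fin n) (j : ℕ) (h : j < n) :
    vl (stepP true f) j = vl f j + 1 := by
  rw [vl_of _ _ (by omega), vl_of _ _ h]
  have e : (⟨j, by omega⟩ : Fin (n+1)) = Fin.castSucc ⟨j, h⟩ := rfl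
  rw [e]
  simp only [stepP, Rf, if_true, Fin.snoc_castSucc, Fin.val_succ]

lemma conv_L (k : ℕ) {n : ℕ} (hn : 2 ≤ n) (f : Fin n → Fin n) :
    IsKConvex k (stepP false f) ↔ IsKConvex k f ∧ vl f 1 + 1 ≤ k + 2 * (vl f 0 + 1) := by
  rw [conv_iff, conv_iff]
  constructor
  · intro h
    constructor
    · intro j hj
      have := h (j+1) (by omega)
      rw [vl_L_succ f j (by omega), vl_L_succ f (j+1) (by omega),
        show j + 1 + 2 = (j + 2) + 1 from rfl, vl_L_succ f (j+2) (by omega)] at this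
      omega
    · have := h 0 (by omega)
      rw [vl_L_zero, vl_L_succ f 0 (by omega), show 0 + 2 = 1 + 1 from rfl,
        vl_L_succ f 1 (by omega)] at this
      omega
  · rintro ⟨h, h'⟩ j hj
    rcases j with _ | j
    · rw [vl_L_zero, vl_L_succ f 0 (by omega), show 0 + 2 = 1 + 1 from rfl,
        vl_L_succ f 1 (by omega)]
      omega
    · have := h j (by omega)
      rw [vl_L_succ f j (by omega), vl_L_succ f (j+1) (by omega),
        show j + 1 + 2 = (j + 2) + 1 from rfl, vl_L_succ f (j+2) (by omega)]
      omega

lemma conv_R (k : ℕ) {n : ℕ} (hn : 2 ≤ n) (f : Fin n → Fin n) :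
    IsKConvex k (stepP true f) ↔
      IsKConvex k f ∧ vl f (n-2) + 1 ≤ k + 2 * (vl f (n-1) + 1) := by
  obtain ⟨p, rfl⟩ : ∃ p, n = p + 2 := ⟨n - 2, by omega⟩
  simp only [Nat.add_sub_cancel, show p + 2 - 1 = p + 1 from rfl]
  rw [conv_iff, conv_iff]
  constructor
  · intro h
    constructor
    · intro j hj
      have := h j (by omega)
      rw [vl_R f j (by omega), vl_R f (j+1) (by omega), vl_R f (j+2) (by omega)] at this
      omega
    · have := h p (by omega)
      rw [vl_R f p (by omega), vl_R f (p+1) (by omega), vl_R_last] at this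
      omega
  · rintro ⟨h, h'⟩ j hj
    by_cases hjp : j = p
    · subst hjp
      rw [vl_R f j (by omega), vl_R f (j+1) (by omega), vl_R_last]
      omega
    · have := h j (by omega)
      rw [vl_R f j (by omega), vl_R f (j+1) (by omega), vl_R f (j+2) (by omega)]
      omega

lemma ends_L {n : ℕ} (hn : 2 ≤ n) (f : Fin n → Fin n) :
    vl (stepP false f) 0 = 0 ∧ vl (stepP false f) 1 = vl f 0 + 1 ∧
    vl (stepP false f) (n + 1 - 2) = vl f (n-2) + 1 ∧
    vl (stepP false f) (n + 1 - 1) = vl f (n-1) + 1 := by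
  obtain ⟨p, rfl⟩ : ∃ p, n = p + 2 := ⟨n - 2, by omega⟩
  exact ⟨vl_L_zero f, vl_L_succ f 0 (by omega), vl_L_succ f p (by omega),
    vl_L_succ f (p+1) (by omega)⟩

lemma ends_R {n : ℕ} (hn : 2 ≤ n) (f : Fin n → Fin n) :
    vl (stepP true f) 0 = vl f 0 + 1 ∧ vl (stepP true f) 1 = vl f 1 + 1 ∧
    vl (stepP true f) (n + 1 - 2) = vl f (n-1) + 1 ∧
    vl (stepP true f) (n + 1 - 1) = 0 := by
  obtain ⟨p, rfl⟩ : ∃ p, n = p + 2 := ⟨n - 2, by omega⟩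
  exact ⟨vl_R f 0 (by omega), vl_R f 1 (by omega), vl_R f (p+1) (by omega), vl_R_last f⟩

def MatchA {n m : ℕ} (f : Fin n → Fin n) (g : Fin m → Fin m) : Prop :=
  vl f 0 = vl g 0 ∧ vl f 1 = vl g 1 ∧ vl f (n-2) = vl g (m-2) ∧ vl f (n-1) = vl g (m-1)

def MatchB {n m : ℕ} (f : Fin n → Fin n) (g : Fin m → Fin m) : Prop :=
  vl f 0 = vl g (m-1) ∧ vl f 1 = vl g (m-2) ∧ vl f (n-2) = vl g 1 ∧ vl f (n-1) = vl g 0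

lemma mainA (k : ℕ) {n m : ℕ} (hn : 2 ≤ n) (hm : 2 ≤ m) (f : Fin n → Fin n) (g : Fin m → Fin m)
    (h : MatchA f g) (hc : IsKConvex k f ↔ IsKConvex k g) (i : ℕ) (W : Fin i → Bool) :
    MatchA (applyWord f i W) (applyWord g i W) ∧
    (IsKConvex k (applyWord f i W) ↔ IsKConvex k (applyWord g i W)) := by
  induction i with
  | zero => exact ⟨h, hc⟩
  | succ i ih =>
    obtain ⟨⟨h1, h2, h3, h4⟩, h5⟩ := ih (fun j => W j.castSucc)
    simp only [applyWord]
    generalize applyWord f i (fun j => W j.castSucc) = F at *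
    generalize applyWord g i (fun j => W j.castSucc) = G at *
    have hn' : 2 ≤ n + i := by omega
    have hm' : 2 ≤ m + i := by omega
    cases W (Fin.last i)
    · obtain ⟨a1, a2, a3, a4⟩ := ends_L hn' F
      obtain ⟨b1, b2, b3, b4⟩ := ends_L hm' G
      refine ⟨⟨a1.trans b1.symm, ?_, ?_, ?_⟩, ?_⟩
      · rw [a2, b2, h1]
      · exact a3.trans (by rw [h3]; exact b3.symm)
      · exact a4.trans (by rw [h4]; exact b4.symm)
      · rw [conv_L k hn', conv_L k hm', h5, h1, h2]
    · obtain ⟨a1, a2, a3, a4⟩ := ends_R hn' F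
      obtain ⟨b1, b2, b3, b4⟩ := ends_R hm' G
      refine ⟨⟨?_, ?_, ?_, a4.trans b4.symm⟩, ?_⟩
      · rw [a1, b1, h1]
      · rw [a2, b2, h2]
      · exact a3.trans (by rw [h4]; exact b3.symm)
      · rw [conv_R k hn', conv_R k hm', h5, h3, h4]

lemma mainB (k : ℕ) {n m : ℕ} (hn : 2 ≤ n) (hm : 2 ≤ m) (f : Fin n → Fin n) (g : Fin m → Fin m)
    (h : MatchB f g) (hc : IsKConvex k f ↔ IsKConvex k g) (i : ℕ) (W : Fin i → Bool) :
    MatchB (applyWord f i W) (applyWord g i (fun j => !(W j))) ∧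
    (IsKConvex k (applyWord f i W) ↔ IsKConvex k (applyWord g i (fun j => !(W j)))) := by
  induction i with
  | zero => exact ⟨h, hc⟩
  | succ i ih =>
    obtain ⟨⟨h1, h2, h3, h4⟩, h5⟩ := ih (fun j => W j.castSucc)
    simp only [applyWord]
    generalize applyWord f i (fun j => W j.castSucc) = F at *
    generalize applyWord g i (fun j => !(W j.castSucc)) = G at *
    have hn' : 2 ≤ n + i := by omega
    have hm' : 2 ≤ m + i := by omega
    cases W (Fin.last i)
    · obtain ⟨a1, a2, a3, a4⟩ := ends_L hn' F
      obtain ⟨b1, b2, b3, b4⟩ := ends_R hm' G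
      refine ⟨⟨a1.trans b4.symm, ?_, ?_, ?_⟩, ?_⟩
      · exact a2.trans (by rw [h1]; exact b3.symm)
      · exact a3.trans (by rw [h3]; exact b2.symm)
      · exact a4.trans (by rw [h4]; exact b1.symm)
      · rw [Bool.not_false, conv_L k hn', conv_R k hm', h5, h1, h2]
    · obtain ⟨a1, a2, a3, a4⟩ := ends_R hn' F
      obtain ⟨b1, b2, b3, b4⟩ := ends_L hm' G
      refine ⟨⟨?_, ?_, ?_, a4.trans b1.symm⟩, ?_⟩
      · exact a1.trans (by rw [h1]; exact b4.symm)
      · exact a2.trans (by rw [h2]; exact b3.symm)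
      · exact a3.trans (by rw [h4]; exact b2.symm)
      · rw [Bool.not_true, conv_R k hn', conv_L k hm', h5, h3, h4]

def negW (i : ℕ) : (Fin i → Bool) ≃ (Fin i → Bool) where
  toFun W := fun j => !(W j)
  invFun W := fun j => !(W j)
  left_inv W := by simp
  right_inv W := by simp

/-- for `k ∈ {0,1,2}`, two `k`-convex permutations that agree on their
first two and last two entries (in order, or with the roles reversed) are
identically-descending: `d_k(π, i) = d_k(τ, i)` for all `i ≥ 0`. -/
theorem identically_descending_of_matching_ends (k : ℕ) (hk : k ≤ 2)
    (n m : ℕ) (hn : 2 ≤ n) (hm : 2 ≤ m)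
    (π : Equiv.Perm (Fin n)) (τ : Equiv.Perm (Fin m))
    (hπ : IsKConvex k ⇑π) (hτ : IsKConvex k ⇑τ)
    (hmatch :
      ((π ⟨0, by omega⟩ : ℕ) = (τ ⟨0, by omega⟩ : ℕ) ∧
       (π ⟨1, by omega⟩ : ℕ) = (τ ⟨1, by omega⟩ : ℕ) ∧
       (π ⟨n - 2, by omega⟩ : ℕ) = (τ ⟨m - 2, by omega⟩ : ℕ) ∧
       (π ⟨n - 1, by omega⟩ : ℕ) = (τ ⟨m - 1, by omega⟩ : ℕ)) ∨
      ((π ⟨0, by omega⟩ : ℕ) = (τ ⟨m - 1, by omega⟩ : ℕ) ∧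
       (π ⟨1, by omega⟩ : ℕ) = (τ ⟨m - 2, by omega⟩ : ℕ) ∧
       (π ⟨n - 2, by omega⟩ : ℕ) = (τ ⟨1, by omega⟩ : ℕ) ∧
       (π ⟨n - 1, by omega⟩ : ℕ) = (τ ⟨0, by omega⟩ : ℕ))) :
    ∀ i : ℕ, dk k ⇑π i = dk k ⇑τ i := by
  intro i
  have hc : IsKConvex k ⇑π ↔ IsKConvex k ⇑τ := ⟨fun _ => hτ, fun _ => hπ⟩
  rcases hmatch with h | h
  · have hA : MatchA ⇑π ⇑τ := by
      unfold MatchA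
      rw [vl_of ⇑π 0 (by omega), vl_of ⇑τ 0 (by omega), vl_of ⇑π 1 (by omega), vl_of ⇑τ 1 (by omega),
        vl_of ⇑π (n-2) (by omega), vl_of ⇑τ (m-2) (by omega), vl_of ⇑π (n-1) (by omega),
        vl_of ⇑τ (m-1) (by omega)]
      exact h
    exact Nat.card_congr (Equiv.subtypeEquiv (Equiv.refl _)
      fun W => (mainA k hn hm _ _ hA hc i W).2)
  · have hB : MatchB ⇑π ⇑τ := by
      unfold MatchB
      rw [vl_of ⇑π 0 (by omega), vl_of ⇑τ 0 (by omega), vl_of ⇑π 1 (by omega),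
        vl_of ⇑τ 1 (by omega),
        vl_of ⇑π (n-2) (by omega), vl_of ⇑τ (m-2) (by omega), vl_of ⇑π (n-1) (by omega),
        vl_of ⇑τ (m-1) (by omega)]
      exact h
    exact Nat.card_congr (Equiv.subtypeEquiv (negW i)
      fun W => (mainB k hn hm _ _ hB hc i W).2)
end

section
/- Let k ∈ {0, 1, 2}, let π be a k-convex permutation of [n] with n ≥ 4, and let τ be a k-convex permutation of [m] with m ≥ 4. Suppose π(1) = τ(1), π(2) = τ(2), and π(n) = τ(m) (the next-to-last entries π(n−1) and τ(m−1) may differ), and suppose both R(π) and R(τ) are k-convex. Then d_k(π, i) = d_k(τ, i) for every integer i ≥ 0. -/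
def vv {n p : ℕ} (f : Fin n → Fin p) (i : ℕ) : ℤ := if h : i < n then ((f ⟨i, h⟩ : ℕ) : ℤ) else 0

lemma convex_iff (k : ℕ) {n p : ℕ} (f : Fin n → Fin p) :
    IsKConvex k f ↔ ∀ i, i + 2 < n → vv f i + vv f (i+2) - 2 * vv f (i+1) ≤ k := by
  constructor
  · intro h i hi
    have := h ⟨i, by omega⟩ ⟨i+1, by omega⟩ ⟨i+2, hi⟩ rfl rfl
    have h1 : i < n := by omega
    have h2 : i + 1 < n := by omega
    simpa [vv, hi, h1, h2] using this
  · rintro h ⟨i, hi⟩ ⟨j, hj⟩ ⟨l, hl⟩ h1 h2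
    simp only at h1 h2
    subst h1
    subst h2
    have := h i hl
    simpa [vv, hi, hj, hl] using this

lemma vv_L_zero {n : ℕ} (f : Fin n → Fin n) : vv (Lf f) 0 = 0 := by
  have : (⟨0, by omega⟩ : Fin (n+1)) = 0 := rfl
  simp [vv, Lf]

lemma vv_L_succ {n : ℕ} (f : Fin n → Fin n) (i : ℕ) (hi : i < n) :
    vv (Lf f) (i+1) = vv f i + 1 := by
  have : (⟨i+1, by omega⟩ : Fin (n+1)) = Fin.succ ⟨i, hi⟩ := rfl
  simp [vv, Lf, hi, this, -Fin.succ_mk]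

lemma vv_R_lt {n : ℕ} (f : Fin n → Fin n) (i : ℕ) (hi : i < n) :
    vv (Rf f) i = vv f i + 1 := by
  have : (⟨i, by omega⟩ : Fin (n+1)) = Fin.castSucc ⟨i, hi⟩ := rfl
  have h' : i < n + 1 := by omega
  simp [vv, Rf, hi, h', this, -Fin.castSucc_mk]

lemma vv_R_last {n : ℕ} (f : Fin n → Fin n) : vv (Rf f) n = 0 := by
  have : (⟨n, by omega⟩ : Fin (n+1)) = Fin.last n := rfl
  simp [vv, Rf, this]

lemma convex_L (k : ℕ) {n : ℕ} (hn : 2 ≤ n) (f : Fin n → Fin n) :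
    IsKConvex k (Lf f) ↔ IsKConvex k f ∧ vv f 1 + 1 - 2 * (vv f 0 + 1) ≤ k := by
  rw [convex_iff, convex_iff]
  constructor
  · intro h
    constructor
    · intro i hi
      have := h (i+1) (by omega)
      rw [vv_L_succ f i (by omega), vv_L_succ f (i+2) (by omega),
        vv_L_succ f (i+1) (by omega)] at this
      linarith
    · have := h 0 (by omega)
      rw [vv_L_zero, vv_L_succ f 1 (by omega), vv_L_succ f 0 (by omega)] at this
      linarith
  · rintro ⟨h, h0⟩ i hi
    rcases i with _ | i
    · rw [vv_L_zero, vv_L_succ f 1 (by omega), vv_L_succ f 0 (by omega)]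
      linarith
    · have := h i (by omega)
      rw [vv_L_succ f i (by omega), vv_L_succ f (i+2) (by omega),
        vv_L_succ f (i+1) (by omega)]
      linarith

lemma convex_R (k : ℕ) {n : ℕ} (hn : 2 ≤ n) (f : Fin n → Fin n) :
    IsKConvex k (Rf f) ↔
      IsKConvex k f ∧ vv f (n-2) + 1 - 2 * (vv f (n-1) + 1) ≤ k := by
  rw [convex_iff, convex_iff]
  have e1 : n - 2 + 1 = n - 1 := by omega
  have e2 : n - 2 + 2 = n := by omega
  constructor
  · intro h
    constructor
    · intro i hi
      have := h i (by omega)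
      rw [vv_R_lt f i (by omega), vv_R_lt f (i+2) (by omega),
        vv_R_lt f (i+1) (by omega)] at this
      linarith
    · have := h (n-2) (by omega)
      rw [e1, e2, vv_R_last, vv_R_lt f (n-2) (by omega), vv_R_lt f (n-1) (by omega)] at this
      linarith
  · rintro ⟨h, h0⟩ i hi
    by_cases hi' : i + 2 < n
    · have := h i (by omega)
      rw [vv_R_lt f i (by omega), vv_R_lt f (i+2) (by omega),
        vv_R_lt f (i+1) (by omega)]
      linarith
    · have : i = n - 2 := by omega
      subst this
      rw [e1, e2, vv_R_last, vv_R_lt f (n-2) (by omega), vv_R_lt f (n-1) (by omega)]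
      linarith

def DRel (k : ℕ) {n m : ℕ} (f : Fin n → Fin n) (g : Fin m → Fin m) : Prop :=
  vv f 0 = vv g 0 ∧ vv f 1 = vv g 1 ∧ vv f (n-1) = vv g (m-1) ∧
  0 ≤ vv f (n-1) ∧
  (vv f (n-2) = vv g (m-2) ∨ (vv f (n-2) + 1 - 2 * (vv f (n-1) + 1) ≤ k ∧
    vv g (m-2) + 1 - 2 * (vv g (m-1) + 1) ≤ k)) ∧
  (IsKConvex k f ↔ IsKConvex k g)

lemma DRel_step (k : ℕ) {n m : ℕ} (hn : 2 ≤ n) (hm : 2 ≤ m) (f : Fin n → Fin n)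
    (g : Fin m → Fin m) (b : Bool) (h : DRel k f g) : DRel k (stepP b f) (stepP b g) := by
  obtain ⟨h0, h1, hl, hp, hc, hk⟩ := h
  obtain ⟨n, rfl⟩ : ∃ t, n = t + 2 := ⟨n - 2, by omega⟩
  obtain ⟨m, rfl⟩ : ∃ t, m = t + 2 := ⟨m - 2, by omega⟩
  cases b
  · simp only [stepP, Bool.false_eq_true, if_false]
    unfold DRel
    rw [convex_L k hn, convex_L k hm, hk, h0, h1]
    simp only [Nat.add_sub_cancel, show ∀ t : ℕ, t + 2 - 1 = t + 1 from fun _ => rfl,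
      show ∀ t : ℕ, t + 2 + 1 - 1 = t + 1 + 1 from fun _ => rfl,
      show ∀ t : ℕ, t + 2 + 1 - 2 = t + 1 from fun _ => rfl] at *
    rw [vv_L_zero, vv_L_zero, vv_L_succ f (n+1) (by omega), vv_L_succ g (m+1) (by omega),
      vv_L_succ f n (by omega), vv_L_succ g m (by omega),
      show vv (Lf f) 1 = vv f 0 + 1 from vv_L_succ f 0 (by omega),
      show vv (Lf g) 1 = vv g 0 + 1 from vv_L_succ g 0 (by omega)]
    refine ⟨rfl, by linarith, by linarith, by linarith, ?_, trivial⟩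
    rcases hc with hc | ⟨hc, hc'⟩
    · left; linarith
    · right; constructor <;> linarith
  · simp only [stepP, if_true]
    unfold DRel
    rw [convex_R k hn, convex_R k hm, hk]
    simp only [Nat.add_sub_cancel, show ∀ t : ℕ, t + 2 - 1 = t + 1 from fun _ => rfl,
      show ∀ t : ℕ, t + 2 + 1 - 2 = t + 1 from fun _ => rfl] at *
    rw [vv_R_last, vv_R_last, vv_R_lt f (n+1) (by omega), vv_R_lt g (m+1) (by omega),
      vv_R_lt f 0 (by omega), vv_R_lt g 0 (by omega),
      vv_R_lt f 1 (by omega), vv_R_lt g 1 (by omega)]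
    refine ⟨by linarith, by linarith, rfl, le_rfl, Or.inl (by linarith), ?_⟩
    rcases hc with hc | ⟨hc, hc'⟩
    · rw [hc, hl]
    · exact ⟨fun h => ⟨h.1, hc'⟩, fun h => ⟨h.1, hc⟩⟩

lemma DRel_word (k : ℕ) {n m : ℕ} (hn : 2 ≤ n) (hm : 2 ≤ m) (f : Fin n → Fin n)
    (g : Fin m → Fin m) (h : DRel k f g) (i : ℕ) (W : Fin i → Bool) :
    DRel k (applyWord f i W) (applyWord g i W) := by
  induction i with
  | zero => exact h
  | succ i ih =>
    exact DRel_step k (n := n + i) (m := m + i) (by omega) (by omega) _ _ _ (ih _)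

/-- Theorem `thm:id`: for `k ∈ {0,1,2}`, two `k`-convex permutations
`π = ab…cd` and `τ = ab…c'd` (`n, m ≥ 4`) agreeing on their first two entries and
their last entries, such that both `R(π)` and `R(τ)` are `k`-convex, are
identically-descending: `d_k(π, i) = d_k(τ, i)` for all `i ≥ 0`. -/
theorem identically_descending_thm (k : ℕ) (hk : k ≤ 2)
    (n m : ℕ) (hn : 4 ≤ n) (hm : 4 ≤ m)
    (π : Equiv.Perm (Fin n)) (τ : Equiv.Perm (Fin m))
    (hπ : IsKConvex k ⇑π) (hτ : IsKConvex k ⇑τ)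
    (h1 : (π ⟨0, by omega⟩ : ℕ) = (τ ⟨0, by omega⟩ : ℕ))
    (h2 : (π ⟨1, by omega⟩ : ℕ) = (τ ⟨1, by omega⟩ : ℕ))
    (hlast : (π ⟨n - 1, by omega⟩ : ℕ) = (τ ⟨m - 1, by omega⟩ : ℕ))
    (hRπ : IsKConvex k (Rf ⇑π)) (hRτ : IsKConvex k (Rf ⇑τ)) :
    ∀ i : ℕ, dk k ⇑π i = dk k ⇑τ i := by
  intro i
  have hR : DRel k ⇑π ⇑τ := by
    have a := ((convex_R k (by omega) _).1 hRπ).2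
    have b := ((convex_R k (by omega) _).1 hRτ).2
    refine ⟨?_, ?_, ?_, ?_, Or.inr ⟨a, b⟩, iff_of_true hπ hτ⟩
    · simp only [vv, dif_pos (show 0 < n by omega), dif_pos (show 0 < m by omega), h1]
    · simp only [vv, dif_pos (show 1 < n by omega), dif_pos (show 1 < m by omega), h2]
    · simp only [vv, dif_pos (show n - 1 < n by omega), dif_pos (show m - 1 < m by omega), hlast]
    · simp only [vv, dif_pos (show n - 1 < n by omega)]
      positivity
  unfold dk
  refine Nat.card_congr (Equiv.subtypeEquivRight fun W => ?_)
  exact (DRel_word k (show 2 ≤ n by omega) (show 2 ≤ m by omega) _ _ hR i W).2.2.2.2.2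
end

section
/- For k ∈ {1, 2}, the limit C_k := lim_{n→∞} f_k(n)^{1/n} exists and is a finite real number, and f_k(n) = Θ(C_k^n); that is, there exist positive real constants c₁ and c₂ such that c₁ · C_k^n ≤ f_k(n) ≤ c₂ · C_k^n for all n ≥ 1. -/
open Filter

/-- Number of valid continuations of length `n` from a state. -/
noncomputable def TT (κ : ℕ) : ℕ → ℕ∞ → ℕ∞ → ℕ∞ → ℕ
  | 0, _, _, _ => 1
  | n+1, g, e, d => (if 1 ≤ e then TT κ n 0 (e-1) (d+1) else 0) + TT κ n d (g+κ) 1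

theorem TT_zero (κ : ℕ) (g e d : ℕ∞) : TT κ 0 g e d = 1 := rfl

theorem TT_succ0 (κ n : ℕ) (g d : ℕ∞) : TT κ (n+1) g 0 d = TT κ n d (g+κ) 1 := by
  rw [TT]; simp

theorem TT_succ1 (κ n : ℕ) (g e d : ℕ∞) :
    TT κ (n+1) g (e+1) d = TT κ n 0 e (d+1) + TT κ n d (g+κ) 1 := by
  rw [TT, if_pos (by simp)]
  congr 2
  induction e using ENat.recTopCoe with
  | top => rfl
  | coe a => norm_cast

theorem TT_succT (κ n : ℕ) (g d : ℕ∞) :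
    TT κ (n+1) g ⊤ d = TT κ n 0 ⊤ (d+1) + TT κ n d (g+κ) 1 := by
  have := TT_succ1 κ n g ⊤ d
  simpa using this

theorem TT_mono (κ n : ℕ) : ∀ {g e d g' e' d' : ℕ∞}, g ≤ g' → e ≤ e' → d ≤ d' →
    TT κ n g e d ≤ TT κ n g' e' d' := by
  induction n with
  | zero => intros; simp [TT_zero]
  | succ n ih =>
    intro g e d g' e' d' hg he hd
    rw [TT, TT]
    have h2 : TT κ n d (g+κ) 1 ≤ TT κ n d' (g'+κ) 1 := ih hd (by gcongr) le_rfl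
    have h1 : (if 1 ≤ e then TT κ n 0 (e-1) (d+1) else 0) ≤
        (if 1 ≤ e' then TT κ n 0 (e'-1) (d'+1) else 0) := by
      by_cases h : 1 ≤ e
      · rw [if_pos h, if_pos (h.trans he)]
        exact ih le_rfl (tsub_le_tsub_right he 1) (by gcongr)
      · rw [if_neg h]; exact Nat.zero_le _
    omega

theorem TT_switch (κ n : ℕ) (g e d : ℕ∞) : TT κ n d (g+κ) 1 ≤ TT κ (n+1) g e d := by
  rw [TT]; omega

theorem TT_double (κ n : ℕ) : ∀ (g e d : ℕ∞), TT κ (n+1) g e d ≤ 2 * TT κ n g e d := by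
  induction n with
  | zero => intro g e d; simp only [TT]; split_ifs <;> omega
  | succ n ih =>
    intro g e d
    rw [TT, show TT κ (n+1) g e d = _ from TT.eq_2 κ g e d n]
    have h2 := ih d (g+κ) 1
    have h1 := ih 0 (e-1) (d+1)
    split_ifs <;> omega

theorem TT_incr (κ n : ℕ) : ∀ (g e d : ℕ∞), TT κ n g e d ≤ TT κ (n+1) g e d := by
  induction n with
  | zero => intro g e d; simp only [TT]; split_ifs <;> omega
  | succ n ih =>
    intro g e d
    rw [TT.eq_2 κ g e d n, TT.eq_2 κ g e d (n+1)]
    have h2 := ih d (g+κ) 1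
    have h1 := ih 0 (e-1) (d+1)
    split_ifs <;> omega

theorem TT_pos (κ n : ℕ) (g e d : ℕ∞) : 1 ≤ TT κ n g e d := by
  induction n with
  | zero => simp [TT_zero]
  | succ n ih => exact ih.trans (TT_incr κ n g e d)

theorem TT_le_pow (κ n : ℕ) (g e d : ℕ∞) : TT κ n g e d ≤ 2 ^ n := by
  induction n with
  | zero => simp [TT_zero]
  | succ n ih => have := TT_double κ n g e d; rw [pow_succ]; omega

noncomputable def aa (κ n : ℕ) : ℕ := TT κ n ⊤ ⊤ ⊤
noncomputable def bb (κ n : ℕ) : ℕ := TT κ n 0 ⊤ ⊤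
noncomputable def qq (κ n : ℕ) : ℕ := TT κ n 1 (1+κ) 1

theorem qq_le (κ n : ℕ) (g e d : ℕ∞) : qq κ n ≤ TT κ (n+3) g e d :=
  (TT_switch κ n 1 (d+κ) 1).trans
    ((TT_switch κ (n+1) d (g+κ) 1).trans (TT_switch κ (n+2) g e d))

theorem qq_succ (κ n : ℕ) : qq κ (n+1) = TT κ n 0 κ 2 + qq κ n := by
  rw [qq, add_comm (1:ℕ∞) (κ:ℕ∞), TT_succ1, qq, one_add_one_eq_two]

theorem qq_incr (κ n : ℕ) : qq κ n ≤ qq κ (n+1) := TT_incr _ _ _ _ _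
theorem qq_double (κ n : ℕ) : qq κ (n+1) ≤ 2 * qq κ n := TT_double _ _ _ _ _

theorem qq_growth0 (n : ℕ) : qq 0 (n+6) + qq 0 (n+4) + qq 0 n ≤ qq 0 (n+7) := by
  have e1 := qq_succ 0 (n+6)
  have e2 := qq_succ 0 (n+3)
  have h1 : TT 0 (n+6) 0 0 2 = TT 0 (n+4) 1 2 1 := by
    rw [TT_succ0, Nat.cast_zero, zero_add, TT_succ0]; simp
  have h2 : TT 0 (n+3) 0 0 2 = TT 0 (n+2) 2 0 1 := by
    rw [TT_succ0]; simp
  have h3 : TT 0 (n+4) 1 2 1 = TT 0 (n+3) 0 1 2 + qq 0 (n+3) := by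
    rw [← one_add_one_eq_two, TT_succ1, qq]
  have h4 : TT 0 (n+3) 0 1 2 = TT 0 (n+2) 0 0 3 + TT 0 (n+2) 2 0 1 := by
    have := TT_succ1 0 (n+2) 0 0 2
    rw [zero_add] at this
    rw [this, two_add_one_eq_three]; simp
  have h5 : TT 0 (n+2) 0 0 3 = TT 0 n 1 3 1 := by
    rw [TT_succ0, Nat.cast_zero, zero_add, TT_succ0]; simp
  have h6 : qq 0 n ≤ TT 0 n 1 3 1 := TT_mono _ _ le_rfl (by norm_num) le_rfl
  simp only [Nat.cast_zero, Nat.add_assoc, Nat.reduceAdd] at *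
  omega

theorem qq_growth1 (n : ℕ) : qq 1 (n+6) + qq 1 (n+4) + qq 1 n ≤ qq 1 (n+7) := by
  have e1 := qq_succ 1 (n+6)
  have h1 : TT 1 (n+6) 0 1 2 = TT 1 (n+5) 0 0 3 + TT 1 (n+5) 2 1 1 := by
    have := TT_succ1 1 (n+5) 0 0 2
    rw [zero_add] at this
    rw [this, two_add_one_eq_three]; simp
  have h2 := qq_le 1 (n+2) 0 0 3
  have h3 := TT_switch 1 (n+4) 2 1 1
  have h6 : qq 1 (n+4) ≤ TT 1 (n+4) 1 (2+(1:ℕ)) 1 := TT_mono _ _ le_rfl (by norm_num) le_rfl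
  have := qq_incr 1 n
  have := qq_incr 1 (n+1)
  simp only [Nat.cast_one, Nat.add_assoc, Nat.reduceAdd] at *
  omega

theorem bb_rec (κ n : ℕ) (hκ : κ = 0 ∨ κ = 1) :
    bb κ (n+3) ≤ bb κ (n+2) + qq κ (n+2) + bb κ n + qq κ n := by
  have h1 : bb κ (n+3) = bb κ (n+2) + TT κ (n+2) ⊤ κ 1 := by
    rw [bb, TT_succT]; simp [bb]
  have h2 : TT κ (n+2) ⊤ κ 1 ≤ qq κ (n+2) + TT κ (n+1) 1 ⊤ 1 := by
    rcases hκ with rfl | rfl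
    · rw [Nat.cast_zero, TT_succ0]; simp
    · have := TT_succ1 1 (n+1) ⊤ 0 1
      rw [zero_add] at this
      rw [Nat.cast_one, this, qq_succ]
      have : TT 1 (n+1) 0 0 (1+1) ≤ TT 1 (n+1) 0 (1:ℕ) 2 :=
        TT_mono _ _ le_rfl (by norm_num) (by norm_num)
      simp only [top_add]
      omega
  have h3 : TT κ (n+1) 1 ⊤ 1 ≤ bb κ n + qq κ n := by
    rw [TT_succT]
    have : TT κ n 0 ⊤ (1+1) ≤ bb κ n := TT_mono _ _ le_rfl le_rfl le_top
    rw [qq]; omega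
  omega

theorem bb_le (κ : ℕ) (hκ : κ = 0 ∨ κ = 1) (n : ℕ) : bb κ n ≤ 128 * qq κ n := by
  induction n using Nat.strong_induction_on with
  | _ n ih =>
    by_cases hn : n < 7
    · have h1 : bb κ n ≤ 2 ^ n := TT_le_pow _ _ _ _ _
      have h2 : 1 ≤ qq κ n := TT_pos _ _ _ _ _
      have : 2 ^ n ≤ 2 ^ 7 := Nat.pow_le_pow_right (by norm_num) hn.le
      omega
    · obtain ⟨m, rfl⟩ : ∃ m, n = m + 7 := ⟨n - 7, by omega⟩
      have h := bb_rec κ (m+4) hκ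
      have h1 := ih (m+6) (by omega)
      have h2 := ih (m+4) (by omega)
      have hg : qq κ (m+6) + qq κ (m+4) + qq κ m ≤ qq κ (m+7) := by
        rcases hκ with rfl | rfl
        · exact qq_growth0 m
        · exact qq_growth1 m
      have := qq_double κ m
      have := qq_double κ (m+1)
      have := qq_double κ (m+2)
      have := qq_double κ (m+3)
      have := qq_double κ (m+4)
      have := qq_double κ (m+5)
      simp only [Nat.add_assoc, Nat.reduceAdd] at *
      omega

theorem aa_le (κ : ℕ) (hκ : κ = 0 ∨ κ = 1) (n : ℕ) (g e d : ℕ∞) :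
    aa κ n ≤ 4104 * TT κ n g e d := by
  have i1 : aa κ n ≤ aa κ (n+1) := TT_incr _ _ _ _ _
  have i2 : aa κ (n+1) ≤ aa κ (n+2) := TT_incr _ _ _ _ _
  have h1 : aa κ (n+2) = bb κ (n+1) + TT κ (n+1) ⊤ ⊤ 1 := by
    have h : aa κ (n+2) = bb κ (n+1) + TT κ (n+1) ⊤ ⊤ 1 := by
      rw [aa, TT_succT]; simp [bb]
    exact h
  have h2 : TT κ (n+1) ⊤ ⊤ 1 ≤ bb κ n + TT κ n 1 ⊤ 1 := by
    rw [TT_succT]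
    have : TT κ n 0 ⊤ (1+1) ≤ bb κ n := TT_mono _ _ le_rfl le_rfl le_top
    simp only [top_add]
    omega
  have h3 : TT κ (n+1) 1 ⊤ 1 ≤ bb κ n + qq κ n := by
    rw [TT_succT]
    have : TT κ n 0 ⊤ (1+1) ≤ bb κ n := TT_mono _ _ le_rfl le_rfl le_top
    rw [qq]; omega
  have h4 := TT_incr κ n 1 ⊤ 1
  have h5 : bb κ (n+1) ≤ 2 * bb κ n := TT_double _ _ _ _ _
  have h6 := bb_le κ hκ n
  have h7 := qq_le κ n g e d
  have := TT_double κ n g e d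
  have := TT_double κ (n+1) g e d
  have := TT_double κ (n+2) g e d
  simp only [Nat.add_assoc, Nat.reduceAdd] at *
  omega

theorem TT_le_aa (κ n : ℕ) (g e d : ℕ∞) : TT κ n g e d ≤ aa κ n :=
  TT_mono _ _ le_top le_top le_top

theorem TT_add_le (κ m n : ℕ) : ∀ (g e d : ℕ∞),
    TT κ (m+n) g e d ≤ TT κ m g e d * aa κ n := by
  induction m with
  | zero => intro g e d; simpa [TT_zero] using TT_le_aa κ n g e d
  | succ m ih =>
    intro g e d
    rw [Nat.add_right_comm, TT, TT, add_mul]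
    refine Nat.add_le_add ?_ (ih _ _ _)
    split_ifs
    · exact ih _ _ _
    · simp

theorem le_TT_add (κ m n : ℕ) (hκ : κ = 0 ∨ κ = 1) : ∀ (g e d : ℕ∞),
    TT κ m g e d * aa κ n ≤ 4104 * TT κ (m+n) g e d := by
  induction m with
  | zero => intro g e d; simpa [TT_zero] using aa_le κ hκ n g e d
  | succ m ih =>
    intro g e d
    rw [Nat.add_right_comm, TT, TT, add_mul, mul_add]
    refine Nat.add_le_add ?_ (ih _ _ _)
    split_ifs
    · exact ih _ _ _
    · simp

theorem aa_growth (κ : ℕ) (hκ : κ = 0 ∨ κ = 1) :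
    ∃ C : ℝ, 1 ≤ C ∧ ∀ n, C ^ n ≤ aa κ n ∧ (aa κ n : ℝ) ≤ 4104 * C ^ n := by
  have hpos : ∀ n, (1:ℝ) ≤ aa κ n := fun n => by exact_mod_cast TT_pos κ n _ _ _
  have hlog : ∀ n, 0 ≤ Real.log (aa κ n) := fun n => Real.log_nonneg (hpos n)
  have hsub : Subadditive (fun n => Real.log (aa κ n)) := by
    intro m n
    rw [← Real.log_mul (by linarith [hpos m]) (by linarith [hpos n])]
    apply Real.log_le_log (by linarith [hpos (m+n)])
    exact_mod_cast TT_add_le κ m n _ _ _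
  have hsup : Subadditive (fun n => Real.log 4104 - Real.log (aa κ n)) := by
    intro m n
    have : Real.log (aa κ m) + Real.log (aa κ n) ≤ Real.log 4104 + Real.log (aa κ (m+n)) := by
      rw [← Real.log_mul (by linarith [hpos m]) (by linarith [hpos n]),
        ← Real.log_mul (by norm_num) (by linarith [hpos (m+n)])]
      apply Real.log_le_log
      · have := hpos m; have := hpos n; positivity
      · exact_mod_cast le_TT_add κ m n hκ ⊤ ⊤ ⊤
    linarith
  have hbdd : BddBelow (Set.range fun n => Real.log (aa κ n) / (n:ℝ)) :=
    ⟨0, by rintro _ ⟨n, rfl⟩; exact div_nonneg (hlog n) (Nat.cast_nonneg n)⟩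
  have hup : ∀ n : ℕ, Real.log (aa κ n) ≤ n * Real.log 2 := by
    intro n
    rw [← Real.log_pow]
    apply Real.log_le_log (by linarith [hpos n])
    exact_mod_cast TT_le_pow κ n _ _ _
  have hbdd2 : BddBelow (Set.range fun n => (Real.log 4104 - Real.log (aa κ n)) / (n:ℝ)) := by
    refine ⟨- Real.log 2, ?_⟩
    rintro _ ⟨n, rfl⟩
    rcases Nat.eq_zero_or_pos n with rfl | hn
    · simp; exact Real.log_nonneg (by norm_num)
    · have : (0:ℝ) < n := by exact_mod_cast hn
      simp only
      rw [le_div_iff₀ this]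
      have := hup n
      have : 0 ≤ Real.log 4104 := Real.log_nonneg (by norm_num)
      linarith
  have t1 := hsub.tendsto_lim hbdd
  have t2 := hsup.tendsto_lim hbdd2
  have t3 : Tendsto (fun n : ℕ => (Real.log 4104 - Real.log (aa κ n)) / (n:ℝ)) atTop
      (nhds (0 - hsub.lim)) := by
    simp_rw [sub_div]
    exact (tendsto_const_div_atTop_nhds_zero_nat _).sub t1
  have hl := tendsto_nhds_unique t2 t3
  have hC0 : 0 ≤ hsub.lim :=
    ge_of_tendsto' t1 fun n => div_nonneg (hlog n) (Nat.cast_nonneg n)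
  refine ⟨Real.exp hsub.lim, Real.one_le_exp hC0, fun n => ?_⟩
  rw [← Real.exp_nat_mul]
  rcases Nat.eq_zero_or_pos n with rfl | hn
  · simp [aa, TT_zero]
  have hn' : (0:ℝ) < n := by exact_mod_cast hn
  have l1 := hsub.lim_le_div hbdd hn.ne'
  have l2 := hsup.lim_le_div hbdd2 hn.ne'
  rw [hl] at l2
  rw [le_div_iff₀ hn'] at l1 l2
  constructor
  · rw [← Real.le_log_iff_exp_le (by linarith [hpos n])]; linarith
  · rw [← Real.exp_log (show (0:ℝ) < 4104 by norm_num), ← Real.exp_add,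
      ← Real.log_le_iff_le_exp (by linarith [hpos n])]
    linarith

/-- list version of `k`-convexity -/
def KC (k : ℤ) : List ℤ → Prop
  | a :: b :: c :: t => a + c - 2 * b ≤ k ∧ KC k (b :: c :: t)
  | _ => True

theorem KC_cons3 (k a b c : ℤ) (t : List ℤ) :
    KC k (a :: b :: c :: t) ↔ a + c - 2 * b ≤ k ∧ KC k (b :: c :: t) := by
  rw [KC]

theorem KC_snoc (k a b c : ℤ) (l : List ℤ) :
    KC k (l ++ [a, b, c]) ↔ KC k (l ++ [a, b]) ∧ a + c - 2 * b ≤ k := by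
  induction l with
  | nil => simp [KC]
  | cons x l ih =>
    match l, ih with
    | [], ih => simp [KC]
    | [y], ih => simp [KC]; tauto
    | y :: z :: t, ih =>
      simp only [List.cons_append, KC_cons3] at ih ⊢
      rw [ih]; tauto

theorem KC_reverse (k : ℤ) (l : List ℤ) : KC k l.reverse ↔ KC k l := by
  induction l with
  | nil => rfl
  | cons x l ih =>
    match l, ih with
    | [], ih => simp [KC]
    | [y], ih => simp [KC]
    | y :: z :: t, ih =>
      rw [KC_cons3, ← ih]
      have e1 : (x :: y :: z :: t).reverse = t.reverse ++ [z, y, x] := by simp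
      have e2 : (y :: z :: t).reverse = t.reverse ++ [z, y] := by simp
      rw [e1, e2, KC_snoc]
      constructor
      · rintro ⟨h1, h2⟩; exact ⟨by linarith, h1⟩
      · rintro ⟨h1, h2⟩; exact ⟨h2, by linarith⟩

theorem KC_tail (k x : ℤ) (l : List ℤ) (h : KC k (x :: l)) : KC k l := by
  match l, h with
  | [], _ => trivial
  | [y], _ => trivial
  | y :: z :: t, h => exact h.2

theorem KC_append_right (k : ℤ) (p l : List ℤ) (h : KC k (p ++ l)) : KC k l := by
  induction p with
  | nil => exact h
  | cons x p ih => exact ih (KC_tail k x _ h)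

theorem KC_append_left (k : ℤ) (p l : List ℤ) (h : KC k (p ++ l)) : KC k p := by
  rw [← KC_reverse] at h ⊢
  rw [List.reverse_append] at h
  exact KC_append_right k _ _ h

theorem KC_mid (k u v w : ℤ) (p s : List ℤ) (h : KC k (p ++ u :: v :: w :: s)) :
    u + w - 2 * v ≤ k := (KC_append_right k _ _ h).1

theorem KC_iff (k : ℤ) (l : List ℤ) :
    KC k l ↔ ∀ i (h : i + 2 < l.length), l[i] + l[i+2] - 2 * l[i+1] ≤ k := by
  induction l with
  | nil => simp [KC]
  | cons x l ih =>
    match l, ih with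
    | [], ih => simp [KC]
    | [y], ih => simp [KC]
    | y :: z :: t, ih =>
      rw [KC_cons3, ih]
      constructor
      · rintro ⟨h1, h2⟩ i hi
        cases i with
        | zero => exact h1
        | succ i => exact h2 i (by simpa using hi)
      · intro h
        refine ⟨h 0 (by simp), fun i hi => ?_⟩
        exact h (i+1) (by simpa using hi)

/-- the values `v, v+1, ..., v+m` -/
def vals : ℕ → ℤ → List ℤ
  | 0, v => [v]
  | m+1, v => v :: vals m (v+1)

theorem mem_vals (m : ℕ) : ∀ (v x : ℤ), x ∈ vals m v ↔ v ≤ x ∧ x ≤ v + m := by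
  induction m with
  | zero => intro v x; simp [vals]; omega
  | succ m ih => intro v x; simp [vals, ih]; omega

theorem vals_ne_nil (m : ℕ) (v : ℤ) : vals m v ≠ [] := by
  cases m <;> simp [vals]

theorem nodup_vals (m : ℕ) : ∀ (v : ℤ), (vals m v).Nodup := by
  induction m with
  | zero => intro v; simp [vals]
  | succ m ih => intro v; simp [vals, ih, mem_vals]

theorem length_vals (m : ℕ) : ∀ (v : ℤ), (vals m v).length = m + 1 := by
  induction m with
  | zero => intro v; simp [vals]
  | succ m ih => intro v; simp [vals, ih]

/-- arrangements of `v, ..., v+m` that are convex in context -/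
def ZZ (k : ℤ) (m : ℕ) (v x1 x2 y1 y2 : ℤ) : Set (List ℤ) :=
  {l | l.Perm (vals m v) ∧ KC k (x1 :: x2 :: (l ++ [y2, y1]))}

theorem ZZ_reverse (k : ℤ) (m : ℕ) (v x1 x2 y1 y2 : ℤ) (l : List ℤ)
    (h : l ∈ ZZ k m v x1 x2 y1 y2) : l.reverse ∈ ZZ k m v y1 y2 x1 x2 := by
  refine ⟨(List.reverse_perm l).trans h.1, ?_⟩
  have := (KC_reverse k _).2 h.2
  simpa using this

theorem ZZ_swap (k : ℤ) (m : ℕ) (v x1 x2 y1 y2 : ℤ) :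
    (ZZ k m v x1 x2 y1 y2).encard = (ZZ k m v y1 y2 x1 x2).encard := by
  rw [← (List.reverse_injective.injOn (s := ZZ k m v x1 x2 y1 y2)).encard_image]
  congr 1
  ext l
  constructor
  · rintro ⟨l', h, rfl⟩; exact ZZ_reverse _ _ _ _ _ _ _ _ h
  · intro h; exact ⟨l.reverse, ZZ_reverse _ _ _ _ _ _ _ _ h, by simp⟩

theorem ZZ_empty (k : ℤ) (m : ℕ) (v x1 x2 y1 y2 : ℤ) (h : k < x1 + v - 2 * x2) :
    ZZ k m v x1 x2 y1 y2 = ∅ := by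
  ext l
  simp only [Set.mem_empty_iff_false, iff_false]
  rintro ⟨h1, h2⟩
  match l, h1, h2 with
  | [], h1, h2 => exact vals_ne_nil m v (by simpa using h1)
  | a :: t, h1, h2 =>
    have ha : a ∈ vals m v := h1.subset (by simp)
    rw [mem_vals] at ha
    have := h2.1
    linarith [ha.1]

theorem ZZ_step (k : ℤ) (hk : k ≤ 2) (m : ℕ) (v x1 x2 y1 y2 : ℤ)
    (hx : x1 + v - 2 * x2 ≤ k) (hy : y1 + v - 2 * y2 ≤ k) :
    (ZZ k (m+1) v x1 x2 y1 y2).encard =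
      (ZZ k m (v+1) x2 v y1 y2).encard + (ZZ k m (v+1) x1 x2 y2 v).encard := by
  have e : ZZ k (m+1) v x1 x2 y1 y2 = (fun l => v :: l) '' ZZ k m (v+1) x2 v y1 y2 ∪
      (fun l => l ++ [v]) '' ZZ k m (v+1) x1 x2 y2 v := by
    ext l
    constructor
    · rintro ⟨h1, h2⟩
      have hv : v ∈ l := h1.symm.subset (by simp [vals])
      obtain ⟨p, s, rfl⟩ := List.append_of_mem hv
      have hps : (p ++ s).Perm (vals m (v+1)) := by
        have : (v :: (p ++ s)).Perm (v :: vals m (v+1)) := List.perm_middle.symm.trans h1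
        exact this.cons_inv
      rcases List.eq_nil_or_concat p with rfl | ⟨p', u, rfl⟩
      · left
        exact ⟨s, ⟨by simpa using hps, by simpa using h2.2⟩, rfl⟩
      · rcases s with _ | ⟨w, s'⟩
        · right
          refine ⟨_, ⟨by simpa using hps, ?_⟩, rfl⟩
          have h3 : KC k ((x1 :: x2 :: (p' ++ [u])) ++ [v, y2, y1]) := by simpa using h2
          rw [KC_snoc] at h3
          simpa using h3.1
        · exfalso
          have h3 : KC k ((x1 :: x2 :: p') ++ u :: v :: w :: (s' ++ [y2, y1])) := by
            simpa using h2
          have h4 := KC_mid _ _ _ _ _ _ h3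
          have hu := (mem_vals m (v+1) u).1 (hps.subset (by simp))
          have hw := (mem_vals m (v+1) w).1 (hps.subset (by simp))
          have hne : u ≠ w := by
            have := hps.nodup_iff.2 (nodup_vals m (v+1))
            rintro rfl
            simp [List.nodup_append] at this
          omega
    · rintro (⟨l, ⟨h1, h2⟩, rfl⟩ | ⟨l, ⟨h1, h2⟩, rfl⟩)
      · exact ⟨h1.cons v, by simpa [KC_cons3, hx] using h2⟩
      · refine ⟨(List.perm_append_singleton v l).trans (h1.cons v), ?_⟩
        have h3 : KC k ((x1 :: x2 :: l) ++ [v, y2, y1]) := by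
          rw [KC_snoc]; exact ⟨by simpa using h2, by linarith⟩
        simpa using h3
  rw [e, Set.encard_union_eq]
  · rw [Function.Injective.encard_image (fun a b h => by simpa using h),
      Function.Injective.encard_image (fun a b h => by simpa using h)]
  · rw [Set.disjoint_left]
    rintro _ ⟨l, h, rfl⟩ ⟨l', h', e⟩
    rcases l' with _ | ⟨a, t⟩
    · exact vals_ne_nil m (v+1) (by simpa using h'.1)
    · simp only [List.cons_append, List.cons.injEq] at e
      have := (mem_vals m (v+1) a).1 (h'.1.subset (by simp))
      omega

theorem ZZ_zero (k : ℤ) (v x1 x2 y1 y2 : ℤ)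
    (hx : x1 + v - 2 * x2 ≤ k) (hy : y1 + v - 2 * y2 ≤ k) (hxy : x2 + y2 - 2 * v ≤ k) :
    (ZZ k 0 v x1 x2 y1 y2).encard = 1 := by
  have : ZZ k 0 v x1 x2 y1 y2 = {[v]} := by
    ext l
    simp only [ZZ, vals, List.perm_singleton, Set.mem_ofPred_eq, Set.mem_singleton_iff]
    constructor
    · exact fun h => h.1
    · rintro rfl
      refine ⟨rfl, ?_⟩
      simp only [List.cons_append, List.nil_append, KC, and_true]
      refine ⟨hx, hxy, by linarith⟩
  rw [this, Set.encard_singleton]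

theorem ZZ_card (κ : ℕ) (hκ : κ = 0 ∨ κ = 1) (m : ℕ) : ∀ (v x1 y1 y2 : ℤ) (g e d : ℕ),
    x1 = v - 2 - g → v = y2 + 1 + d → κ + 1 + 2 * y2 - y1 - v = e →
    (ZZ (κ+1) m v x1 (v-1) y1 y2).encard = TT κ m g e d := by
  induction m with
  | zero =>
    intro v x1 y1 y2 g e d hx1 hd he
    rw [TT_zero, ZZ_zero] <;> simp <;> omega
  | succ m ih =>
    intro v x1 y1 y2 g e d hx1 hd he
    rw [ZZ_step _ (by omega) _ _ _ _ _ _ (by omega) (by omega)]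
    have h2 : (ZZ (κ+1) m (v+1) x1 (v-1) y2 v).encard = TT κ m d (g+κ) 1 := by
      rw [ZZ_swap]
      have := ih (v+1) y2 x1 (v-1) d (g+κ) 1 (by omega) (by omega) (by push_cast; omega)
      simpa using this
    rw [h2]
    rcases e with _ | e
    · rw [← ZZ_swap, ZZ_empty _ _ _ _ _ _ _ (by push_cast at he; omega)]
      simp [TT_succ0]
    · have h1 := ih (v+1) (v-1) y1 y2 0 e (d+1) (by push_cast; omega) (by push_cast; omega)
        (by push_cast at he; omega)
      rw [add_sub_cancel_right] at h1
      rw [h1]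
      push_cast
      rw [TT_succ1]
      push_cast
      rfl

/-- the one-line notation of a permutation, as a list of integers -/
def LL {n : ℕ} (π : Equiv.Perm (Fin n)) : List ℤ := List.ofFn (fun i => ((π i : ℕ) : ℤ))

theorem LL_inj {n : ℕ} : Function.Injective (LL (n := n)) := by
  intro π σ h
  have := List.ofFn_injective h
  ext i
  have := congrFun this i
  simpa using this

theorem LL_perm {m : ℕ} (π : Equiv.Perm (Fin (m+1))) : (LL π).Perm (vals m 0) := by
  rw [List.perm_ext_iff_of_nodup _ (nodup_vals m 0)]
  · intro a
    rw [mem_vals, LL, List.mem_ofFn']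
    constructor
    · rintro ⟨i, rfl⟩
      have := (π i).2
      simp only
      omega
    · rintro ⟨h1, h2⟩
      refine ⟨π.symm ⟨a.toNat, by omega⟩, ?_⟩
      simp [h1]
  · rw [LL, List.nodup_ofFn]
    intro i j h
    apply π.injective
    ext
    simpa using h

theorem LL_KC (k : ℕ) {n : ℕ} (π : Equiv.Perm (Fin n)) : KC k (LL π) ↔ IsKConvex k ⇑π := by
  rw [KC_iff]
  simp only [LL, List.length_ofFn, List.getElem_ofFn]
  constructor
  · rintro h ⟨i, hi⟩ ⟨j, hj⟩ ⟨l, hl⟩ h1 h2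
    simp only at h1 h2
    subst h1
    subst h2
    exact h i hl
  · intro h i hi
    exact h ⟨i, _⟩ ⟨i+1, _⟩ ⟨i+2, hi⟩ rfl rfl

theorem LL_surj {m : ℕ} (l : List ℤ) (h : l.Perm (vals m 0)) :
    ∃ π : Equiv.Perm (Fin (m+1)), LL π = l := by
  have hlen : l.length = m + 1 := by rw [h.length_eq, length_vals]
  have hmem : ∀ i (hi : i < l.length), 0 ≤ l[i] ∧ l[i] ≤ m := by
    intro i hi
    have := (mem_vals m 0 l[i]).1 (h.subset (List.getElem_mem hi))
    omega
  have hnd : l.Nodup := h.nodup_iff.2 (nodup_vals m 0)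
  let f : Fin (m+1) → Fin (m+1) := fun i =>
    ⟨(l[(i:ℕ)]'(by omega)).toNat, by have := hmem i (by omega); omega⟩
  have hf : Function.Injective f := by
    intro i j hij
    have h1 := hmem i (by omega)
    have h2 := hmem j (by omega)
    have h3 : (l[(i:ℕ)]'(by omega)).toNat = (l[(j:ℕ)]'(by omega)).toNat := congrArg Fin.val hij
    have h4 : l[(i:ℕ)]'(by omega) = l[(j:ℕ)]'(by omega) := by omega
    ext
    exact (hnd.getElem_inj_iff).1 h4
  refine ⟨Equiv.ofBijective f (Finite.injective_iff_bijective.1 hf), ?_⟩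
  apply List.ext_getElem
  · simp [LL, hlen]
  · intro i h1 h2
    have := hmem i h2
    simp only [LL, f, List.getElem_ofFn, Equiv.ofBijective_apply]
    omega

theorem fk_encard (k n : ℕ) :
    (fk k n : ℕ∞) = (LL '' {π : Equiv.Perm (Fin n) | IsKConvex k ⇑π}).encard := by
  rw [LL_inj.encard_image, ← Set.Finite.cast_ncard_eq (Set.toFinite _)]
  rfl

theorem le_fk (k m : ℕ) (x1 x2 y1 y2 : ℤ) :
    (ZZ k m 0 x1 x2 y1 y2).encard ≤ fk k (m+1) := by
  rw [fk_encard]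
  apply Set.encard_le_encard
  rintro l ⟨h1, h2⟩
  obtain ⟨π, rfl⟩ := LL_surj l h1
  refine ⟨π, ?_, rfl⟩
  exact (LL_KC k π).1 (KC_append_left _ _ _ (KC_tail _ _ _ (KC_tail _ _ _ h2)))

theorem KC_ctx (k : ℕ) (N : ℤ) (l : List ℤ) (h : KC k l) (hall : ∀ x ∈ l, x ≤ N)
    (hh : ∀ b ∈ l.head?, 0 ≤ b) (hN : 0 ≤ N) : KC k ((-10*N) :: (-3*N) :: l) := by
  match l, h, hall, hh with
  | [], _, _, _ => trivial
  | [b], _, hall, hh =>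
    have := hall b (by simp)
    refine ⟨by linarith, trivial⟩
  | b :: c :: t, h, hall, hh =>
    have h1 := hall b (by simp)
    have h2 := hall c (by simp)
    have h3 := hh b (by simp)
    refine ⟨by linarith, by linarith, h⟩

theorem fk_le (k m : ℕ) :
    (fk k (m+1) : ℕ∞) ≤ (ZZ k m 0 (-10*m) (-3*m) (-10*m) (-3*m)).encard := by
  rw [fk_encard]
  apply Set.encard_le_encard
  rintro _ ⟨π, hπ, rfl⟩
  have hp := LL_perm π
  have hmem : ∀ x ∈ LL π, 0 ≤ x ∧ x ≤ m := fun x hx => by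
    have := (mem_vals m 0 x).1 (hp.subset hx); omega
  have hne : LL π ≠ [] := fun h => vals_ne_nil m 0 (by simpa [h] using hp)
  refine ⟨hp, ?_⟩
  have h1 := (LL_KC k π).2 hπ
  generalize LL π = l at *
  have hm : (0:ℤ) ≤ m := by omega
  have h2 := KC_ctx k m l.reverse ((KC_reverse _ _).2 h1)
    (fun x hx => (hmem x (by simpa using hx)).2)
    (fun b hb => (hmem b (by simpa using List.mem_of_mem_head? hb)).1) hm
  rw [← KC_reverse] at h2
  have h3 : KC k (l ++ [-3*(m:ℤ), -10*m]) := by simpa using h2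
  refine KC_ctx k m _ h3 ?_ ?_ hm
  · intro x hx
    simp only [List.mem_append, List.mem_cons, List.not_mem_nil, or_false] at hx
    rcases hx with hx | rfl | rfl
    · exact (hmem x hx).2
    · linarith
    · linarith
  · intro b hb
    rcases l with _ | ⟨a, t⟩
    · exact absurd rfl hne
    · simp at hb
      subst hb
      exact (hmem _ (by simp)).1

theorem fk_lower (κ : ℕ) (hκ : κ = 0 ∨ κ = 1) (m : ℕ) : aa κ m ≤ 4104 * fk (κ+1) (m+1) := by
  have h := le_fk (κ+1) m (-2) (-1) (-2) (-1)
  have h2 := ZZ_card κ hκ m 0 (-2) (-2) (-1) 0 (κ+1) 0 (by simp) (by simp) (by push_cast; ring)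
  push_cast at h
  rw [zero_sub] at h2
  rw [h2] at h
  have h3 : TT κ m (0:ℕ) ((κ+1:ℕ):ℕ∞) (0:ℕ) ≤ fk (κ+1) (m+1) := by exact_mod_cast h
  have := aa_le κ hκ m (0:ℕ) ((κ+1:ℕ):ℕ∞) (0:ℕ)
  omega

theorem fk_upper (κ : ℕ) (hκ : κ = 0 ∨ κ = 1) (m : ℕ) : fk (κ+1) (m+2) ≤ 2 * aa κ m := by
  have h := fk_le (κ+1) (m+1)
  rw [ZZ_step _ (by push_cast; omega) _ _ _ _ _ _ (by push_cast; linarith)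
    (by push_cast; linarith), ZZ_swap _ _ _ (-10 * ((m+1:ℕ):ℤ))] at h
  have h2 := ZZ_card κ hκ m 1 (-3*((m+1:ℕ):ℤ)) (-10*((m+1:ℕ):ℤ)) (-3*((m+1:ℕ):ℤ))
    (3*m+2) (κ + 4 * m + 4) (3*m+3) (by push_cast; ring) (by push_cast; ring) (by push_cast; ring)
  rw [sub_self] at h2
  simp only [zero_add, Nat.cast_add κ 1, Nat.cast_one] at h h2
  rw [h2] at h
  have h3 := TT_le_aa κ m ((3*m+2:ℕ):ℕ∞) ((κ+4*m+4:ℕ):ℕ∞) ((3*m+3:ℕ):ℕ∞)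
  have h4 : fk (κ+1) (m+2) ≤ TT κ m ((3*m+2:ℕ):ℕ∞) ((κ+4*m+4:ℕ):ℕ∞) ((3*m+3:ℕ):ℕ∞)
    + TT κ m ((3*m+2:ℕ):ℕ∞) ((κ+4*m+4:ℕ):ℕ∞) ((3*m+3:ℕ):ℕ∞) := by exact_mod_cast h
  omega

theorem kconvex_growth_rate (k : ℕ) (hk : k = 1 ∨ k = 2) :
    ∃ C : ℝ,
      Tendsto (fun n : ℕ => (fk k n : ℝ) ^ (1 / (n : ℝ))) atTop (nhds C) ∧
      ∃ c₁ c₂ : ℝ, 0 < c₁ ∧ 0 < c₂ ∧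
        ∀ n : ℕ, 1 ≤ n →
          c₁ * C ^ n ≤ (fk k n : ℝ) ∧ (fk k n : ℝ) ≤ c₂ * C ^ n := by
  obtain ⟨κ, rfl, hκ⟩ : ∃ κ, k = κ + 1 ∧ (κ = 0 ∨ κ = 1) := ⟨k - 1, by omega, by omega⟩
  obtain ⟨C, hC1, hC⟩ := aa_growth κ hκ
  have hC0 : 0 < C := by linarith
  have key : ∃ c₁ c₂ : ℝ, 0 < c₁ ∧ 0 < c₂ ∧
        ∀ n : ℕ, 1 ≤ n →
          c₁ * C ^ n ≤ (fk (κ+1) n : ℝ) ∧ (fk (κ+1) n : ℝ) ≤ c₂ * C ^ n := by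
    refine ⟨1 / 8208, 8208 + fk (κ+1) 1, by norm_num, by positivity, ?_⟩
    intro n hn
    obtain ⟨m, rfl⟩ : ∃ m, n = m + 1 := ⟨n - 1, by omega⟩
    constructor
    · have h1 := fk_lower κ hκ m
      have h2 : aa κ (m+1) ≤ 2 * aa κ m := TT_double _ _ _ _ _
      have h3 := (hC (m+1)).1
      have h4 : (aa κ (m+1) : ℝ) ≤ 8208 * fk (κ+1) (m+1) := by
        have : aa κ (m+1) ≤ 8208 * fk (κ+1) (m+1) := by omega
        exact_mod_cast this
      linarith
    · have hp : (1:ℝ) ≤ C ^ (m+1) := one_le_pow₀ hC1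
      rcases m with _ | m
      · have : (0:ℝ) ≤ fk (κ+1) 1 := by positivity
        rw [zero_add] at *
        nlinarith
      · have h1 := fk_upper κ hκ m
        have i1 : aa κ m ≤ aa κ (m+1) := TT_incr _ _ _ _ _
        have i2 : aa κ (m+1) ≤ aa κ (m+2) := TT_incr _ _ _ _ _
        have h4 : (fk (κ+1) (m+2) : ℝ) ≤ 2 * aa κ (m+2) := by
          have : fk (κ+1) (m+2) ≤ 2 * aa κ (m+2) := by omega
          exact_mod_cast this
        have h3 := (hC (m+2)).2
        have : (0:ℝ) ≤ fk (κ+1) 1 * C ^ (m+2) := by positivity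
        have e : m + 1 + 1 = m + 2 := rfl
        rw [e]
        linarith
  refine ⟨C, ?_, key⟩
  obtain ⟨c₁, c₂, h1, h2, h⟩ := key
  have lim : ∀ c : ℝ, 0 < c →
      Tendsto (fun n : ℕ => (c * C ^ n) ^ (1 / (n : ℝ))) atTop (nhds C) := by
    intro c hc
    have t : Tendsto (fun n : ℕ => c ^ (1 / (n:ℝ)) * C) atTop (nhds (c ^ (0:ℝ) * C)) := by
      apply Tendsto.mul_const
      exact (Real.continuousAt_const_rpow hc.ne').tendsto.comp tendsto_one_div_atTop_nhds_zero_nat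
    rw [Real.rpow_zero, one_mul] at t
    refine t.congr' ?_
    filter_upwards [eventually_ge_atTop 1] with n hn
    rw [Real.mul_rpow hc.le (by positivity), one_div, Real.pow_rpow_inv_natCast hC0.le (by omega)]
  refine tendsto_of_tendsto_of_tendsto_of_le_of_le' (lim c₁ h1) (lim c₂ h2) ?_ ?_
  · filter_upwards [eventually_ge_atTop 1] with n hn
    exact Real.rpow_le_rpow (by positivity) (h n hn).1 (by positivity)
  · filter_upwards [eventually_ge_atTop 1] with n hn
    exact Real.rpow_le_rpow (by positivity) (h n hn).2 (by positivity)
end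

section
/- Let C_1 = lim_{n→∞} f_1(n)^{1/n} and C_2 = lim_{n→∞} f_2(n)^{1/n} be the exponential growth rates of the numbers of 1-convex and 2-convex permutations, respectively. Then 1.5349224995 ≤ C_1 ≤ 1.535014167 and 1.786373489 ≤ C_2 ≤ 1.786434384. -/
open Filter

def up1 : List (List (List ℕ)) :=
  [[[17462]], [[], [13402], [7170, 7170, 7170, 7170, 7170, 1483, 191, 17, 2], [2275, 2275, 2275,
   2275, 2275, 2275, 293, 26, 3], [449, 449, 449, 449, 449, 449, 449, 39, 4], [59, 59, 59, 59,
   59, 59, 59, 59, 6], [8, 8, 8, 8, 8, 8, 8, 8, 8], [4, 4, 4, 4, 4, 4, 4, 4, 4], [4, 4, 4, 4, 4,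
   4, 4, 4, 4]], [[], [0, 13402, 13402, 13402, 4671, 967, 125, 12, 2]], [[], [0, 8731]], [[],
   [0, 3043]], [[], [0, 630]], [[], [0, 82]], [[], [0, 8]], [[], [0, 2]]]

def lo1 : List (List (List ℕ)) :=
  [[[999998]], [[], [767460], [410532, 410532, 410532, 410532, 410532, 84783, 10822, 871, 43],
   [130136, 130136, 130136, 130136, 130136, 130136, 16612, 1338, 67], [25499, 25499, 25499,
   25499, 25499, 25499, 25499, 2054, 104], [3153, 3153, 3153, 3153, 3153, 3153, 3153, 3153,
   160], [247, 247, 247, 247, 247, 247, 247, 247, 247], [11, 11, 11, 11, 11, 11, 11, 11, 11]],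
   [[], [0, 767460, 767460, 767460, 267461, 55236, 7050, 567, 28]], [[], [0, 499999]], [[], [0,
   174250]], [[], [0, 35986]], [[], [0, 4593]], [[], [0, 369]], [[], [0, 18]]]

def up2 : List (List (List ℕ)) :=
  [[[10018]], [[], [8948], [7037, 7037, 7037, 7037, 7037, 7037, 2029, 459, 72, 10], [3623, 3623,
   3623, 3623, 3623, 3623, 3623, 819, 128, 17], [1463, 1463, 1463, 1463, 1463, 1463, 1463, 1463,
   228, 29], [407, 407, 407, 407, 407, 407, 407, 407, 407, 51], [91, 91, 91, 91, 91, 91, 91, 91,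
   91, 91], [17, 17, 17, 17, 17, 17, 17, 17, 17, 17], [6, 6, 6, 6, 6, 6, 6, 6, 6, 6], [6, 6, 6,
   6, 6, 6, 6, 6, 6, 6]], [[], [0, 8948, 8948, 8948, 8948, 3940, 1136, 257, 41, 6]], [[], [0,
   8948]], [[], [0, 5009]], [[], [0, 2206]], [[], [0, 636]], [[], [0, 144]], [[], [0, 23]], [[],
   [0, 4]]]

def lo2 : List (List (List ℕ)) :=
  [[[199986]], [[], [178625], [140466, 140466, 140466, 140466, 140466, 140466, 40473, 9138,
   1416, 171], [72300, 72300, 72300, 72300, 72300, 72300, 72300, 16324, 2531, 306], [29162,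
   29162, 29162, 29162, 29162, 29162, 29162, 29162, 4522, 548], [8078, 8078, 8078, 8078, 8078,
   8078, 8078, 8078, 8078, 979], [1750, 1750, 1750, 1750, 1750, 1750, 1750, 1750, 1750, 1750],
   [264, 264, 264, 264, 264, 264, 264, 264, 264, 264], [29, 29, 29, 29, 29, 29, 29, 29, 29,
   29]], [[], [0, 178625, 178625, 178625, 178625, 78631, 22656, 5115, 792, 95]], [[], [0,
   178625]], [[], [0, 99993]], [[], [0, 44017]], [[], [0, 12682]], [[], [0, 2863]], [[], [0,
   443]], [[], [0, 53]]]


/-- Number of valid extensions of length `n`. -/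
def NN (k : ℕ) : ℕ → ℕ × ℕ → ℕ × ℕ → ℕ
  | 0, _, _ => 1
  | n + 1, s, t =>
    (if s.2 ≤ s.1 + 1 + k then NN k n (0, s.1 + 1) (t.1 + 1, t.2) else 0) +
    (if t.2 ≤ t.1 + 1 + k then NN k n (s.1 + 1, s.2) (0, t.1 + 1) else 0)

lemma NN_symm (k n : ℕ) : ∀ s t, NN k n s t = NN k n t s := by
  induction n with
  | zero => intro s t; rfl
  | succ n ih =>
    intro s t
    simp only [NN]
    rw [ih (0, s.1 + 1), ih (s.1 + 1, s.2), add_comm]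

lemma NN_step (k n g q h : ℕ) : NN k (n + 1) (0, g) (q, h) =
    (if g ≤ 1 + k then NN k n (0, 1) (q + 1, h) else 0) +
    (if h ≤ q + 1 + k then NN k n (0, q + 1) (1, g) else 0) := by
  simp only [NN, zero_add]
  rw [NN_symm k n (1, g)]

def val (L : List (List (List ℕ))) (g q h : ℕ) : ℕ := ((L.getD g []).getD q []).getD h 0

def chkUp (L : List (List (List ℕ))) (k M lam : ℕ) : Bool :=
  (List.range (M + 1)).all fun g => (List.range (M + 1)).all fun q =>
    (List.range (M + 1)).all fun h =>
      val L g q h == 0 ||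
      ((!decide (g ≤ 1 + k) || val L (min 1 M) (min (q + 1) M) h != 0) &&
       (!decide (h ≤ q + 1 + k) || val L (min (q + 1) M) (min 1 M) g != 0) &&
       decide (1000000000 * ((if g ≤ 1 + k then val L (min 1 M) (min (q + 1) M) h else 0) +
          (if h ≤ q + 1 + k then val L (min (q + 1) M) (min 1 M) g else 0))
          ≤ lam * val L g q h))

def chkLo (L : List (List (List ℕ))) (k M lam : ℕ) : Bool :=
  (List.range (M + 1)).all fun g => (List.range (M + 1)).all fun q =>
    (List.range (M + 1)).all fun h =>
       decide (val L g q h ≤ 100000000) &&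
       decide (lam * val L g q h ≤ 1000000000 *
        ((if g ≤ 1 + k then val L 1 (q + 1) h else 0) +
          (if h ≤ q + 1 + k then val L (q + 1) 1 g else 0)))

def chkOut (L : List (List (List ℕ))) (M : ℕ) : Bool :=
  decide (L.length ≤ M + 1) && L.all fun A => decide (A.length ≤ M + 1) &&
    A.all fun B => decide (B.length ≤ M + 1)

lemma val_out (L : List (List (List ℕ))) (M : ℕ) (hc : chkOut L M = true) (g q h : ℕ)
    (hv : val L g q h ≠ 0) : g ≤ M ∧ q ≤ M ∧ h ≤ M := by
  simp only [chkOut, Bool.and_eq_true, decide_eq_true_eq, List.all_eq_true] at hc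
  obtain ⟨h1, h2⟩ := hc
  unfold val at hv
  by_cases hg : g < L.length
  · rw [List.getD_eq_getElem _ _ hg] at hv
    obtain ⟨h3, h4⟩ := h2 _ (List.getElem_mem hg)
    by_cases hq : q < L[g].length
    · rw [List.getD_eq_getElem _ _ hq] at hv
      have h5 := h4 _ (List.getElem_mem hq)
      by_cases hh : h < L[g][q].length
      · omega
      · rw [List.getD_eq_default _ _ (by omega)] at hv; simp at hv
    · rw [List.getD_eq_default L[g] _ (by omega)] at hv; simp at hv
  · rw [List.getD_eq_default L _ (by omega)] at hv; simp at hv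

lemma upper_aux (L : List (List (List ℕ))) (k M lam : ℕ) (hc : chkUp L k M lam = true) (n : ℕ) :
    ∀ g q h, val L (min g M) (min q M) (min h M) ≠ 0 →
      1000000000 ^ n * NN k n (0, g) (q, h) ≤
        lam ^ n * val L (min g M) (min q M) (min h M) := by
  simp only [chkUp, List.all_eq_true, List.mem_range, Bool.or_eq_true, Bool.and_eq_true,
    Bool.not_eq_true', decide_eq_true_eq, decide_eq_false_iff_not, beq_iff_eq, bne_iff_ne] at hc
  induction n with
  | zero => intro g q h hv; simp only [NN, pow_zero]; omega
  | succ n ih =>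
    intro g q h hv
    have H := hc (min g M) (by omega) (min q M) (by omega) (min h M) (by omega)
    rcases H with H | ⟨⟨Ha, Hb⟩, H⟩
    · exact absurd H hv
    have e1 : min (min q M + 1) M = min (q + 1) M := by omega
    rw [e1] at Ha Hb H
    have I1 : 1000000000 ^ n * (if g ≤ 1 + k then NN k n (0, 1) (q + 1, h) else 0) ≤
        lam ^ n * (if min g M ≤ 1 + k then val L (min 1 M) (min (q + 1) M) (min h M) else 0) := by
      split_ifs with c1 c2
      · exact ih 1 (q + 1) h (by rcases Ha with Ha | Ha; exacts [absurd c2 Ha, Ha])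
      · omega
      · simp
      · simp
    have I2 : 1000000000 ^ n * (if h ≤ q + 1 + k then NN k n (0, q + 1) (1, g) else 0) ≤
        lam ^ n * (if min h M ≤ min q M + 1 + k then
          val L (min (q + 1) M) (min 1 M) (min g M) else 0) := by
      split_ifs with c1 c2
      · exact ih (q + 1) 1 g (by rcases Hb with Hb | Hb; exacts [absurd c2 Hb, Hb])
      · omega
      · simp
      · simp
    rw [NN_step]
    have I3 := Nat.mul_le_mul_left (lam ^ n) H
    have I4 := Nat.mul_le_mul_left 1000000000 (Nat.add_le_add I1 I2)
    calc _ = 1000000000 * (1000000000 ^ n * (if g ≤ 1 + k then NN k n (0, 1) (q + 1, h) else 0) +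
        1000000000 ^ n * (if h ≤ q + 1 + k then NN k n (0, q + 1) (1, g) else 0)) := by ring
      _ ≤ _ := I4
      _ = _ := by ring
      _ ≤ _ := I3
      _ = _ := by ring

lemma lower_aux (L : List (List (List ℕ))) (k M lam : ℕ) (hc : chkLo L k M lam = true)
    (ho : chkOut L M = true) (n : ℕ) :
    ∀ g q h, lam ^ n * val L g q h ≤ 1000000000 ^ n * (100000000 * NN k n (0, g) (q, h)) := by
  simp only [chkLo, List.all_eq_true, List.mem_range, Bool.and_eq_true,
    decide_eq_true_eq] at hc
  induction n with
  | zero =>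
    intro g q h
    by_cases hv : val L g q h = 0
    · simp [hv]
    obtain ⟨a, b, c⟩ := val_out L M ho g q h hv
    have := (hc g (by omega) q (by omega) h (by omega)).1
    simp only [NN, pow_zero]; omega
  | succ n ih =>
    intro g q h
    by_cases hv : val L g q h = 0
    · simp [hv]
    obtain ⟨a, b, c⟩ := val_out L M ho g q h hv
    have H := (hc g (by omega) q (by omega) h (by omega)).2
    have I1 : lam ^ n * (if g ≤ 1 + k then val L 1 (q + 1) h else 0) ≤
        1000000000 ^ n * (100000000 * (if g ≤ 1 + k then NN k n (0, 1) (q + 1, h) else 0)) := by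
      split_ifs with c1
      · exact ih 1 (q + 1) h
      · simp
    have I2 : lam ^ n * (if h ≤ q + 1 + k then val L (q + 1) 1 g else 0) ≤
        1000000000 ^ n * (100000000 * (if h ≤ q + 1 + k then NN k n (0, q + 1) (1, g) else 0)) := by
      split_ifs with c1
      · exact ih (q + 1) 1 g
      · simp
    rw [NN_step]
    have I3 := Nat.mul_le_mul_left (lam ^ n) H
    have I4 := Nat.mul_le_mul_left 1000000000 (Nat.add_le_add I1 I2)
    calc _ = lam ^ n * (lam * val L g q h) := by ring
      _ ≤ _ := I3
      _ = 1000000000 * (lam ^ n * (if g ≤ 1 + k then val L 1 (q + 1) h else 0) +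
          lam ^ n * (if h ≤ q + 1 + k then val L (q + 1) 1 g else 0)) := by ring
      _ ≤ _ := I4
      _ = _ := by ring

lemma up1_bound (n : ℕ) :
    1000000000 ^ n * NN 1 n (0, 0) (0, 0) ≤ 1535014167 ^ n * 20000 := by
  have h := upper_aux up1 1 8 1535014167 (by decide +kernel) n 0 0 0 (by decide +kernel)
  refine h.trans (Nat.mul_le_mul_left _ (by decide +kernel))

lemma up2_bound (n : ℕ) :
    1000000000 ^ n * NN 2 n (0, 0) (0, 0) ≤ 1786434384 ^ n * 20000 := by
  have h := upper_aux up2 2 9 1786434384 (by decide +kernel) n 0 0 0 (by decide +kernel)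
  refine h.trans (Nat.mul_le_mul_left _ (by decide +kernel))

lemma lo1_bound (n : ℕ) :
    1534922500 ^ n ≤ 1000000000 ^ n * (100000000 * NN 1 n (0, 0) (0, 0)) := by
  have h := lower_aux lo1 1 8 1534922500 (by decide +kernel) (by decide +kernel) n 0 0 0
  refine le_trans (Nat.le_mul_of_pos_right _ (by decide +kernel)) h

lemma lo2_bound (n : ℕ) :
    1786373489 ^ n ≤ 1000000000 ^ n * (100000000 * NN 2 n (0, 0) (0, 0)) := by
  have h := lower_aux lo2 2 9 1786373489 (by decide +kernel) (by decide +kernel) n 0 0 0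
  refine le_trans (Nat.le_mul_of_pos_right _ (by decide +kernel)) h

/-- convexity for lists -/
def KL (k : ℕ) (l : List ℕ) : Prop :=
  ∀ i a b c, l[i]? = some a → l[i + 1]? = some b → l[i + 2]? = some c → a + c ≤ 2 * b + k

def sl : List ℕ → ℕ × ℕ
  | [] => (0, 0)
  | [a] => (a, 0)
  | a :: b :: _ => (a, b - a)

def consL (l : List ℕ) : List ℕ := 0 :: l.map (· + 1)
def consR (l : List ℕ) : List ℕ := (consL l.reverse).reverse

lemma KL_reverse' (k : ℕ) (l : List ℕ) (h : KL k l) : KL k l.reverse := by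
  intro i a b c ha hb hc
  have hi : i + 2 < l.length := by
    have := (List.getElem?_eq_some_iff.1 hc).1
    simpa using this
  rw [List.getElem?_reverse (by omega)] at ha hb hc
  have := h (l.length - 1 - (i + 2)) c b a hc
    (by rw [← hb]; congr 1; omega) (by rw [← ha]; congr 1; omega)
  omega

lemma KL_reverse (k : ℕ) (l : List ℕ) : KL k l.reverse ↔ KL k l :=
  ⟨fun h => by simpa using KL_reverse' k _ h, KL_reverse' k l⟩

lemma KL_consL (k : ℕ) (l : List ℕ) :
    KL k (consL l) ↔ KL k l ∧ (sl l).2 ≤ (sl l).1 + 1 + k := by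
  constructor
  · intro h
    refine ⟨?_, ?_⟩
    · intro i a b c ha hb hc
      have := h (i + 1) (a + 1) (b + 1) (c + 1) (by simp [consL, ha]) (by simp [consL, hb])
        (by simp [consL, hc])
      omega
    · match l, h with
      | [], _ => simp [sl]
      | [a], _ => simp [sl]
      | a :: b :: t, h =>
        have := h 0 0 (a + 1) (b + 1) (by simp [consL]) (by simp [consL]) (by simp [consL])
        simp only [sl]; omega
  · rintro ⟨h, h'⟩ i a b c ha hb hc
    cases i with
    | zero =>
      match l, h' with
      | [], _ => simp [consL] at hb
      | [x], _ => simp [consL] at hc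
      | x :: y :: t, h' =>
        simp [consL] at ha hb hc
        simp only [sl] at h'
        omega
    | succ i =>
      simp [consL] at ha hb hc
      obtain ⟨a, ha, rfl⟩ := ha
      obtain ⟨b, hb, rfl⟩ := hb
      obtain ⟨c, hc, rfl⟩ := hc
      have := h i a b c ha hb hc
      omega

lemma KL_consR (k : ℕ) (l : List ℕ) :
    KL k (consR l) ↔ KL k l ∧ (sl l.reverse).2 ≤ (sl l.reverse).1 + 1 + k := by
  rw [consR, KL_reverse, KL_consL, KL_reverse]

lemma sl_consL (l : List ℕ) (hl : l ≠ []) : sl (consL l) = (0, (sl l).1 + 1) := by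
  match l, hl with
  | [a], _ => simp [consL, sl]
  | a :: b :: t, _ => simp [consL, sl]

lemma sl_consL_rev (l : List ℕ) (hl : l ≠ []) :
    sl (consL l).reverse = ((sl l.reverse).1 + 1, (sl l.reverse).2) := by
  have : (consL l).reverse = l.reverse.map (· + 1) ++ [0] := by simp [consL]
  rw [this]
  have hr : l.reverse ≠ [] := by simpa using hl
  generalize l.reverse = r at *
  match r, hr with
  | [a], _ => simp [sl]
  | a :: b :: t, _ => simp [sl]

/-- set of convex permutation lists -/
noncomputable def WW (k n : ℕ) : Finset (List ℕ) := by
  classical exact ((List.range n).permutations.toFinset).filter (KL k)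

lemma mem_WW (k n : ℕ) (l : List ℕ) : l ∈ WW k n ↔ l.Perm (List.range n) ∧ KL k l := by
  simp [WW]

lemma consL_inj : Function.Injective consL := by
  intro a b h
  simp only [consL, List.cons.injEq, true_and] at h
  exact (List.map_injective_iff.2 (fun x y h => by simpa using h)) h

lemma consR_inj : Function.Injective consR := by
  intro a b h
  exact List.reverse_injective (consL_inj (List.reverse_injective h))

lemma consL_perm (n : ℕ) (l : List ℕ) : (consL l).Perm (List.range (n + 1)) ↔
    l.Perm (List.range n) := by
  rw [consL, List.range_succ_eq_map, List.perm_cons]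
  exact List.map_perm_map_iff (fun x y h => by simpa using h)

lemma consR_perm (n : ℕ) (l : List ℕ) : (consR l).Perm (List.range (n + 1)) ↔
    l.Perm (List.range n) := by
  rw [consR, List.reverse_perm', consL_perm, List.reverse_perm']

lemma pos_map (l : List ℕ) (h : 0 ∉ l) : ∃ l' : List ℕ, l = l'.map (· + 1) := by
  refine ⟨l.map (· - 1), ?_⟩
  rw [List.map_map]
  symm
  conv_rhs => rw [← List.map_id l]
  refine List.map_congr_left fun a ha => ?_
  have : a ≠ 0 := fun h' => h (h' ▸ ha)
  simp; omega

lemma struct (k n : ℕ) (hk : k ≤ 2) (l : List ℕ) (hp : l.Perm (List.range (n + 1)))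
    (hl : KL k l) : ∃ l', l = consL l' ∨ l = consR l' := by
  have hnd : l.Nodup := hp.nodup_iff.2 List.nodup_range
  have h0 : 0 ∈ l := hp.mem_iff.2 (by simp)
  obtain ⟨A, B, rfl⟩ := List.append_of_mem h0
  have hA : 0 ∉ A := by
    intro h; rw [List.nodup_append] at hnd; exact hnd.2.2 0 h 0 (by simp) rfl
  have hB : 0 ∉ B := by
    intro h; rw [List.nodup_append] at hnd; simp [h] at hnd
  rcases A.eq_nil_or_concat with rfl | ⟨A', a, rfl⟩
  · obtain ⟨l', rfl⟩ := pos_map B hB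
    exact ⟨l', Or.inl (by simp [consL])⟩
  cases B with
  | nil =>
    obtain ⟨l', hl'⟩ := pos_map _ hA
    exact ⟨l', Or.inr (by rw [hl']; simp [consL, consR])⟩
  | cons b B =>
    exfalso
    have := hl A'.length a 0 b (by simp) (by simp) (by simp)
    have ha : a ≠ 0 := by rintro rfl; simp at hA
    have hb : b ≠ 0 := by rintro rfl; simp at hB
    have hab : a ≠ b := by
      rintro rfl
      simp [List.nodup_append] at hnd
    omega

lemma consLR_ne (l l' : List ℕ) (hl : l ≠ []) (h : consL l = consR l') : False := by
  have h1 : l' ≠ [] := by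
    rintro rfl
    have := congrArg List.length h
    simp [consL, consR] at this
    exact hl this
  have e : consR l' = l'.map (· + 1) ++ [0] := by simp [consR, consL]
  rw [e] at h
  cases l' with
  | nil => exact h1 rfl
  | cons a t => simp [consL] at h

lemma WW_ne (k n : ℕ) (l : List ℕ) (h : l ∈ WW k (n + 1)) : l ≠ [] := by
  rintro rfl
  rw [mem_WW] at h
  have := h.1.length_eq
  simp at this

lemma WW_succ (k n : ℕ) (hk : k ≤ 2) (φ : List ℕ → ℕ) :
    ∑ l ∈ WW k (n + 2), φ l = ∑ l ∈ WW k (n + 1),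
      ((if (sl l).2 ≤ (sl l).1 + 1 + k then φ (consL l) else 0) +
       (if (sl l.reverse).2 ≤ (sl l.reverse).1 + 1 + k then φ (consR l) else 0)) := by
  classical
  have e : WW k (n + 2) =
      ((WW k (n + 1)).filter (fun l => (sl l).2 ≤ (sl l).1 + 1 + k)).image consL ∪
      ((WW k (n + 1)).filter
        (fun l => (sl l.reverse).2 ≤ (sl l.reverse).1 + 1 + k)).image consR := by
    ext l
    simp only [Finset.mem_union, Finset.mem_image, Finset.mem_filter]
    constructor
    · intro h
      rw [mem_WW] at h
      obtain ⟨l', rfl | rfl⟩ := struct k (n + 1) hk l h.1 h.2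
      · rw [consL_perm, KL_consL] at h
        exact Or.inl ⟨l', ⟨(mem_WW _ _ _).2 ⟨h.1, h.2.1⟩, h.2.2⟩, rfl⟩
      · rw [consR_perm, KL_consR] at h
        exact Or.inr ⟨l', ⟨(mem_WW _ _ _).2 ⟨h.1, h.2.1⟩, h.2.2⟩, rfl⟩
    · rintro (⟨l', ⟨h, h'⟩, rfl⟩ | ⟨l', ⟨h, h'⟩, rfl⟩)
      · rw [mem_WW] at h ⊢
        rw [consL_perm, KL_consL]
        exact ⟨h.1, h.2, h'⟩
      · rw [mem_WW] at h ⊢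
        rw [consR_perm, KL_consR]
        exact ⟨h.1, h.2, h'⟩
  rw [e, Finset.sum_union, Finset.sum_image (consL_inj.injOn), Finset.sum_image (consR_inj.injOn),
    Finset.sum_filter, Finset.sum_filter, Finset.sum_add_distrib]
  rw [Finset.disjoint_left]
  intro l h1 h2
  simp only [Finset.mem_image, Finset.mem_filter] at h1 h2
  obtain ⟨a, ⟨ha, _⟩, rfl⟩ := h1
  obtain ⟨b, _, hb⟩ := h2
  exact consLR_ne a b (WW_ne k n a ha) hb.symm

lemma WW_card_aux (k : ℕ) (hk : k ≤ 2) (m : ℕ) : ∀ n,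
    (WW k (n + 1 + m)).card = ∑ l ∈ WW k (n + 1), NN k m (sl l) (sl l.reverse) := by
  induction m with
  | zero => intro n; simp [NN]
  | succ m ih =>
    intro n
    have := ih (n + 1)
    rw [show n + 1 + (m + 1) = n + 1 + 1 + m by omega, this, WW_succ k n hk]
    refine Finset.sum_congr rfl fun l hl => ?_
    have hne := WW_ne k n l hl
    have hne' : l.reverse ≠ [] := by simpa using hne
    simp only [NN]
    rw [sl_consL l hne, sl_consL_rev l hne]
    have e1 : sl (consR l) = ((sl l).1 + 1, (sl l).2) := by
      rw [consR, sl_consL_rev _ hne', List.reverse_reverse]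
    have e2 : sl (consR l).reverse = (0, (sl l.reverse).1 + 1) := by
      rw [consR, List.reverse_reverse, sl_consL _ hne']
    rw [e1, e2]

lemma WW_card (k : ℕ) (hk : k ≤ 2) (m : ℕ) : (WW k (m + 1)).card = NN k m (0, 0) (0, 0) := by
  have h := WW_card_aux k hk m 0
  have e : WW k (0 + 1) = {[0]} := by
    ext l
    rw [mem_WW]
    simp only [zero_add, List.range_one, List.perm_singleton, Finset.mem_singleton]
    constructor
    · exact fun h => h.1
    · rintro rfl
      refine ⟨rfl, ?_⟩
      intro i a b c _ hb _
      simp at hb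
  rw [e] at h
  simp only [Finset.sum_singleton, List.reverse_singleton, sl] at h
  rw [← h]; congr 2; omega

lemma fk_eq (k n : ℕ) : fk k n = (WW k n).card := by
  have hmem : ∀ π : {π : Equiv.Perm (Fin n) // IsKConvex k ⇑π},
      List.ofFn (fun i => ((π.1 i : Fin n) : ℕ)) ∈ WW k n := by
    rintro ⟨π, hπ⟩
    rw [mem_WW]
    constructor
    · rw [List.perm_ext_iff_of_nodup _ List.nodup_range]
      · intro a
        simp only [List.mem_ofFn, List.mem_range]
        constructor
        · rintro ⟨i, rfl⟩; exact (π i).2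
        · intro ha; exact ⟨π.symm ⟨a, ha⟩, by simp⟩
      · rw [List.nodup_ofFn]
        intro i j hij
        exact π.injective (Fin.ext hij)
    · intro i a b c ha hb hc
      rw [List.getElem?_eq_some_iff] at ha hb hc
      obtain ⟨h1, rfl⟩ := ha
      obtain ⟨h2, rfl⟩ := hb
      obtain ⟨h3, rfl⟩ := hc
      simp only [List.length_ofFn] at h1 h2 h3
      have := hπ ⟨i, h1⟩ ⟨i + 1, h2⟩ ⟨i + 2, h3⟩ rfl rfl
      simp only [List.getElem_ofFn]
      omega
  have e : fk k n = Nat.card (WW k n) := by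
    rw [fk]
    refine Nat.card_eq_of_bijective (fun π => ⟨_, hmem π⟩) ⟨?_, ?_⟩
    · rintro ⟨π, _⟩ ⟨σ, _⟩ h
      simp only [Subtype.mk.injEq] at h ⊢
      have h' := List.ofFn_injective h
      ext i
      exact congrFun h' i
    · rintro ⟨l, hl⟩
      have hl' := hl
      rw [mem_WW] at hl'
      obtain ⟨hp, hK⟩ := hl'
      have hlen : l.length = n := by simpa using hp.length_eq
      have hnd : l.Nodup := hp.nodup_iff.2 List.nodup_range
      have hlt : ∀ i : Fin n, l[(i : ℕ)]'(by rw [hlen]; exact i.2) < n := fun i => by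
        have := hp.mem_iff.1 (List.getElem_mem (l := l) (n := (i : ℕ)) (by rw [hlen]; exact i.2))
        simpa using this
      let f : Fin n → Fin n := fun i => ⟨l[(i : ℕ)]'(by rw [hlen]; exact i.2), hlt i⟩
      have hf : Function.Injective f := by
        intro i j hij
        have h1 : l[(i : ℕ)]'(by rw [hlen]; exact i.2) = l[(j : ℕ)]'(by rw [hlen]; exact j.2) :=
          congrArg Fin.val hij
        exact Fin.ext ((hnd.getElem_inj_iff).1 h1)
      refine ⟨⟨Equiv.ofBijective f (Finite.injective_iff_bijective.1 hf), ?_⟩, ?_⟩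
      · intro i j m hij hjm
        have h3 : (i : ℕ) + 2 = m := by omega
        have := hK i (f i) (f j) (f m)
          (by rw [List.getElem?_eq_some_iff]; exact ⟨by rw [hlen]; exact i.2, rfl⟩)
          (by rw [List.getElem?_eq_some_iff]; exact ⟨by rw [hlen, hij]; exact j.2, by
            simp only [f, hij]⟩)
          (by rw [List.getElem?_eq_some_iff]; exact ⟨by rw [hlen, h3]; exact m.2, by
            simp only [f, h3]⟩)
        simp only [Equiv.ofBijective_apply]
        omega
      · simp only [Subtype.mk.injEq, Equiv.ofBijective_apply]
        apply List.ext_getElem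
        · simp [hlen]
        · intro i h1 h2
          simp [f]
  rw [e]
  simp

lemma lim_aux (A lam : ℝ) (hA : 0 < A) (hl : 0 < lam) :
    Tendsto (fun n : ℕ => (A * lam ^ n) ^ (1 / (n : ℝ))) atTop (nhds lam) := by
  have h1 : Tendsto (fun n : ℕ => A ^ (1 / (n : ℝ)) * lam) atTop (nhds (A ^ (0 : ℝ) * lam)) := by
    refine Tendsto.mul_const _ ?_
    exact ((Real.continuous_const_rpow hA.ne').tendsto 0).comp
      (tendsto_one_div_atTop_nhds_zero_nat (𝕜 := ℝ))
  rw [Real.rpow_zero, one_mul] at h1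
  refine h1.congr' ?_
  filter_upwards [eventually_ge_atTop 1] with n hn
  rw [Real.mul_rpow hA.le (by positivity), one_div, Real.pow_rpow_inv_natCast hl.le (by omega)]

lemma up_lim (f : ℕ → ℕ) (C A lam : ℝ) (hA : 0 < A) (hl : 0 < lam)
    (h : ∀ n, (f (n + 1) : ℝ) ≤ A * lam ^ n)
    (hf : Tendsto (fun n : ℕ => (f n : ℝ) ^ (1 / (n : ℝ))) atTop (nhds C)) : C ≤ lam := by
  refine le_of_tendsto_of_tendsto hf (lim_aux (A / lam) lam (by positivity) hl) ?_
  filter_upwards [eventually_ge_atTop 1] with n hn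
  obtain ⟨m, rfl⟩ : ∃ m, n = m + 1 := ⟨n - 1, by omega⟩
  refine Real.rpow_le_rpow (by positivity) ((h m).trans (le_of_eq ?_)) (by positivity)
  field_simp
  ring

lemma lo_lim (f : ℕ → ℕ) (C A lam : ℝ) (hA : 0 < A) (hl : 0 < lam)
    (h : ∀ n, A * lam ^ n ≤ (f (n + 1) : ℝ))
    (hf : Tendsto (fun n : ℕ => (f n : ℝ) ^ (1 / (n : ℝ))) atTop (nhds C)) : lam ≤ C := by
  refine le_of_tendsto_of_tendsto (lim_aux (A / lam) lam (by positivity) hl) hf ?_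
  filter_upwards [eventually_ge_atTop 1] with n hn
  obtain ⟨m, rfl⟩ : ∃ m, n = m + 1 := ⟨n - 1, by omega⟩
  refine Real.rpow_le_rpow (by positivity) (le_trans (le_of_eq ?_) (h m)) (by positivity)
  field_simp
  ring

lemma up_fin (k lam : ℕ) (hk : k ≤ 2) (hlam : 0 < lam) (C : ℝ)
    (hb : ∀ n, 1000000000 ^ n * NN k n (0, 0) (0, 0) ≤ lam ^ n * 20000)
    (hf : Tendsto (fun n : ℕ => (fk k n : ℝ) ^ (1 / (n : ℝ))) atTop (nhds C)) :
    C ≤ (lam : ℝ) / 1000000000 := by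
  refine up_lim (fk k) C 20000 _ (by norm_num) (by positivity) (fun n => ?_) hf
  rw [fk_eq, WW_card k hk, div_pow, ← mul_div_assoc, le_div_iff₀ (by positivity)]
  have h : ((1000000000 ^ n * NN k n (0, 0) (0, 0) : ℕ) : ℝ) ≤ ((lam ^ n * 20000 : ℕ) : ℝ) :=
    Nat.cast_le.2 (hb n)
  push_cast at h
  linarith

lemma lo_fin (k lam : ℕ) (hk : k ≤ 2) (hlam : 0 < lam) (C : ℝ)
    (hb : ∀ n, lam ^ n ≤ 1000000000 ^ n * (100000000 * NN k n (0, 0) (0, 0)))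
    (hf : Tendsto (fun n : ℕ => (fk k n : ℝ) ^ (1 / (n : ℝ))) atTop (nhds C)) :
    (lam : ℝ) / 1000000000 ≤ C := by
  refine lo_lim (fk k) C (1 / 100000000) _ (by norm_num) (by positivity) (fun n => ?_) hf
  rw [fk_eq, WW_card k hk, div_pow, ← mul_div_assoc, div_le_iff₀ (by positivity)]
  have h : ((lam ^ n : ℕ) : ℝ) ≤ ((1000000000 ^ n * (100000000 * NN k n (0, 0) (0, 0)) : ℕ) : ℝ) :=
    Nat.cast_le.2 (hb n)
  push_cast at h
  linarith

/-- if `C₁ = lim_{n→∞} f_1(n)^(1/n)` and `C₂ = lim_{n→∞} f_2(n)^(1/n)`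
are the exponential growth rates of 1-convex and 2-convex permutations, then
`1.5349224995 ≤ C₁ ≤ 1.535014167` and `1.786373489 ≤ C₂ ≤ 1.786434384`. -/
theorem kconvex_growth_rate_bounds (C₁ C₂ : ℝ)
    (h₁ : Tendsto (fun n : ℕ => (fk 1 n : ℝ) ^ (1 / (n : ℝ))) atTop (nhds C₁))
    (h₂ : Tendsto (fun n : ℕ => (fk 2 n : ℝ) ^ (1 / (n : ℝ))) atTop (nhds C₂)) :
    ((1.5349224995 : ℝ) ≤ C₁ ∧ C₁ ≤ (1.535014167 : ℝ)) ∧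
    ((1.786373489 : ℝ) ≤ C₂ ∧ C₂ ≤ (1.786434384 : ℝ)) := by
  have a1 := up_fin 1 1535014167 (by norm_num) (by norm_num) C₁ up1_bound h₁
  have b1 := lo_fin 1 1534922500 (by norm_num) (by norm_num) C₁ lo1_bound h₁
  have a2 := up_fin 2 1786434384 (by norm_num) (by norm_num) C₂ up2_bound h₂
  have b2 := lo_fin 2 1786373489 (by norm_num) (by norm_num) C₂ lo2_bound h₂
  push_cast at a1 b1 a2 b2
  refine ⟨⟨?_, ?_⟩, ?_, ?_⟩ <;> linarith
end
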